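/- arXiv:1009.2642 — 13 statements merged into one kernel-verified Lean document; each statement's English description precedes it below -/
import Mathlib

section
/- For positive integers a_0, …, a_d with sum n, let t be the smallest positive integer such that t divides d+1 and a_i = a_{i+t} for all 0 ≤ i ≤ d−t. Then the difference cycle (a_0 : ⋯ : a_d) contains exactly a_0 + a_1 + ⋯ + a_{t−1} = n·t/(d+1) distinct subsets. -/
/-- The difference cycle `(a 0 : a 1 : ⋯ : a d)` of dimension `d` on `n` vertices:
the collection of subsets of `ℤ/nℤ` of the form
`{i, i + a 0, i + a 0 + a 1, …, i + a 0 + ⋯ + a (d-1)}` for `i ∈ ℤ/nℤ`. -/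
def diffCycle (n d : ℕ) (a : ℕ → ℕ) : Set (Finset (ZMod n)) :=
  {s | ∃ i : ZMod n, s = (Finset.range (d + 1)).image
      (fun t => i + ((∑ r ∈ Finset.range t, a r : ℕ) : ZMod n))}


theorem dc_gcd_periodic (b : ℕ → ℕ) (s m : ℕ) (hs : 0 < s) (hsm : s < m)
    (h1 : Function.Periodic b s) (h2 : Function.Periodic b m) :
    Function.Periodic b (Nat.gcd s m) := by
  have hlt : Nat.gcd s m < m := lt_of_le_of_lt (Nat.gcd_le_left m hs) hsm
  obtain ⟨u, -, hu⟩ := Nat.exists_mul_mod_eq_gcd hlt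
  intro x
  have e : x + s * u = x + Nat.gcd s m + (s * u / m) * m := by
    have := Nat.mod_add_div (s * u) m
    rw [hu] at this
    rw [add_assoc, mul_comm (s * u / m) m, this]
  have h3 : b (x + s * u) = b x := by
    rw [mul_comm]; exact (h1.nat_mul u) x
  have h4 := (h2.nat_mul (s * u / m)) (x + Nat.gcd s m)
  simp only [Nat.cast_id] at h4
  rw [← h4, ← e, h3]

theorem dc_sum_periodic (b : ℕ → ℕ) (p k : ℕ) (h : Function.Periodic b p) :
    ∑ r ∈ Finset.range (k + p), b r = ∑ r ∈ Finset.range k, b r + ∑ r ∈ Finset.range p, b r := by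
  rw [add_comm k p, Finset.sum_range_add, add_comm]
  congr 1
  apply Finset.sum_congr rfl
  intro x _
  rw [add_comm p x, h]

theorem dc_sum_mul (b : ℕ → ℕ) (p q : ℕ) (h : Function.Periodic b p) :
    ∑ r ∈ Finset.range (q * p), b r = q * ∑ r ∈ Finset.range p, b r := by
  induction q with
  | zero => simp
  | succ q ih => rw [Nat.succ_mul, dc_sum_periodic b p _ h, ih, Nat.succ_mul]

/-- For positive integers `a 0, …, a d` with sum `n`, if `t` is the smallest positive
integer with `t ∣ d + 1` and `a i = a (i + t)` for all `0 ≤ i ≤ d − t`, then the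
difference cycle `(a 0 : ⋯ : a d)` has exactly `a 0 + ⋯ + a (t-1) = n·t/(d+1)` members. -/
theorem stmt_0 (n d t : ℕ) (a : ℕ → ℕ)
    (hpos : ∀ i ≤ d, 0 < a i)
    (hsum : ∑ i ∈ Finset.range (d + 1), a i = n)
    (ht : 0 < t) (htd : t ∣ (d + 1))
    (hper : ∀ i, i + t ≤ d → a i = a (i + t))
    (hmin : ∀ t', 0 < t' → t' ∣ (d + 1) → (∀ i, i + t' ≤ d → a i = a (i + t')) → t ≤ t') :
    (diffCycle n d a).ncard = ∑ i ∈ Finset.range t, a i ∧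
      (d + 1) * ∑ i ∈ Finset.range t, a i = n * t := by
  
  classical
  obtain ⟨c, hc⟩ := htd
  set m := d + 1 with hm
  have hm0 : 0 < m := by omega
  have hc0 : 0 < c := by
    rcases Nat.eq_zero_or_pos c with h | h
    · subst h; omega
    · exact h
  have htm : t ≤ m := by rw [hc]; exact Nat.le_mul_of_pos_right t hc0
  -- the periodic extension
  obtain ⟨b, hb⟩ : ∃ b : ℕ → ℕ, b = fun i => a (i % m) := ⟨_, rfl⟩
  have hbm : Function.Periodic b m := by intro x; simp [hb]
  have hba : ∀ i, i < m → b i = a i := by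
    intro i hi; simp [hb, Nat.mod_eq_of_lt hi]
  have hbpos : ∀ i, 0 < b i := by
    intro i
    have := Nat.mod_lt i hm0
    rw [hb]; exact hpos _ (by omega)
  have hat : ∀ q x, x + t * q < m → a (x + t * q) = a x := by
    intro q
    induction q with
    | zero => intro x _; simp
    | succ q ih =>
      intro x hx
      rw [Nat.mul_succ, ← add_assoc] at hx ⊢
      rw [← hper _ (by omega), ih x (by omega)]
  have hamod : ∀ x, x < m → a x = a (x % t) := by
    intro x hx
    have e := Nat.mod_add_div x t
    have := hat (x / t) (x % t) (by omega)
    rw [e] at this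
    exact this
  have hbt : Function.Periodic b t := by
    have key : ∀ x, b x = a (x % t) := by
      intro x
      rw [hb]
      show a (x % m) = _
      rw [hamod _ (Nat.mod_lt x hm0), Nat.mod_mod_of_dvd x ⟨c, hc⟩]
    intro x
    rw [key, key, Nat.add_mod_right]
  obtain ⟨S, hS⟩ : ∃ S : ℕ → ℕ, S = fun k => ∑ r ∈ Finset.range k, b r := ⟨_, rfl⟩
  have hSa : ∀ k, k ≤ m → S k = ∑ r ∈ Finset.range k, a r := by
    intro k hk
    rw [hS]
    apply Finset.sum_congr rfl
    intro x hx
    rw [Finset.mem_range] at hx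
    exact hba x (by omega)
  have hSsucc : ∀ k, S (k + 1) = S k + b k := by
    intro k; rw [hS]; exact Finset.sum_range_succ _ _
  have hS0 : S 0 = 0 := by rw [hS]; simp
  have hmono : StrictMono S := by
    apply strictMono_nat_of_lt_succ
    intro k
    have := hbpos k
    rw [hSsucc]; omega
  have hSm : S m = n := by rw [hSa m le_rfl, hsum]
  have hSt : S t = ∑ i ∈ Finset.range t, a i := hSa t htm
  have hSqm : ∀ k q, S (k + q * m) = S k + q * n := by
    intro k q
    have h1 := dc_sum_periodic b (q * m) k (by simpa using hbm.nat_mul q)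
    have h2 := dc_sum_mul b m q hbm
    rw [← hSm]
    simp only [hS]
    rw [h1, h2]
  have hSkt : ∀ k, S (k + t) = S k + S t := by
    intro k
    simp only [hS]
    exact dc_sum_periodic b t k hbt
  have hn : c * S t = n := by
    rw [← hSm, hc, mul_comm t c]
    simp only [hS]
    exact (dc_sum_mul b t c hbt).symm
  have hP0 : 0 < S t := by
    have := hmono ht
    omega
  have hn0 : 0 < n := by rw [← hn]; positivity
  have hPn : S t ≤ n := by rw [← hSm]; exact hmono.monotone htm
  haveI : NeZero n := ⟨hn0.ne'⟩
  refine ⟨?_, by rw [← hSt, hc, ← hn]; ring⟩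
  rw [← hSt]
  obtain ⟨F, hF⟩ : ∃ F : ZMod n → Finset (ZMod n), F = fun i => (Finset.range m).image
      (fun k => i + ((S k : ℕ) : ZMod n)) := ⟨_, rfl⟩
  have hFa : ∀ i, F i = (Finset.range (d + 1)).image
      (fun t => i + ((∑ r ∈ Finset.range t, a r : ℕ) : ZMod n)) := by
    intro i
    rw [hF]
    apply Finset.image_congr
    intro k hk
    have hk' : k < m := by simpa using hk
    show i + ((S k : ℕ) : ZMod n) = _
    rw [hSa k hk'.le]
  have hFS : ∀ i k, i + ((S k : ℕ) : ZMod n) ∈ F i := by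
    intro i k
    rw [hF]
    refine Finset.mem_image.2 ⟨k % m, Finset.mem_range.2 (Nat.mod_lt _ hm0), ?_⟩
    have e : k % m + (k / m) * m = k := by rw [mul_comm]; exact Nat.mod_add_div k m
    have h := hSqm (k % m) (k / m)
    rw [e] at h
    rw [h]; push_cast; simp
  have hmem : ∀ (i : ZMod n) (x : ℕ), i + (x : ZMod n) ∈ F i ↔ ∃ k, S k = x := by
    intro i x
    constructor
    · intro h
      rw [hF] at h
      obtain ⟨k, hk, hkx⟩ := Finset.mem_image.1 h
      have hkm := Finset.mem_range.1 hk
      have h1 : ((S k : ℕ) : ZMod n) = (x : ZMod n) := add_left_cancel hkx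
      rw [ZMod.natCast_eq_natCast_iff] at h1
      have h2 : S k < n := by rw [← hSm]; exact hmono hkm
      have h3 : S k = x % n := by rw [← Nat.mod_eq_of_lt h2]; exact h1
      refine ⟨k + (x / n) * m, ?_⟩
      rw [hSqm, h3, mul_comm]; exact Nat.mod_add_div x n
    · rintro ⟨k, rfl⟩
      exact hFS i k
  have hcard : ∀ i, (F i).card = (F 0).card := by
    intro i
    have : F i = (F 0).image (fun y => i + y) := by
      simp only [hF, Finset.image_image]
      apply Finset.image_congr
      intro k _
      simp
    rw [this, Finset.card_image_of_injective _ (add_right_injective i)]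
  have hFP : ∀ i, F (i + ((S t : ℕ) : ZMod n)) = F i := by
    intro i
    apply Finset.eq_of_subset_of_card_le
    · intro y hy
      rw [hF] at hy
      obtain ⟨k, -, rfl⟩ := Finset.mem_image.1 hy
      have := hFS i (k + t)
      rw [hSkt] at this
      convert this using 1
      push_cast; ring
    · rw [hcard, hcard (i + _)]
  have hFPq : ∀ (q : ℕ) i, F (i + ((q * S t : ℕ) : ZMod n)) = F i := by
    intro q
    induction q with
    | zero => intro i; simp
    | succ q ih =>
      intro i
      rw [Nat.succ_mul, Nat.cast_add, ← add_assoc, hFP, ih]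
  -- injectivity
  have hinj : ∀ i g : ℕ, 0 < g → g < S t → F (i : ZMod n) ≠ F ((i + g : ℕ) : ZMod n) := by
    intro i g hg hgP hEq
    have hA : ∀ x, (∃ k, S k = x + g) ↔ (∃ k, S k = x) := by
      intro x
      rw [← hmem (i : ZMod n) (x + g), ← hmem ((i + g : ℕ) : ZMod n) x, hEq]
      push_cast
      rw [add_assoc, add_comm (g : ZMod n) (x : ZMod n)]
    obtain ⟨s, hs⟩ := (hA 0).2 ⟨0, hS0⟩
    rw [zero_add] at hs
    have hs0 : 0 < s := by
      rcases Nat.eq_zero_or_pos s with h | h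
      · subst h; omega
      · exact h
    have hst : s < t := by
      apply hmono.lt_iff_lt.1; omega
    have hfun : (fun k => S k + g) = (fun k => S (k + s)) := by
      have m1 : StrictMono (fun k => S k + g) := fun x y h => Nat.add_lt_add_right (hmono h) g
      have m2 : StrictMono (fun k => S (k + s)) := fun x y h => hmono (Nat.add_lt_add_right h s)
      apply (StrictMono.range_inj m1 m2).1
      ext y
      constructor
      · rintro ⟨k, rfl⟩
        obtain ⟨l, hl⟩ := (hA (S k)).2 ⟨k, rfl⟩
        have hsl : s ≤ l := by
          apply hmono.le_iff_le.1; omega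
        refine ⟨l - s, ?_⟩
        show S (l - s + s) = S k + g
        rw [Nat.sub_add_cancel hsl, hl]
      · rintro ⟨k, rfl⟩
        have h1 : S s ≤ S (k + s) := hmono.monotone (by omega)
        obtain ⟨l, hl⟩ := (hA (S (k + s) - g)).1 ⟨k + s, by omega⟩
        refine ⟨l, ?_⟩
        show S l + g = S (k + s)
        omega
    have hbs : Function.Periodic b s := by
      intro k
      have h1 := congrFun hfun k
      have h2 := congrFun hfun (k + 1)
      have h3 := hSsucc (k + s)
      have h4 := hSsucc k
      rw [show k + 1 + s = k + s + 1 by ring] at h2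
      omega
    have hbg := dc_gcd_periodic b s m hs0 (by omega) hbs hbm
    have hle := hmin (Nat.gcd s m) (Nat.gcd_pos_of_pos_left m hs0) (Nat.gcd_dvd_right s m) (by
      intro x hx
      rw [← hba x (by omega), ← hba (x + Nat.gcd s m) (by omega), hbg])
    have := Nat.gcd_le_left m hs0
    omega
  have hset : diffCycle n d a =
      (fun i : ℕ => F (i : ZMod n)) '' (Finset.range (S t) : Set ℕ) := by
    ext s
    constructor
    · rintro ⟨i, rfl⟩
      rw [← hFa]
      refine ⟨i.val % S t, ?_, ?_⟩
      · simpa using Nat.mod_lt _ hP0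
      · have h := hFPq (i.val / S t) ((i.val % S t : ℕ) : ZMod n)
        rw [← Nat.cast_add, mul_comm, Nat.mod_add_div, ZMod.natCast_zmod_val] at h
        exact h.symm
    · rintro ⟨i, -, rfl⟩
      exact ⟨(i : ZMod n), hFa _⟩
  rw [hset, Set.ncard_image_of_injOn, Set.ncard_coe_finset, Finset.card_range]
  intro x hx y hy hxy
  have hx' : x < S t := by simpa using hx
  have hy' : y < S t := by simpa using hy
  simp only at hxy
  rcases lt_trichotomy x y with h | h | h
  · exfalso
    apply hinj x (y - x) (by omega) (by omega)
    rw [Nat.add_sub_cancel' h.le]; exact hxy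
  · exact h
  · exfalso
    apply hinj y (x - y) (by omega) (by omega)
    rw [Nat.add_sub_cancel' h.le]; exact hxy.symm
end

section
/- Let a_0, …, a_d and b_0, …, b_d be positive integers with a_0 + ⋯ + a_d = b_0 + ⋯ + b_d = n. Then the difference cycles (a_0 : ⋯ : a_d) and (b_0 : ⋯ : b_d) are equal as collections of subsets of ℤ/nℤ if and only if there exists an integer j such that b_i = a_{(i+j) mod (d+1)} for all 0 ≤ i ≤ d. -/
/-- Partial sums of the `N`-periodic extension. -/
def psum (N : ℕ) (a : ℕ → ℕ) (t : ℕ) : ℕ := ∑ r ∈ Finset.range t, a (r % N)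

theorem psum_succ (N : ℕ) (a : ℕ → ℕ) (t : ℕ) : psum N a (t + 1) = psum N a t + a (t % N) :=
  Finset.sum_range_succ _ _

theorem psum_of_le (N : ℕ) (a : ℕ → ℕ) (t : ℕ) (h : t ≤ N) :
    psum N a t = ∑ r ∈ Finset.range t, a r := by
  apply Finset.sum_congr rfl
  intro r hr
  rw [Nat.mod_eq_of_lt (by have := Finset.mem_range.1 hr; omega)]

theorem psum_add (N n : ℕ) (a : ℕ → ℕ) (h : ∑ i ∈ Finset.range N, a i = n) (t : ℕ) :
    psum N a (t + N) = psum N a t + n := by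
  induction t with
  | zero => rw [Nat.zero_add, psum_of_le N a N le_rfl, h]; simp [psum]
  | succ t ih =>
    rw [show t + 1 + N = t + N + 1 by omega, psum_succ, psum_succ, ih, Nat.add_mod_right]
    omega

theorem psum_add_mul (N n : ℕ) (a : ℕ → ℕ) (h : ∑ i ∈ Finset.range N, a i = n) (t k : ℕ) :
    psum N a (t + N * k) = psum N a t + n * k := by
  induction k with
  | zero => simp
  | succ k ih => rw [Nat.mul_succ, ← Nat.add_assoc, psum_add N n a h, ih, Nat.mul_succ]; omega

theorem psum_cast (N n : ℕ) (a : ℕ → ℕ) (h : ∑ i ∈ Finset.range N, a i = n) (t k : ℕ) :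
    (psum N a (t + N * k) : ZMod n) = psum N a t := by
  rw [psum_add_mul N n a h]; simp

theorem psum_strictMono (d : ℕ) (a : ℕ → ℕ) (ha : ∀ i ≤ d, 0 < a i) :
    StrictMono (psum (d + 1) a) := by
  apply strictMono_nat_of_lt_succ
  intro t
  rw [psum_succ]
  have := ha (t % (d + 1)) (Nat.lt_succ_iff.1 (Nat.mod_lt _ (Nat.succ_pos d)))
  omega

theorem image_eq (n d : ℕ) (a : ℕ → ℕ) (h : ∑ i ∈ Finset.range (d + 1), a i = n) (i : ZMod n) :
    (((Finset.range (d + 1)).image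
      (fun t => i + ((∑ r ∈ Finset.range t, a r : ℕ) : ZMod n)) : Finset (ZMod n)) : Set (ZMod n))
      = Set.range (fun t : ℕ => i + (psum (d + 1) a t : ZMod n)) := by
  ext x
  rw [Finset.mem_coe, Finset.mem_image]
  constructor
  · rintro ⟨t, ht, rfl⟩
    refine ⟨t, ?_⟩
    show i + (psum (d + 1) a t : ZMod n) = _
    rw [psum_of_le _ _ _ (Finset.mem_range.1 ht).le]
  · rintro ⟨t, rfl⟩
    have hlt := Nat.mod_lt t (Nat.succ_pos d)
    refine ⟨t % (d + 1), Finset.mem_range.2 hlt, ?_⟩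
    show _ = i + (psum (d + 1) a t : ZMod n)
    rw [← psum_of_le _ _ _ hlt.le]
    conv_rhs => rw [← Nat.mod_add_div t (d + 1), psum_cast (d + 1) n a h]

theorem mem_diffCycle (n d : ℕ) (a : ℕ → ℕ) (h : ∑ i ∈ Finset.range (d + 1), a i = n)
    (s : Finset (ZMod n)) : s ∈ diffCycle n d a ↔
      ∃ i : ZMod n, (s : Set (ZMod n)) = Set.range (fun t : ℕ => i + (psum (d + 1) a t : ZMod n)) := by
  unfold diffCycle
  simp only [Set.mem_setOf_eq]
  refine exists_congr fun i => ?_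
  rw [← image_eq n d a h i, Finset.coe_inj]

theorem range_shift (n d : ℕ) (a : ℕ → ℕ) (h : ∑ i ∈ Finset.range (d + 1), a i = n)
    (i : ZMod n) (j : ℕ) :
    Set.range (fun t : ℕ => i + (psum (d + 1) a t : ZMod n)) =
      Set.range (fun t : ℕ => i + (psum (d + 1) a (t + j) : ZMod n)) := by
  ext x
  constructor
  · rintro ⟨t, rfl⟩
    refine ⟨t + d * j, ?_⟩
    show i + (psum (d + 1) a (t + d * j + j) : ZMod n) = i + (psum (d + 1) a t : ZMod n)
    rw [show t + d * j + j = t + (d + 1) * j by ring, psum_cast _ _ _ h]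
  · rintro ⟨t, rfl⟩
    exact ⟨t + j, rfl⟩

/-- Two difference cycles `(a 0 : ⋯ : a d)` and `(b 0 : ⋯ : b d)` of positive integers
with common sum `n` are equal as collections of subsets of `ℤ/nℤ` if and only if the
tuple `b` is a cyclic rotation of the tuple `a`. -/
theorem stmt_1 (n d : ℕ) (a b : ℕ → ℕ)
    (ha : ∀ i ≤ d, 0 < a i) (hb : ∀ i ≤ d, 0 < b i)
    (hsa : ∑ i ∈ Finset.range (d + 1), a i = n)
    (hsb : ∑ i ∈ Finset.range (d + 1), b i = n) :
    diffCycle n d a = diffCycle n d b ↔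
      ∃ j : ℕ, ∀ i ≤ d, b i = a ((i + j) % (d + 1)) := by
  have hA := psum_strictMono d a ha
  have hB := psum_strictMono d b hb
  constructor
  · intro h
    have h0 : (Finset.range (d + 1)).image
      (fun t => (0 : ZMod n) + ((∑ r ∈ Finset.range t, a r : ℕ) : ZMod n)) ∈ diffCycle n d b := by
      rw [← h]; exact ⟨0, rfl⟩
    rw [mem_diffCycle n d b hsb, image_eq n d a hsa] at h0
    obtain ⟨i, hi⟩ := h0
    have hi0 : i ∈ Set.range (fun t : ℕ => (0 : ZMod n) + (psum (d + 1) a t : ZMod n)) := by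
      rw [hi]; exact ⟨0, by simp [psum]⟩
    obtain ⟨j, hj⟩ := hi0
    simp only [zero_add] at hj
    rw [range_shift n d a hsa 0 j] at hi
    simp only [zero_add] at hi
    -- the shifted partial sums
    let C : ℕ → ℕ := fun t => psum (d + 1) a (t + j) - psum (d + 1) a j
    have hC : ∀ t, C t + psum (d + 1) a j = psum (d + 1) a (t + j) := fun t =>
      Nat.sub_add_cancel (hA.monotone (Nat.le_add_left _ _))
    have hCm : StrictMono C := by
      intro s t hst
      have h1 := hC s
      have h2 := hC t
      have h3 := hA (show s + j < t + j by omega)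
      omega
    have hCadd : ∀ t k, C (t + (d + 1) * k) = C t + n * k := by
      intro t k
      have h1 := hC t
      have h2 := hC (t + (d + 1) * k)
      rw [show t + (d + 1) * k + j = t + j + (d + 1) * k by omega,
        psum_add_mul _ _ _ hsa] at h2
      omega
    have hC0 : C 0 = 0 := by simp [C]
    have hB0 : psum (d + 1) b 0 = 0 := by simp [psum]
    have hrange : Set.range (fun t => (C t : ZMod n)) =
        Set.range (fun t => (psum (d + 1) b t : ZMod n)) := by
      have e : ∀ t, (psum (d + 1) a (t + j) : ZMod n) = i + (C t : ZMod n) := by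
        intro t; rw [← hC t, ← hj]; push_cast; ring
      ext x
      have hx := Set.ext_iff.1 hi (i + x)
      simpa [e] using hx
    have key : ∀ F G : ℕ → ℕ, StrictMono G → G 0 = 0 →
        (∀ t k, G (t + (d + 1) * k) = G t + n * k) →
        Set.range (fun t => (F t : ZMod n)) ⊆ Set.range (fun t => (G t : ZMod n)) →
        Set.range F ⊆ Set.range G := by
      rintro F G hG hG0 hGa hs _ ⟨t, rfl⟩
      obtain ⟨u, hu⟩ := hs ⟨t, rfl⟩
      have hlt : u % (d + 1) < d + 1 := Nat.mod_lt _ (Nat.succ_pos d)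
      have h1 := hG hlt
      have h2 := hGa 0 1
      simp only [hG0, zero_add, mul_one] at h2
      have hu' := (ZMod.natCast_eq_natCast_iff' _ _ _).1 hu
      rw [← Nat.mod_add_div u (d + 1), hGa, Nat.add_mul_mod_self_left,
        Nat.mod_eq_of_lt (by omega)] at hu'
      refine ⟨u % (d + 1) + (d + 1) * (F t / n), ?_⟩
      rw [hGa, hu', Nat.mod_add_div]
    have hEq : C = psum (d + 1) b := by
      refine (StrictMono.range_inj hCm hB).1 (Set.Subset.antisymm ?_ ?_)
      · exact key _ _ hB hB0 (psum_add_mul _ _ _ hsb) hrange.subset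
      · exact key _ _ hCm hC0 hCadd hrange.symm.subset
    refine ⟨j, fun i hi => ?_⟩
    have h1 := hC i
    have h2 := hC (i + 1)
    rw [show i + 1 + j = i + j + 1 by omega, psum_succ, hEq, psum_succ,
      Nat.mod_eq_of_lt (show i < d + 1 by omega)] at h2
    rw [hEq] at h1
    omega
  · rintro ⟨j, hj⟩
    have hs : ∀ t, psum (d + 1) a (t + j) = psum (d + 1) a j + psum (d + 1) b t := by
      intro t
      induction t with
      | zero => simp [psum]
      | succ t ih =>
        rw [show t + 1 + j = t + j + 1 by omega, psum_succ, psum_succ, ih,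
          hj (t % (d + 1)) (Nat.lt_succ_iff.1 (Nat.mod_lt _ (Nat.succ_pos d))), Nat.mod_add_mod,
          Nat.add_assoc]
    have e : ∀ i : ZMod n, Set.range (fun t : ℕ => i + (psum (d + 1) a t : ZMod n)) =
        Set.range (fun t : ℕ => (i + (psum (d + 1) a j : ZMod n)) +
          (psum (d + 1) b t : ZMod n)) := by
      intro i
      rw [range_shift n d a hsa i j]
      congr 1
      funext t
      rw [hs]; push_cast; ring
    ext s
    rw [mem_diffCycle n d a hsa, mem_diffCycle n d b hsb]
    constructor
    · rintro ⟨i, hi⟩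
      exact ⟨_, hi.trans (e i)⟩
    · rintro ⟨i, hi⟩
      refine ⟨i - (psum (d + 1) a j : ZMod n), ?_⟩
      rw [e, sub_add_cancel]
      exact hi
end

section
/- Let k ≥ 3 and let a, b, c be positive integers with a + b + c = 2k. Then the difference cycle (a : b : c) on ℤ/2kℤ is contained in skel₂(β^k) if and only if k ∉ {a, b, a + b}. Moreover, every member of skel₂(β^k) belongs to some such difference cycle, so skel₂(β^k) is a union of difference cycles. -/
/-- The difference cycle `(a : b : c)` (with `c = n - a - b`) on `ℤ/nℤ`:
the collection of subsets of the form `{i, i + a, i + a + b}` for `i ∈ ℤ/nℤ`. -/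
def dc (n a b : ℕ) : Set (Finset (ZMod n)) :=
  {s | ∃ i : ZMod n, s = {i, i + (a : ZMod n), i + (a : ZMod n) + (b : ZMod n)}}

/-- The 2-skeleton of the `k`-dimensional cross polytope: all 3-element subsets of
`ℤ/2kℤ` containing no pair of the form `{i, i + k}` (a diagonal). -/
def skel2 (k : ℕ) : Set (Finset (ZMod (2 * k))) :=
  {s | s.card = 3 ∧ ∀ i : ZMod (2 * k), ¬(i ∈ s ∧ i + (k : ZMod (2 * k)) ∈ s)}

theorem cast_add_k (k x y : ℕ) (hx : x < 2 * k) (hy : y < 2 * k)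
    (h : (x : ZMod (2 * k)) + (k : ZMod (2 * k)) = (y : ZMod (2 * k))) :
    x + k = y ∨ y + k = x := by
  have h1 : ((x + k : ℕ) : ZMod (2 * k)) = (y : ZMod (2 * k)) := by push_cast; exact h
  rw [ZMod.natCast_eq_natCast_iff', Nat.mod_eq_of_lt hy] at h1
  by_cases hlt : x + k < 2 * k
  · rw [Nat.mod_eq_of_lt hlt] at h1; exact Or.inl h1
  · rw [Nat.mod_eq_sub_mod (by omega), Nat.mod_eq_of_lt (by omega)] at h1
    right; omega

theorem natCast_inj_small (k x y : ℕ) (hx : x < 2 * k) (hy : y < 2 * k)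
    (h : (x : ZMod (2 * k)) = (y : ZMod (2 * k))) : x = y := by
  rwa [ZMod.natCast_eq_natCast_iff', Nat.mod_eq_of_lt hy, Nat.mod_eq_of_lt hx] at h

theorem two_k (k : ℕ) : (k : ZMod (2 * k)) + (k : ZMod (2 * k)) = 0 := by
  have := ZMod.natCast_self (2 * k)
  push_cast at this
  rw [← this]; ring

theorem not_of_mem (k a b : ℕ) (i : ZMod (2 * k))
    (h : ({i, i + (a : ZMod (2 * k)), i + (a : ZMod (2 * k)) + (b : ZMod (2 * k))} :
      Finset (ZMod (2 * k))) ∈ skel2 k) : ¬(k = a ∨ k = b ∨ k = a + b) := by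
  rintro (e | e | e)
  · exact h.2 i (by subst e; simp)
  · exact h.2 (i + (a : ZMod (2 * k))) (by subst e; simp)
  · refine h.2 i ⟨by simp, ?_⟩
    have : i + (k : ZMod (2 * k)) = i + (a : ZMod (2 * k)) + (b : ZMod (2 * k)) := by
      rw [add_assoc, ← Nat.cast_add, ← e]
    rw [this]; simp

theorem mem_of_not (k a b c : ℕ) (ha : 0 < a) (hb : 0 < b) (hc : 0 < c)
    (habc : a + b + c = 2 * k) (hn : ¬(k = a ∨ k = b ∨ k = a + b)) (i : ZMod (2 * k)) :
    ({i, i + (a : ZMod (2 * k)), i + (a : ZMod (2 * k)) + (b : ZMod (2 * k))} :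
      Finset (ZMod (2 * k))) ∈ skel2 k := by
  have e : ({i, i + (a : ZMod (2 * k)), i + (a : ZMod (2 * k)) + (b : ZMod (2 * k))} :
      Finset (ZMod (2 * k))) =
      {i + ((0 : ℕ) : ZMod (2 * k)), i + (a : ZMod (2 * k)), i + ((a + b : ℕ) : ZMod (2 * k))} := by
    push_cast; rw [add_zero, add_assoc]
  rw [e]
  refine ⟨?_, ?_⟩
  · rw [Finset.card_eq_three]
    refine ⟨_, _, _, ?_, ?_, ?_, rfl⟩ <;>
    · intro h
      have := natCast_inj_small k _ _ (by omega) (by omega) (add_left_cancel h)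
      omega
  · rintro j ⟨h1, h2⟩
    have key : ∀ x y : ℕ, x < 2 * k → y < 2 * k → j = i + (x : ZMod (2 * k)) →
        j + (k : ZMod (2 * k)) = i + (y : ZMod (2 * k)) → x + k = y ∨ y + k = x := by
      intro x y hx hy e1 e2
      rw [e1, add_assoc] at e2
      exact cast_add_k k x y hx hy (add_left_cancel e2)
    simp only [Finset.mem_insert, Finset.mem_singleton] at h1 h2
    rcases h1 with h1 | h1 | h1 <;> rcases h2 with h2 | h2 | h2 <;>
    · have := key _ _ (by omega) (by omega) h1 h2
      omega

theorem mem_dc_of_lt (k : ℕ) (hk : 3 ≤ k) (s : Finset (ZMod (2 * k))) (hs : s ∈ skel2 k)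
    (x y z : ZMod (2 * k)) (hxy : x.val < y.val) (hyz : y.val < z.val) (e : s = {x, y, z}) :
    ∃ a b c : ℕ, 0 < a ∧ 0 < b ∧ 0 < c ∧ a + b + c = 2 * k ∧
      ¬(k = a ∨ k = b ∨ k = a + b) ∧ s ∈ dc (2 * k) a b := by
  have : NeZero (2 * k) := ⟨by omega⟩
  have hz := ZMod.val_lt z
  have e1 : x + ((y.val - x.val : ℕ) : ZMod (2 * k)) = y := by
    rw [Nat.cast_sub hxy.le]; simp
  have e2 : y + ((z.val - y.val : ℕ) : ZMod (2 * k)) = z := by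
    rw [Nat.cast_sub hyz.le]; simp
  have e3 : s = {x, x + ((y.val - x.val : ℕ) : ZMod (2 * k)),
      x + ((y.val - x.val : ℕ) : ZMod (2 * k)) + ((z.val - y.val : ℕ) : ZMod (2 * k))} := by
    rw [e1, e2, e]
  refine ⟨y.val - x.val, z.val - y.val, 2 * k - (z.val - x.val), by omega, by omega, by omega,
    by omega, ?_, x, e3⟩
  rw [e3] at hs
  exact not_of_mem k _ _ x hs

/-- A difference cycle `(a : b : c)` with `a + b + c = 2k` is contained in
`skel₂(β^k)` iff `k ∉ {a, b, a + b}`; moreover every member of `skel₂(β^k)` lies in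
some such difference cycle, so `skel₂(β^k)` is a union of difference cycles. -/
theorem stmt_2 (k : ℕ) (hk : 3 ≤ k) :
    (∀ a b c : ℕ, 0 < a → 0 < b → 0 < c → a + b + c = 2 * k →
      (dc (2 * k) a b ⊆ skel2 k ↔ ¬(k = a ∨ k = b ∨ k = a + b))) ∧
    (∀ s ∈ skel2 k, ∃ a b c : ℕ, 0 < a ∧ 0 < b ∧ 0 < c ∧ a + b + c = 2 * k ∧
      ¬(k = a ∨ k = b ∨ k = a + b) ∧ s ∈ dc (2 * k) a b) := by
  refine ⟨?_, ?_⟩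
  · intro a b c ha hb hc habc
    constructor
    · intro h
      exact not_of_mem k a b 0 (h ⟨0, rfl⟩)
    · rintro hn s ⟨i, rfl⟩
      exact mem_of_not k a b c ha hb hc habc hn i
  · intro s hs
    have : NeZero (2 * k) := ⟨by omega⟩
    obtain ⟨x, y, z, hxy, hxz, hyz, e⟩ := Finset.card_eq_three.1 hs.1
    have h1 := (ZMod.val_injective (2 * k)).ne hxy
    have h2 := (ZMod.val_injective (2 * k)).ne hxz
    have h3 := (ZMod.val_injective (2 * k)).ne hyz
    have key := mem_dc_of_lt k hk s hs
    rcases lt_or_gt_of_ne h1 with h1 | h1 <;> rcases lt_or_gt_of_ne h2 with h2 | h2 <;>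
      rcases lt_or_gt_of_ne h3 with h3 | h3
    · exact key x y z h1 h3 e
    · exact key x z y h2 h3 (by rw [e]; ext; simp; tauto)
    · omega
    · exact key z x y h2 h1 (by rw [e]; ext; simp; tauto)
    · exact key y x z h1 h2 (by rw [e]; ext; simp; tauto)
    · omega
    · exact key y z x h3 h2 (by rw [e]; ext; simp; tauto)
    · exact key z y x h3 h1 (by rw [e]; ext; simp; tauto)
end

section
/- Let k ≥ 3 and let l, j be integers with 0 < l < j < 2k − l − j and k ∉ {l, j, l + j}. Then the elements l, j, l+j, 2k−l, 2k−j, 2k−l−j of ℤ/2kℤ are pairwise distinct and nonzero, the set of vertices v such that {0, v} is contained in some member of S_{l,j,2k} is exactly {l, j, l+j, 2k−l, 2k−j, 2k−l−j}, and the pairs {v, w} of such vertices with {0, v, w} ∈ S_{l,j,2k} are exactly {l, l+j}, {l+j, j}, {j, 2k−l}, {2k−l, 2k−l−j}, {2k−l−j, 2k−j}, {2k−j, l}; that is, the link of the vertex 0 in S_{l,j,2k} is a 6-cycle. -/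
/-- `S_{l,j,2k}`: the union of the difference cycles `(l : j : 2k−l−j)` and
`(l : 2k−l−j : j)` on `ℤ/2kℤ`. -/
def Sljn (k l j : ℕ) : Set (Finset (ZMod (2 * k))) :=
  dc (2 * k) l j ∪ dc (2 * k) l (2 * k - l - j)

theorem Sljn_zero_mem {k l j : ℕ} (hlj : l + j ≤ 2 * k) (s : Finset (ZMod (2 * k))) :
    (s ∈ Sljn k l j ∧ 0 ∈ s) ↔
      (s = {0, (l : ZMod (2 * k)), (l : ZMod (2 * k)) + j} ∨
       s = {0, (l : ZMod (2 * k)) + j, (j : ZMod (2 * k))} ∨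
       s = {0, (j : ZMod (2 * k)), -(l : ZMod (2 * k))} ∨
       s = {0, -(l : ZMod (2 * k)), -(l : ZMod (2 * k)) - j} ∨
       s = {0, -(l : ZMod (2 * k)) - j, -(j : ZMod (2 * k))} ∨
       s = {0, -(j : ZMod (2 * k)), (l : ZMod (2 * k))}) := by
  have h0 : ((2 * k : ℕ) : ZMod (2 * k)) = 0 := ZMod.natCast_self _
  have e3 : ((2 * k - l - j : ℕ) : ZMod (2 * k)) = -(l : ZMod (2 * k)) - j := by
    rw [Nat.cast_sub (by omega), Nat.cast_sub (by omega), h0]; ring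
  simp only [Sljn, dc, e3, Set.mem_union, Set.mem_setOf_eq]
  generalize (l : ZMod (2 * k)) = a
  generalize (j : ZMod (2 * k)) = b
  constructor
  · rintro ⟨⟨i, rfl⟩ | ⟨i, rfl⟩, h⟩
    · simp only [Finset.mem_insert, Finset.mem_singleton] at h
      rcases h with h | h | h
      · left; ext x; simp only [Finset.mem_insert, Finset.mem_singleton]; grind
      · right; right; left; ext x; simp only [Finset.mem_insert, Finset.mem_singleton]; grind
      · right; right; right; right; left
        ext x; simp only [Finset.mem_insert, Finset.mem_singleton]; grind
    · simp only [Finset.mem_insert, Finset.mem_singleton] at h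
      rcases h with h | h | h
      · right; right; right; right; right
        ext x; simp only [Finset.mem_insert, Finset.mem_singleton]; grind
      · right; right; right; left
        ext x; simp only [Finset.mem_insert, Finset.mem_singleton]; grind
      · right; left; ext x; simp only [Finset.mem_insert, Finset.mem_singleton]; grind
  · rintro (rfl | rfl | rfl | rfl | rfl | rfl) <;> refine ⟨?_, by simp⟩
    · left; use 0; ext x; simp only [Finset.mem_insert, Finset.mem_singleton]; grind
    · right; use b; ext x; simp only [Finset.mem_insert, Finset.mem_singleton]; grind
    · left; use -a; ext x; simp only [Finset.mem_insert, Finset.mem_singleton]; grind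
    · right; use -a; ext x; simp only [Finset.mem_insert, Finset.mem_singleton]; grind
    · left; use -a - b; ext x; simp only [Finset.mem_insert, Finset.mem_singleton]; grind
    · right; use 0; ext x; simp only [Finset.mem_insert, Finset.mem_singleton]; grind

theorem insert_zero_pair {n : ℕ} {v w x y : ZMod n} (hv : v ≠ 0) (hw : w ≠ 0)
    (hx : x ≠ 0) (hy : y ≠ 0) :
    (({0, v, w} : Finset (ZMod n)) = {0, x, y}) ↔ ({v, w} : Finset (ZMod n)) = {x, y} := by
  constructor
  · intro h
    have h' := congrArg (fun s => Finset.erase s 0) h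
    rwa [Finset.erase_insert (by simp [hv.symm, hw.symm]),
      Finset.erase_insert (by simp [hx.symm, hy.symm])] at h'
  · intro h
    rw [h]

/-- For `0 < l < j < 2k−l−j` with `k ∉ {l, j, l+j}`: the six elements
`l, j, l+j, 2k−l, 2k−j, 2k−l−j` of `ℤ/2kℤ` are pairwise distinct and nonzero, they are
exactly the vertices joined to `0` in `S_{l,j,2k}`, and the link of `0` is the 6-cycle
`l, l+j, j, 2k−l, 2k−l−j, 2k−j, l`. -/
theorem stmt_5 (k l j : ℕ) (hk : 3 ≤ k)
    (hl : 0 < l) (hlj : l < j) (hj : l + 2 * j < 2 * k)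
    (h1 : k ≠ l) (h2 : k ≠ j) (h3 : k ≠ l + j) :
    let V : Finset (ZMod (2 * k)) :=
      {(l : ZMod (2 * k)), (j : ZMod (2 * k)), ((l + j : ℕ) : ZMod (2 * k)),
       ((2 * k - l : ℕ) : ZMod (2 * k)), ((2 * k - j : ℕ) : ZMod (2 * k)),
       ((2 * k - l - j : ℕ) : ZMod (2 * k))}
    V.card = 6 ∧ (0 : ZMod (2 * k)) ∉ V ∧
    {v : ZMod (2 * k) | v ≠ 0 ∧ ∃ s ∈ Sljn k l j, 0 ∈ s ∧ v ∈ s} = ↑V ∧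
    (∀ v w : ZMod (2 * k), v ≠ 0 → w ≠ 0 → v ≠ w →
      (({0, v, w} : Finset (ZMod (2 * k))) ∈ Sljn k l j ↔
        ({v, w} : Finset (ZMod (2 * k))) ∈
          ({{(l : ZMod (2 * k)), ((l + j : ℕ) : ZMod (2 * k))},
            {((l + j : ℕ) : ZMod (2 * k)), (j : ZMod (2 * k))},
            {(j : ZMod (2 * k)), ((2 * k - l : ℕ) : ZMod (2 * k))},
            {((2 * k - l : ℕ) : ZMod (2 * k)), ((2 * k - l - j : ℕ) : ZMod (2 * k))},
            {((2 * k - l - j : ℕ) : ZMod (2 * k)), ((2 * k - j : ℕ) : ZMod (2 * k))},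
            {((2 * k - j : ℕ) : ZMod (2 * k)), (l : ZMod (2 * k))}} :
            Finset (Finset (ZMod (2 * k)))))) := by
  intro V
  have h0 : ((2 * k : ℕ) : ZMod (2 * k)) = 0 := ZMod.natCast_self _
  have key : ∀ a b : ℕ, a < 2 * k → b < 2 * k → a ≠ b →
      (a : ZMod (2 * k)) ≠ (b : ZMod (2 * k)) := by
    intro a b ha hb hab h
    rw [ZMod.natCast_eq_natCast_iff'] at h
    rw [Nat.mod_eq_of_lt ha, Nat.mod_eq_of_lt hb] at h
    exact hab h
  have key0 : ∀ a : ℕ, a < 2 * k → a ≠ 0 → (a : ZMod (2 * k)) ≠ 0 := by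
    intro a ha hb
    simpa using key a 0 ha (by omega) hb
  have n1 := key0 l (by omega) (by omega)
  have n2 := key0 j (by omega) (by omega)
  have n3 := key0 (l + j) (by omega) (by omega)
  have n4 := key0 (2 * k - l) (by omega) (by omega)
  have n5 := key0 (2 * k - j) (by omega) (by omega)
  have n6 := key0 (2 * k - l - j) (by omega) (by omega)
  have e1 : ((2 * k - l : ℕ) : ZMod (2 * k)) = -(l : ZMod (2 * k)) := by
    rw [Nat.cast_sub (by omega), h0]; ring
  have e2 : ((2 * k - j : ℕ) : ZMod (2 * k)) = -(j : ZMod (2 * k)) := by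
    rw [Nat.cast_sub (by omega), h0]; ring
  have e3 : ((2 * k - l - j : ℕ) : ZMod (2 * k)) = -(l : ZMod (2 * k)) - j := by
    rw [Nat.cast_sub (by omega), Nat.cast_sub (by omega), h0]; ring
  have e4 : ((l + j : ℕ) : ZMod (2 * k)) = (l : ZMod (2 * k)) + j := Nat.cast_add _ _
  have S := fun s => Sljn_zero_mem (k := k) (l := l) (j := j) (by omega) s
  refine ⟨?_, ?_, ?_, ?_⟩
  · simp only [V]
    repeat rw [Finset.card_insert_of_notMem]
    · simp
    all_goals
      simp only [Finset.mem_insert, Finset.mem_singleton, not_or]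
      repeat' apply And.intro
      all_goals apply key <;> omega
  · simp only [V, Finset.mem_insert, Finset.mem_singleton, not_or]
    exact ⟨n1.symm, n2.symm, n3.symm, n4.symm, n5.symm, n6.symm⟩
  · rw [e4] at n3
    rw [e1] at n4
    rw [e2] at n5
    rw [e3] at n6
    ext v
    simp only [V, e1, e2, e3, e4, Set.mem_setOf_eq, Finset.coe_insert, Finset.coe_singleton,
      Set.mem_insert_iff, Set.mem_singleton_iff]
    constructor
    · rintro ⟨hv, s, hs, hs0, hvs⟩
      rcases (S s).1 ⟨hs, hs0⟩ with rfl | rfl | rfl | rfl | rfl | rfl <;>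
        simp only [Finset.mem_insert, Finset.mem_singleton] at hvs <;> tauto
    · have T : ∀ s, ((s ∈ Sljn k l j ∧ 0 ∈ s) ∧ v ∈ s) →
          ∃ s ∈ Sljn k l j, 0 ∈ s ∧ v ∈ s := fun s h => ⟨s, h.1.1, h.1.2, h.2⟩
      rintro (rfl | rfl | rfl | rfl | rfl | rfl)
      · exact ⟨n1, T _ ⟨(S _).2 (Or.inl rfl), by simp⟩⟩
      · exact ⟨n2, T _ ⟨(S _).2 (Or.inr (Or.inl rfl)), by simp⟩⟩
      · exact ⟨n3, T _ ⟨(S _).2 (Or.inl rfl), by simp⟩⟩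
      · exact ⟨n4, T _ ⟨(S _).2 (Or.inr (Or.inr (Or.inl rfl))), by simp⟩⟩
      · exact ⟨n5, T _ ⟨(S _).2 (Or.inr (Or.inr (Or.inr (Or.inr (Or.inl rfl))))), by simp⟩⟩
      · exact ⟨n6, T _ ⟨(S _).2 (Or.inr (Or.inr (Or.inr (Or.inl rfl)))), by simp⟩⟩
  · rw [e4] at n3
    rw [e1] at n4
    rw [e2] at n5
    rw [e3] at n6
    intro v w hv hw _
    have := S {0, v, w}
    rw [and_iff_left (by simp)] at this
    rw [this, insert_zero_pair hv hw n1 n3, insert_zero_pair hv hw n3 n2,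
      insert_zero_pair hv hw n2 n4, insert_zero_pair hv hw n4 n6,
      insert_zero_pair hv hw n6 n5, insert_zero_pair hv hw n5 n1]
    simp only [e1, e2, e3, e4, Finset.mem_insert, Finset.mem_singleton]
end

section
/- Let k ≥ 3 and let l, j be integers with 0 < l < j < 2k − l − j and k ∉ {l, j, l + j}. Then every 2-element subset of ℤ/2kℤ contained in some member of S_{l,j,2k} is contained in exactly two members of S_{l,j,2k}; moreover S_{l,j,2k} has exactly 4k members (triangles) and exactly 6k such 2-element subsets (edges), so its Euler characteristic 2k − 6k + 4k equals 0. -/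
namespace SL

variable {R : Type} [CommRing R] [DecidableEq R]

/-- Nondegeneracy conditions on the two differences. -/
structure Good (a b : R) : Prop where
  a0 : a ≠ 0
  b0 : b ≠ 0
  c0 : a + b ≠ 0
  a2 : a + a ≠ 0
  b2 : b + b ≠ 0
  c2 : a + b + (a + b) ≠ 0
  ab : a ≠ b
  aab : a + a + b ≠ 0
  abb : a + b + b ≠ 0

def A (a b i : R) : Finset R := {i, i + a, i + a + b}
def B (a b i : R) : Finset R := {i, i + a, i - b}
def E (d x : R) : Finset R := {x, x + d}

theorem E_sub (d x : R) (s : Finset R) : E d x ⊆ s ↔ x ∈ s ∧ x + d ∈ s := by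
  simp [E, Finset.insert_subset_iff]

theorem EaA {a b : R} (h : Good a b) (x i : R) : E a x ⊆ A a b i ↔ i = x := by
  obtain ⟨_, _, _, _, _, _, _, _, _⟩ := h
  simp only [E_sub, A, Finset.mem_insert, Finset.mem_singleton]; grind
theorem EaB {a b : R} (h : Good a b) (x i : R) : E a x ⊆ B a b i ↔ i = x := by
  obtain ⟨_, _, _, _, _, _, _, _, _⟩ := h
  simp only [E_sub, B, Finset.mem_insert, Finset.mem_singleton]; grind
theorem EbA {a b : R} (h : Good a b) (x i : R) : E b x ⊆ A a b i ↔ i = x - a := by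
  obtain ⟨_, _, _, _, _, _, _, _, _⟩ := h
  simp only [E_sub, A, Finset.mem_insert, Finset.mem_singleton]; grind
theorem EbB {a b : R} (h : Good a b) (x i : R) : E b x ⊆ B a b i ↔ i = x + b := by
  obtain ⟨_, _, _, _, _, _, _, _, _⟩ := h
  simp only [E_sub, B, Finset.mem_insert, Finset.mem_singleton]; grind
theorem EcA {a b : R} (h : Good a b) (x i : R) : E (a + b) x ⊆ A a b i ↔ i = x := by
  obtain ⟨_, _, _, _, _, _, _, _, _⟩ := h
  simp only [E_sub, A, Finset.mem_insert, Finset.mem_singleton]; grind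
theorem EcB {a b : R} (h : Good a b) (x i : R) : E (a + b) x ⊆ B a b i ↔ i = x + b := by
  obtain ⟨_, _, _, _, _, _, _, _, _⟩ := h
  simp only [E_sub, B, Finset.mem_insert, Finset.mem_singleton]; grind

theorem A_inj {a b : R} (h : Good a b) {i i₂ : R} (e : A a b i = A a b i₂) : i = i₂ := by
  have := (EaA h i i).2 rfl
  rw [e, EaA h] at this
  exact this.symm
theorem B_inj {a b : R} (h : Good a b) {i i₂ : R} (e : B a b i = B a b i₂) : i = i₂ := by
  have := (EaB h i i).2 rfl
  rw [e, EaB h] at this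
  exact this.symm
theorem A_ne_B {a b : R} (h : Good a b) {i i₂ : R} : A a b i ≠ B a b i₂ := by
  intro e
  have u := (EaA h i i).2 rfl
  have v := (EbA h (i + a) i).2 (by ring)
  rw [e, EaB h] at u
  rw [e, EbB h] at v
  have := h.c0
  grind

theorem E_inj {a b d d₂ x x₂ : R} (h : Good a b) (hd : d = a ∨ d = b ∨ d = a + b)
    (hd₂ : d₂ = a ∨ d₂ = b ∨ d₂ = a + b) (e : E d x = E d₂ x₂) : d = d₂ ∧ x = x₂ := by
  obtain ⟨_, _, _, _, _, _, _, _, _⟩ := h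
  have e1 : E d x ⊆ E d₂ x₂ := e.le
  simp only [E_sub] at e1
  simp only [E, Finset.mem_insert, Finset.mem_singleton] at e1
  grind

theorem E_card {d : R} (hd : d ≠ 0) (x : R) : (E d x).card = 2 := by
  unfold E
  rw [Finset.card_pair]
  simpa using hd

/-- The family of triangles. -/
def T (a b : R) : Set (Finset R) := Set.range (A a b) ∪ Set.range (B a b)

theorem sub_E_A {a b i : R} {e : Finset R} (he : e.card = 2) (hs : e ⊆ A a b i) :
    ∃ d x, (d = a ∨ d = b ∨ d = a + b) ∧ e = E d x := by
  obtain ⟨p, q, hpq, rfl⟩ := Finset.card_eq_two.1 he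
  simp only [A, Finset.insert_subset_iff, Finset.singleton_subset_iff, Finset.mem_insert,
    Finset.mem_singleton] at hs
  have key : p + a = q ∨ q + a = p ∨ p + b = q ∨ q + b = p ∨ p + (a + b) = q ∨
    q + (a + b) = p := by grind
  rcases key with h | h | h | h | h | h
  · exact ⟨a, p, by simp, by simp [E, h]⟩
  · exact ⟨a, q, by simp, by simp [E, h, Finset.pair_comm]⟩
  · exact ⟨b, p, by simp, by simp [E, h]⟩
  · exact ⟨b, q, by simp, by simp [E, h, Finset.pair_comm]⟩
  · exact ⟨a + b, p, by simp, by simp [E, h]⟩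
  · exact ⟨a + b, q, by simp, by simp [E, h, Finset.pair_comm]⟩

theorem sub_E_B {a b i : R} {e : Finset R} (he : e.card = 2) (hs : e ⊆ B a b i) :
    ∃ d x, (d = a ∨ d = b ∨ d = a + b) ∧ e = E d x := by
  obtain ⟨p, q, hpq, rfl⟩ := Finset.card_eq_two.1 he
  simp only [B, Finset.insert_subset_iff, Finset.singleton_subset_iff, Finset.mem_insert,
    Finset.mem_singleton] at hs
  have key : p + a = q ∨ q + a = p ∨ p + b = q ∨ q + b = p ∨ p + (a + b) = q ∨
    q + (a + b) = p := by grind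
  rcases key with h | h | h | h | h | h
  · exact ⟨a, p, by simp, by simp [E, h]⟩
  · exact ⟨a, q, by simp, by simp [E, h, Finset.pair_comm]⟩
  · exact ⟨b, p, by simp, by simp [E, h]⟩
  · exact ⟨b, q, by simp, by simp [E, h, Finset.pair_comm]⟩
  · exact ⟨a + b, p, by simp, by simp [E, h]⟩
  · exact ⟨a + b, q, by simp, by simp [E, h, Finset.pair_comm]⟩

theorem edge_iff {a b : R} (h : Good a b) (e : Finset R) :
    (e.card = 2 ∧ ∃ s ∈ T a b, e ⊆ s) ↔
      ∃ d x, (d = a ∨ d = b ∨ d = a + b) ∧ e = E d x := by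
  constructor
  · rintro ⟨he, s, ⟨i, rfl⟩ | ⟨i, rfl⟩, hs⟩
    · exact sub_E_A he hs
    · exact sub_E_B he hs
  · rintro ⟨d, x, rfl | rfl | rfl, rfl⟩
    · exact ⟨E_card h.a0 x, A d b x, Or.inl ⟨x, rfl⟩, (EaA h x x).2 rfl⟩
    · exact ⟨E_card h.b0 x, A a d (x - a), Or.inl ⟨_, rfl⟩, (EbA h x _).2 rfl⟩
    · exact ⟨E_card h.c0 x, A a b x, Or.inl ⟨x, rfl⟩, (EcA h x x).2 rfl⟩

theorem two {a b : R} (h : Good a b) (e : Finset R) (u v : R)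
    (hu : ∀ i, e ⊆ A a b i ↔ i = u) (hv : ∀ i, e ⊆ B a b i ↔ i = v) :
    {s ∈ T a b | e ⊆ s}.ncard = 2 := by
  have : {s ∈ T a b | e ⊆ s} = {A a b u, B a b v} := by
    ext s
    constructor
    · rintro ⟨⟨i, rfl⟩ | ⟨i, rfl⟩, hs⟩
      · rw [(hu i).1 hs]; simp
      · rw [(hv i).1 hs]; simp
    · rintro (rfl | rfl)
      · exact ⟨Or.inl ⟨u, rfl⟩, (hu u).2 rfl⟩
      · exact ⟨Or.inr ⟨v, rfl⟩, (hv v).2 rfl⟩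
  rw [this, Set.ncard_pair (A_ne_B h)]

theorem edge_two {a b : R} (h : Good a b) (e : Finset R) (he : e.card = 2)
    (hs : ∃ s ∈ T a b, e ⊆ s) : {s ∈ T a b | e ⊆ s}.ncard = 2 := by
  obtain ⟨d, x, rfl | rfl | rfl, rfl⟩ := (edge_iff h e).1 ⟨he, hs⟩
  · exact two h _ _ _ (EaA h x) (EaB h x)
  · exact two h _ _ _ (EbA h x) (EbB h x)
  · exact two h _ _ _ (EcA h x) (EcB h x)

theorem range_ncard {α : Type} [Finite R] (f : R → α) (hf : Function.Injective f) :
    (Set.range f).ncard = Nat.card R := by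
  rw [← Set.image_univ, Set.ncard_image_of_injective _ hf, Set.ncard_univ]

theorem T_ncard {a b : R} [Finite R] (h : Good a b) : (T a b).ncard = 2 * Nat.card R := by
  unfold T
  rw [Set.ncard_union_eq, range_ncard _ fun _ _ e => A_inj h e,
    range_ncard _ fun _ _ e => B_inj h e]
  · ring
  · rw [Set.disjoint_left]
    rintro _ ⟨i, rfl⟩ ⟨j, hj⟩
    exact A_ne_B h hj.symm

theorem edge_ncard {a b : R} [Finite R] (h : Good a b) :
    {e : Finset R | e.card = 2 ∧ ∃ s ∈ T a b, e ⊆ s}.ncard = 3 * Nat.card R := by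
  have hS : {e : Finset R | e.card = 2 ∧ ∃ s ∈ T a b, e ⊆ s} =
      Set.image (fun p : R × R => E p.1 p.2) (({a, b, a + b} : Set R) ×ˢ (Set.univ : Set R)) := by
    ext e
    rw [Set.mem_setOf_eq, edge_iff h]
    constructor
    · rintro ⟨d, x, hd, rfl⟩
      exact ⟨(d, x), ⟨hd, trivial⟩, rfl⟩
    · rintro ⟨⟨d, x⟩, ⟨hd, -⟩, rfl⟩
      exact ⟨d, x, hd, rfl⟩
  rw [hS, Set.ncard_image_of_injOn, Set.ncard_prod, Set.ncard_univ]
  · congr 1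
    rw [Set.ncard_eq_three]
    have := h.a0
    have := h.b0
    exact ⟨a, b, a + b, h.ab, by grind, by grind, rfl⟩
  · rintro ⟨d, x⟩ ⟨hd, -⟩ ⟨d₂, x₂⟩ ⟨hd₂, -⟩ e
    obtain ⟨rfl, rfl⟩ := E_inj h hd hd₂ e
    rfl

theorem T_eq (k l j : ℕ) (hj : l + 2 * j < 2 * k) :
    Sljn k l j = T (l : ZMod (2 * k)) (j : ZMod (2 * k)) := by
  have hc : ((2 * k - l - j : ℕ) : ZMod (2 * k)) = -l - j := by
    rw [Nat.cast_sub (by omega), Nat.cast_sub (by omega), ZMod.natCast_self]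
    ring
  unfold Sljn T dc
  rw [hc]
  congr 1
  · ext s; simp [A, eq_comm]
  · ext s
    have (i : ZMod (2 * k)) : i + (l : ZMod (2 * k)) + (-l - j) = i - j := by ring
    simp [B, eq_comm, this]

theorem cast_ne {n m : ℕ} (h0 : 0 < m) (h2 : m < 2 * n) (h1 : m ≠ n) : (m : ZMod n) ≠ 0 := by
  rw [Ne, ZMod.natCast_eq_zero_iff]
  rintro ⟨c, rfl⟩
  have hc : c < 2 := by
    by_contra hc
    nlinarith [Nat.mul_le_mul_left n (not_lt.1 hc)]
  interval_cases c <;> omega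

theorem good (k l j : ℕ) (hl : 0 < l) (hlj : l < j) (hj : l + 2 * j < 2 * k)
    (h1 : k ≠ l) (h2 : k ≠ j) (h3 : k ≠ l + j) :
    Good (l : ZMod (2 * k)) (j : ZMod (2 * k)) := by
  have key (m : ℕ) (h0 : 0 < m) (h2 : m < 2 * (2 * k)) (h1 : m ≠ 2 * k) :=
    cast_ne (n := 2 * k) h0 h2 h1
  constructor
  · exact key l (by omega) (by omega) (by omega)
  · exact key j (by omega) (by omega) (by omega)
  · exact_mod_cast key (l + j) (by omega) (by omega) (by omega)
  · exact_mod_cast key (l + l) (by omega) (by omega) (by omega)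
  · exact_mod_cast key (j + j) (by omega) (by omega) (by omega)
  · exact_mod_cast key (l + j + (l + j)) (by omega) (by omega) (by omega)
  · intro e
    have := key (j - l) (by omega) (by omega) (by omega)
    rw [Nat.cast_sub hlj.le, e, sub_self] at this
    exact this rfl
  · exact_mod_cast key (l + l + j) (by omega) (by omega) (by omega)
  · exact_mod_cast key (l + j + j) (by omega) (by omega) (by omega)

end SL


/-- For `0 < l < j < 2k−l−j` with `k ∉ {l, j, l+j}`: every edge of `S_{l,j,2k}` is in
exactly two triangles; `S_{l,j,2k}` has `4k` triangles and `6k` edges, hence Euler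
characteristic `2k − 6k + 4k = 0`. -/
theorem stmt_6 (k l j : ℕ) (hk : 3 ≤ k)
    (hl : 0 < l) (hlj : l < j) (hj : l + 2 * j < 2 * k)
    (h1 : k ≠ l) (h2 : k ≠ j) (h3 : k ≠ l + j) :
    (∀ e : Finset (ZMod (2 * k)), e.card = 2 → (∃ s ∈ Sljn k l j, e ⊆ s) →
      {s ∈ Sljn k l j | e ⊆ s}.ncard = 2) ∧
    (Sljn k l j).ncard = 4 * k ∧
    {e : Finset (ZMod (2 * k)) | e.card = 2 ∧ ∃ s ∈ Sljn k l j, e ⊆ s}.ncard = 6 * k ∧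
    (2 * k : ℤ) - (6 * k : ℤ) + (4 * k : ℤ) = 0 := by
  have hG := SL.good k l j hl hlj hj h1 h2 h3
  have : NeZero (2 * k) := ⟨by omega⟩
  have hc : Nat.card (ZMod (2 * k)) = 2 * k := Nat.card_zmod _
  rw [SL.T_eq k l j hj]
  refine ⟨SL.edge_two hG, ?_, ?_, by ring⟩
  · rw [SL.T_ncard hG, hc]; ring
  · rw [SL.edge_ncard hG, hc]; ring
end

section
/- Let k ≥ 3 and let l, j be integers with 0 < l < j < 2k − l − j and k ∉ {l, j, l + j}. Then every 2-element subset of ℤ/2kℤ contained in some member of S_{l,j,2k} is contained in exactly one member of the difference cycle (l : j : 2k−l−j) and in exactly one member of the difference cycle (l : 2k−l−j : j); in particular the two difference cycles have the same set of edges. -/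
/-- The triangle on `i`, `i + L`, `i + L + J`. -/
def tri {n : ℕ} (L J i : ZMod n) : Finset (ZMod n) := {i, i + L, i + L + J}

theorem tri_unique {n : ℕ} (L J : ZMod n) (a1 : L ≠ 0) (a2 : J ≠ 0) (a3 : L + J ≠ 0)
    (b1 : L + L ≠ 0) (b2 : J + J ≠ 0) (b3 : L + J + (L + J) ≠ 0)
    (c1 : L ≠ J) (c2 : L + L + J ≠ 0) (c3 : L + J + J ≠ 0)
    (x y i i' : ZMod n) (hxy : x ≠ y) (hx : x ∈ tri L J i) (hy : y ∈ tri L J i)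
    (hx' : x ∈ tri L J i') (hy' : y ∈ tri L J i') : i = i' := by
  simp only [tri, Finset.mem_insert, Finset.mem_singleton] at hx hy hx' hy'
  rcases hx with rfl | rfl | rfl <;> rcases hy with rfl | rfl | rfl <;>
  rcases hx' with h | h | h <;> rcases hy' with h' | h' | h' <;> grind

theorem tri_swap {n : ℕ} (L J : ZMod n)
    (x y i : ZMod n) (hxy : x ≠ y) (hx : x ∈ tri L J i) (hy : y ∈ tri L J i) :
    ∃ i', x ∈ tri J L i' ∧ y ∈ tri J L i' := by
  simp only [tri, Finset.mem_insert, Finset.mem_singleton] at hx hy ⊢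
  rcases hx with rfl | rfl | rfl <;> rcases hy with rfl | rfl | rfl <;>
  first
  | exact absurd rfl hxy
  | (refine ⟨i - J, ?_⟩; constructor <;> grind)
  | (refine ⟨i + L, ?_⟩; constructor <;> grind)
  | (refine ⟨i, ?_⟩; constructor <;> grind)
  | (refine ⟨x - J, ?_⟩; constructor <;> grind)
  | (refine ⟨x + L, ?_⟩; constructor <;> grind)
  | (refine ⟨x, ?_⟩; constructor <;> grind)
  | (refine ⟨y - J, ?_⟩; constructor <;> grind)
  | (refine ⟨y + L, ?_⟩; constructor <;> grind)
  | (refine ⟨y, ?_⟩; constructor <;> grind)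

theorem nat_ne {n m : ℕ} (h0 : 0 < m) (h : m < 2 * n) (h' : m ≠ n) : (m : ZMod n) ≠ 0 := by
  rw [Ne, ZMod.natCast_eq_zero_iff]
  rintro ⟨c, rfl⟩
  have : c < 2 := by
    by_contra hc
    push Not at hc
    nlinarith
  interval_cases c <;> simp_all

theorem ncard_tri {n : ℕ} (L J : ZMod n) (a1 : L ≠ 0) (a2 : J ≠ 0) (a3 : L + J ≠ 0)
    (b1 : L + L ≠ 0) (b2 : J + J ≠ 0) (b3 : L + J + (L + J) ≠ 0)
    (c1 : L ≠ J) (c2 : L + L + J ≠ 0) (c3 : L + J + J ≠ 0)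
    (e : Finset (ZMod n)) (he : e.card = 2) (h : ∃ i, e ⊆ tri L J i) :
    {s ∈ {s | ∃ i, s = tri L J i} | e ⊆ s}.ncard = 1 := by
  obtain ⟨i, hi⟩ := h
  obtain ⟨x, y, hxy, rfl⟩ := Finset.card_eq_two.1 he
  rw [Set.ncard_eq_one]
  refine ⟨tri L J i, ?_⟩
  ext s
  simp only [Set.mem_setOf_eq, Set.mem_singleton_iff]
  constructor
  · rintro ⟨⟨i', rfl⟩, hs⟩
    rw [tri_unique L J a1 a2 a3 b1 b2 b3 c1 c2 c3 x y i' i hxy (hs (by simp)) (hs (by simp))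
      (hi (by simp)) (hi (by simp))]
  · rintro rfl
    exact ⟨⟨i, rfl⟩, hi⟩

theorem swap_sub {n : ℕ} (L J : ZMod n) (e : Finset (ZMod n)) (he : e.card = 2)
    (h : ∃ i, e ⊆ tri L J i) : ∃ i, e ⊆ tri J L i := by
  obtain ⟨i, hi⟩ := h
  obtain ⟨x, y, hxy, rfl⟩ := Finset.card_eq_two.1 he
  obtain ⟨i', h1, h2⟩ := tri_swap L J x y i hxy (hi (by simp)) (hi (by simp))
  refine ⟨i', ?_⟩
  intro z hz
  simp only [Finset.mem_insert, Finset.mem_singleton] at hz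
  rcases hz with rfl | rfl <;> assumption

/-- For `0 < l < j < 2k−l−j` with `k ∉ {l, j, l+j}`: every edge of `S_{l,j,2k}` lies in
exactly one triangle of `(l : j : 2k−l−j)` and exactly one triangle of
`(l : 2k−l−j : j)`; in particular the two difference cycles have the same edges. -/
theorem stmt_7 (k l j : ℕ) (hk : 3 ≤ k)
    (hl : 0 < l) (hlj : l < j) (hj : l + 2 * j < 2 * k)
    (h1 : k ≠ l) (h2 : k ≠ j) (h3 : k ≠ l + j) :
    (∀ e : Finset (ZMod (2 * k)), e.card = 2 → (∃ s ∈ Sljn k l j, e ⊆ s) →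
      {s ∈ dc (2 * k) l j | e ⊆ s}.ncard = 1 ∧
      {s ∈ dc (2 * k) l (2 * k - l - j) | e ⊆ s}.ncard = 1) ∧
    {e : Finset (ZMod (2 * k)) | e.card = 2 ∧ ∃ s ∈ dc (2 * k) l j, e ⊆ s} =
      {e : Finset (ZMod (2 * k)) | e.card = 2 ∧ ∃ s ∈ dc (2 * k) l (2 * k - l - j), e ⊆ s} := by
  have e1 : dc (2 * k) l j = {s | ∃ i, s = tri (l : ZMod (2 * k)) j i} := rfl
  have hc : ((2 * k - l - j : ℕ) : ZMod (2 * k)) = -l - j := by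
    have h : ((2 * k - l - j + l + j : ℕ) : ZMod (2 * k)) = ((2 * k : ℕ) : ZMod (2 * k)) := by
      congr 1; omega
    rw [ZMod.natCast_self] at h
    push_cast at h
    linear_combination h
  have key : ∀ i : ZMod (2 * k),
      ({i, i + (l : ZMod (2 * k)), i + l + ((2 * k - l - j : ℕ) : ZMod (2 * k))} : Finset _) =
        tri (j : ZMod (2 * k)) l (i - j) := by
    intro i
    rw [hc, tri]
    ext z
    simp only [Finset.mem_insert, Finset.mem_singleton]
    have q1 : i + (l : ZMod (2 * k)) + (-l - j) = i - j := by ring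
    have q2 : i - (j : ZMod (2 * k)) + j = i := by ring
    rw [q1, q2]
    tauto
  have e2 : dc (2 * k) l (2 * k - l - j) = {s | ∃ i, s = tri (j : ZMod (2 * k)) l i} := by
    ext s
    constructor
    · rintro ⟨i, hi⟩
      exact ⟨i - j, hi.trans (key i)⟩
    · rintro ⟨i, hi⟩
      refine ⟨i + j, hi.trans ?_⟩
      rw [key, add_sub_cancel_right]
  have a1 : (l : ZMod (2 * k)) ≠ 0 := nat_ne hl (by omega) (by omega)
  have a2 : (j : ZMod (2 * k)) ≠ 0 := nat_ne (by omega) (by omega) (by omega)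
  have a3 : (l + j : ZMod (2 * k)) ≠ 0 := by
    exact_mod_cast nat_ne (n := 2 * k) (m := l + j) (by omega) (by omega) (by omega)
  have b1 : (l + l : ZMod (2 * k)) ≠ 0 := by
    exact_mod_cast nat_ne (n := 2 * k) (m := l + l) (by omega) (by omega) (by omega)
  have b2 : (j + j : ZMod (2 * k)) ≠ 0 := by
    exact_mod_cast nat_ne (n := 2 * k) (m := j + j) (by omega) (by omega) (by omega)
  have b3 : (l + j + (l + j) : ZMod (2 * k)) ≠ 0 := by
    exact_mod_cast nat_ne (n := 2 * k) (m := l + j + (l + j)) (by omega) (by omega) (by omega)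
  have c2 : (l + l + j : ZMod (2 * k)) ≠ 0 := by
    exact_mod_cast nat_ne (n := 2 * k) (m := l + l + j) (by omega) (by omega) (by omega)
  have c3 : (l + j + j : ZMod (2 * k)) ≠ 0 := by
    exact_mod_cast nat_ne (n := 2 * k) (m := l + j + j) (by omega) (by omega) (by omega)
  have c1 : (l : ZMod (2 * k)) ≠ j := by
    intro h
    have h4 := nat_ne (n := 2 * k) (m := j - l) (by omega) (by omega) (by omega)
    rw [Nat.cast_sub hlj.le, h, sub_self] at h4
    exact h4 rfl
  unfold Sljn
  rw [e1, e2]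
  constructor
  · rintro e he ⟨s, hs, hes⟩
    have h : ∃ i, e ⊆ tri (l : ZMod (2 * k)) j i := by
      rcases hs with ⟨i, rfl⟩ | ⟨i, rfl⟩
      · exact ⟨i, hes⟩
      · exact swap_sub _ _ e he ⟨i, hes⟩
    refine ⟨ncard_tri _ _ a1 a2 a3 b1 b2 b3 c1 c2 c3 e he h,
      ncard_tri _ _ a2 a1 ?_ b2 b1 ?_ c1.symm ?_ ?_ e he (swap_sub _ _ e he h)⟩
    · rwa [add_comm]
    · rwa [add_comm (j : ZMod (2 * k)) l]
    · intro h; apply c3; linear_combination h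
    · intro h; apply c2; linear_combination h
  · ext e
    simp only [Set.mem_setOf_eq]
    constructor
    · rintro ⟨he, s, ⟨i, rfl⟩, hes⟩
      obtain ⟨i', hi'⟩ := swap_sub _ _ e he ⟨i, hes⟩
      exact ⟨he, _, ⟨i', rfl⟩, hi'⟩
    · rintro ⟨he, s, ⟨i, rfl⟩, hes⟩
      obtain ⟨i', hi'⟩ := swap_sub _ _ e he ⟨i, hes⟩
      exact ⟨he, _, ⟨i', rfl⟩, hi'⟩
end

section
/- Let k ≥ 3, let l, j be integers with 0 < l < j < 2k − l − j and k ∉ {l, j, l + j}, and set m := gcd(l, j, 2k). Then the simple graph on ℤ/2kℤ whose edges are the 2-element subsets contained in some member of S_{l,j,2k} has exactly m connected components, each with 2k/m vertices, and the vertex shift v ↦ v + 1 maps each connected component isomorphically onto another, so all connected components of S_{l,j,2k} are combinatorially isomorphic. -/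
/-- The graph on `ℤ/nℤ` whose edges are the 2-element subsets contained in some
member of `S`. -/
def cGraph (n : ℕ) (S : Set (Finset (ZMod n))) : SimpleGraph (ZMod n) :=
  SimpleGraph.fromRel (fun v w => ∃ s ∈ S, v ∈ s ∧ w ∈ s)

lemma aux_dc_shift (n a b : ℕ) (d : ZMod n) (s : Finset (ZMod n)) (h : s ∈ dc n a b) :
    s.image (fun v => v + d) ∈ dc n a b := by
  obtain ⟨i, rfl⟩ := h
  refine ⟨i + d, ?_⟩
  simp only [Finset.image_insert, Finset.image_singleton]
  congr 1
  · congr 1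
    · ring
    · congr 1; ring

lemma aux_S_shift (k l j : ℕ) (d : ZMod (2 * k)) (s : Finset (ZMod (2 * k)))
    (h : s ∈ Sljn k l j) : s.image (fun v => v + d) ∈ Sljn k l j := by
  rcases h with h | h
  · exact Or.inl (aux_dc_shift _ _ _ d s h)
  · exact Or.inr (aux_dc_shift _ _ _ d s h)

lemma aux_S_shift_iff (k l j : ℕ) (d : ZMod (2 * k)) (s : Finset (ZMod (2 * k))) :
    s ∈ Sljn k l j ↔ s.image (Equiv.addRight d) ∈ Sljn k l j := by
  constructor
  · exact aux_S_shift k l j d s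
  · intro h
    have := aux_S_shift k l j (-d) _ h
    rw [Finset.image_image] at this
    have e : ((fun v => v + -d) ∘ (Equiv.addRight d) : ZMod (2 * k) → ZMod (2 * k)) = id := by
      funext v; simp
    rwa [e, Finset.image_id] at this

lemma aux_adj_shift (k l j : ℕ) (d v w : ZMod (2 * k))
    (h : (cGraph (2 * k) (Sljn k l j)).Adj v w) :
    (cGraph (2 * k) (Sljn k l j)).Adj (v + d) (w + d) := by
  rw [cGraph, SimpleGraph.fromRel_adj] at h ⊢
  refine ⟨by simpa using h.1, ?_⟩
  rcases h.2 with ⟨s, hs, hv, hw⟩ | ⟨s, hs, hv, hw⟩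
  · exact Or.inl ⟨_, aux_S_shift k l j d s hs, Finset.mem_image_of_mem _ hv,
      Finset.mem_image_of_mem _ hw⟩
  · exact Or.inr ⟨_, aux_S_shift k l j d s hs, Finset.mem_image_of_mem _ hv,
      Finset.mem_image_of_mem _ hw⟩

lemma aux_reach_of_mem (k l j : ℕ) (s : Finset (ZMod (2 * k))) (hs : s ∈ Sljn k l j)
    (v w : ZMod (2 * k)) (hv : v ∈ s) (hw : w ∈ s) :
    (cGraph (2 * k) (Sljn k l j)).Reachable v w := by
  by_cases e : v = w
  · rw [e]
  · apply SimpleGraph.Adj.reachable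
    rw [cGraph, SimpleGraph.fromRel_adj]
    exact ⟨e, Or.inl ⟨s, hs, hv, hw⟩⟩

lemma aux_step_l (k l j : ℕ) (v : ZMod (2 * k)) :
    (cGraph (2 * k) (Sljn k l j)).Reachable v (v + l) :=
  aux_reach_of_mem k l j _ (Or.inl ⟨v, rfl⟩) _ _ (by simp) (by simp)

lemma aux_step_j (k l j : ℕ) (v : ZMod (2 * k)) :
    (cGraph (2 * k) (Sljn k l j)).Reachable v (v + j) :=
  aux_reach_of_mem k l j _ (Or.inl ⟨v - l, rfl⟩) _ _ (by simp) (by simp)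

lemma aux_zmul {n : ℕ} (G : SimpleGraph (ZMod n)) (a : ZMod n)
    (h : ∀ v, G.Reachable v (v + a)) (x : ℤ) (v : ZMod n) : G.Reachable v (v + x * a) := by
  induction x using Int.induction_on with
  | zero => simp
  | succ i ih =>
    refine ih.trans ?_
    convert h _ using 1
    push_cast; ring
  | pred i ih =>
    refine ih.trans (SimpleGraph.Reachable.symm ?_)
    convert h _ using 1
    push_cast; ring

lemma aux_reach_iff (k l j m : ℕ) (hj : l + 2 * j < 2 * k)
    (hm : m = Nat.gcd l (Nat.gcd j (2 * k))) (hd : m ∣ 2 * k) (v w : ZMod (2 * k)) :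
    (cGraph (2 * k) (Sljn k l j)).Reachable v w ↔
      ZMod.castHom hd (ZMod m) v = ZMod.castHom hd (ZMod m) w := by
  have ml : ((l : ℕ) : ZMod m) = 0 := by
    rw [ZMod.natCast_eq_zero_iff, hm]; exact Nat.gcd_dvd_left _ _
  have mj : ((j : ℕ) : ZMod m) = 0 := by
    rw [ZMod.natCast_eq_zero_iff, hm]
    exact (Nat.gcd_dvd_right _ _).trans (Nat.gcd_dvd_left _ _)
  have mk : ((2 * k : ℕ) : ZMod m) = 0 := by
    rwa [ZMod.natCast_eq_zero_iff]
  have mc : ((2 * k - l - j : ℕ) : ZMod m) = 0 := by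
    rw [Nat.sub_sub, Nat.cast_sub (by omega), mk, Nat.cast_add, ml, mj]; simp
  have key : ∀ s ∈ Sljn k l j, ∀ v ∈ s, ∀ w ∈ s,
      ZMod.castHom hd (ZMod m) v = ZMod.castHom hd (ZMod m) w := by
    rintro s (⟨i, rfl⟩ | ⟨i, rfl⟩) v hv w hw <;>
    · simp only [Finset.mem_insert, Finset.mem_singleton] at hv hw
      rcases hv with rfl | rfl | rfl <;> rcases hw with rfl | rfl | rfl <;>
        simp only [map_add, map_natCast, ml, mj, mc, add_zero]
  constructor
  · rintro ⟨p⟩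
    induction p with
    | nil => rfl
    | cons h p ih =>
      refine Eq.trans ?_ ih
      rw [cGraph, SimpleGraph.fromRel_adj] at h
      rcases h.2 with ⟨s, hs, hv, hw⟩ | ⟨s, hs, hv, hw⟩
      · exact key s hs _ hv _ hw
      · exact key s hs _ hw _ hv
  · intro h
    have h0 : ZMod.castHom hd (ZMod m) (w - v) = 0 := by rw [map_sub, h, sub_self]
    obtain ⟨z, hz⟩ := ZMod.intCast_surjective (w - v)
    rw [← hz, map_intCast, ZMod.intCast_zmod_eq_zero_iff_dvd] at h0
    obtain ⟨t, rfl⟩ := h0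
    have b1 := Nat.gcd_eq_gcd_ab l (Nat.gcd j (2 * k))
    have b2 := Nat.gcd_eq_gcd_ab j (2 * k)
    rw [← hm] at b1
    generalize Nat.gcdA l (Nat.gcd j (2 * k)) = x at b1
    generalize Nat.gcdB l (Nat.gcd j (2 * k)) = y at b1
    rw [b2] at b1
    generalize Nat.gcdA j (2 * k) = x' at b1
    generalize Nat.gcdB j (2 * k) = y' at b1
    have kk : (((2 * k : ℕ) : ℤ) : ZMod (2 * k)) = 0 := by
      rw [Int.cast_natCast]; exact ZMod.natCast_self _
    have e : w = v + ((x * t : ℤ) : ZMod (2 * k)) * (l : ZMod (2 * k))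
        + ((x' * y * t : ℤ) : ZMod (2 * k)) * (j : ZMod (2 * k)) := by
      rw [b1] at hz
      rw [eq_comm, sub_eq_iff_eq_add] at hz
      rw [hz]
      simp only [Int.cast_mul, Int.cast_add, kk, Int.cast_natCast]
      ring
    rw [e]
    exact (aux_zmul _ _ (aux_step_l k l j) _ _).trans (aux_zmul _ _ (aux_step_j k l j) _ _)

/-- For `0 < l < j < 2k−l−j`, `k ∉ {l, j, l+j}` and `m = gcd(l, j, 2k)`: `S_{l,j,2k}`
has exactly `m` connected components with `2k/m` vertices each, the vertex shift
`v ↦ v + 1` is an automorphism (so it maps components isomorphically onto others), and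
all connected components are combinatorially isomorphic. -/
theorem stmt_8 (k l j m : ℕ) (hk : 3 ≤ k)
    (hl : 0 < l) (hlj : l < j) (hj : l + 2 * j < 2 * k)
    (h1 : k ≠ l) (h2 : k ≠ j) (h3 : k ≠ l + j)
    (hm : m = Nat.gcd l (Nat.gcd j (2 * k))) :
    Nat.card (cGraph (2 * k) (Sljn k l j)).ConnectedComponent = m ∧
    (∀ c : (cGraph (2 * k) (Sljn k l j)).ConnectedComponent,
      Nat.card {v : ZMod (2 * k) //
        (cGraph (2 * k) (Sljn k l j)).connectedComponentMk v = c} = 2 * k / m) ∧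
    (∃ φ : cGraph (2 * k) (Sljn k l j) ≃g cGraph (2 * k) (Sljn k l j),
      ∀ v : ZMod (2 * k), φ v = v + 1) ∧
    (∀ c c' : (cGraph (2 * k) (Sljn k l j)).ConnectedComponent,
      ∃ φ : ZMod (2 * k) ≃ ZMod (2 * k),
        (∀ s : Finset (ZMod (2 * k)), s ∈ Sljn k l j ↔ s.image φ ∈ Sljn k l j) ∧
        (∀ v : ZMod (2 * k), (cGraph (2 * k) (Sljn k l j)).connectedComponentMk v = c →
          (cGraph (2 * k) (Sljn k l j)).connectedComponentMk (φ v) = c')) := by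
  have hd : m ∣ 2 * k := by
    rw [hm]; exact (Nat.gcd_dvd_right _ _).trans (Nat.gcd_dvd_right _ _)
  have hr := aux_reach_iff k l j m hj hm hd
  have hmpos : 0 < m := by rw [hm]; exact Nat.gcd_pos_of_pos_left _ hl
  have hsurj : Function.Surjective (ZMod.castHom hd (ZMod m)) := ZMod.castHom_surjective hd
  have hcard : Nat.card (ZMod (2 * k)) = 2 * k := Nat.card_zmod _
  refine ⟨?_, ?_, ?_, ?_⟩
  · let f : (cGraph (2 * k) (Sljn k l j)).ConnectedComponent → ZMod m :=
      Quot.lift (ZMod.castHom hd (ZMod m)) (fun v w h => (hr v w).1 h)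
    have hf : Function.Bijective f := by
      constructor
      · intro a b
        induction a using SimpleGraph.ConnectedComponent.ind with | _ v
        induction b using SimpleGraph.ConnectedComponent.ind with | _ w
        intro h
        exact SimpleGraph.ConnectedComponent.sound ((hr v w).2 h)
      · intro z
        obtain ⟨v, hv⟩ := hsurj z
        exact ⟨(cGraph (2 * k) (Sljn k l j)).connectedComponentMk v, hv⟩
    rw [Nat.card_eq_of_bijective f hf, Nat.card_zmod]
  · intro c
    induction c using SimpleGraph.ConnectedComponent.ind with | _ w
    let g : ZMod (2 * k) →+ ZMod m := (ZMod.castHom hd (ZMod m)).toAddMonoidHom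
    have e : {v : ZMod (2 * k) // (cGraph (2 * k) (Sljn k l j)).connectedComponentMk v =
        (cGraph (2 * k) (Sljn k l j)).connectedComponentMk w} ≃ g.ker := by
      refine (Equiv.subRight w).subtypeEquiv ?_
      intro v
      rw [SimpleGraph.ConnectedComponent.eq, hr, AddMonoidHom.mem_ker]
      change _ ↔ ZMod.castHom hd (ZMod m) (v - w) = 0
      rw [map_sub, sub_eq_zero]
    rw [Nat.card_congr e]
    have hq : Nat.card (ZMod (2 * k) ⧸ g.ker) = m := by
      rw [Nat.card_congr (QuotientAddGroup.quotientKerEquivOfSurjective g hsurj).toEquiv,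
        Nat.card_zmod]
    have := AddSubgroup.card_eq_card_quotient_mul_card_addSubgroup g.ker
    rw [hq, hcard] at this
    exact (Nat.div_eq_of_eq_mul_right hmpos this).symm
  · refine ⟨⟨Equiv.addRight 1, ?_⟩, fun v => rfl⟩
    intro v w
    constructor
    · intro h
      simpa using aux_adj_shift k l j (-1) _ _ h
    · exact aux_adj_shift k l j 1 v w
  · intro c c'
    induction c using SimpleGraph.ConnectedComponent.ind with | _ a
    induction c' using SimpleGraph.ConnectedComponent.ind with | _ b
    refine ⟨Equiv.addRight (b - a), aux_S_shift_iff k l j _, ?_⟩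
    intro v hv
    rw [SimpleGraph.ConnectedComponent.eq, hr] at hv ⊢
    rw [Equiv.coe_addRight, map_add, map_sub, hv]
    ring
end

section
/- Let k ≥ 3 and let l be an integer with 1 ≤ l ≤ ⌊(k−1)/2⌋ and 3l ≠ k. Then the elements l, 2l, 2k−l, 2k−2l, k−l, k+l of ℤ/2kℤ are pairwise distinct and nonzero and are exactly the vertices v such that {0, v} is contained in some member of S_{l,2k}; every 2-element subset contained in some member of S_{l,2k} is contained in exactly two members of S_{l,2k}; and S_{l,2k} has exactly 4k members (triangles) and exactly 6k such 2-element subsets (edges), so its Euler characteristic 2k − 6k + 4k equals 0. -/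
/-- `S_{l,2k}`: the union of the difference cycles `(l : l : 2(k−l))` and
`(k−l : k−l : 2l)` on `ℤ/2kℤ`. -/
def Sln (k l : ℕ) : Set (Finset (ZMod (2 * k))) :=
  dc (2 * k) l l ∪ dc (2 * k) (k - l) (k - l)

/-- Nondegeneracy facts used throughout (`x` plays the role of `l`, `h` of `k`). -/
structure Good {R : Type} [CommRing R] (x h : R) : Prop where
  hh : h + h = 0
  x1 : x ≠ 0
  x2 : 2 * x ≠ 0
  x3 : 3 * x ≠ 0
  x4 : 4 * x ≠ 0
  h0 : h ≠ 0
  p1 : h + x ≠ 0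
  p2 : h + 2 * x ≠ 0
  p3 : h + 3 * x ≠ 0

/-- triangles of the first kind -/
def tA {R : Type} [CommRing R] [DecidableEq R] (x : R) (i : R) : Finset R :=
  {i, i + x, i + x + x}

theorem tA_inj {R : Type} [CommRing R] [DecidableEq R] {x : R}
    (x1 : x ≠ 0) (x2 : 2 * x ≠ 0) (x3 : 3 * x ≠ 0) :
    Function.Injective (tA x) := by
  intro i j hij
  have a1 : i ∈ tA x j := by rw [← hij]; simp [tA]
  have a2 : i + x ∈ tA x j := by rw [← hij]; simp [tA]
  have a3 : i + x + x ∈ tA x j := by rw [← hij]; simp [tA]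
  simp only [tA, Finset.mem_insert, Finset.mem_singleton] at a1 a2 a3
  grind

theorem pair_eq {R : Type} [DecidableEq R] {a b c d : R} (h : ({a, b} : Finset R) = {c, d}) :
    (a = c ∧ b = d) ∨ (a = d ∧ b = c) := by
  have h1 : a ∈ ({c, d} : Finset R) := by rw [← h]; simp
  have h2 : b ∈ ({c, d} : Finset R) := by rw [← h]; simp
  have h3 : c ∈ ({a, b} : Finset R) := by rw [h]; simp
  have h4 : d ∈ ({a, b} : Finset R) := by rw [h]; simp
  simp only [Finset.mem_insert, Finset.mem_singleton] at h1 h2 h3 h4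
  grind

section
variable {R : Type} [CommRing R] [DecidableEq R] {x h : R}

theorem Good.m1 (g : Good x h) : h - x ≠ 0 := by
  have := g.p1; have := g.hh; grind
theorem Good.m2 (g : Good x h) : h - 2 * x ≠ 0 := by
  have := g.p2; have := g.hh; grind
theorem Good.m3 (g : Good x h) : h - 3 * x ≠ 0 := by
  have := g.p3; have := g.hh; grind

theorem Good.injA (g : Good x h) : Function.Injective (tA x) := tA_inj g.x1 g.x2 g.x3

theorem Good.injB (g : Good x h) : Function.Injective (tA (h - x)) := by
  apply tA_inj g.m1
  · have := g.x2; have := g.hh; grind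
  · have := g.m3; have := g.hh; grind

theorem Good.disj (g : Good x h) (i j : R) : tA x i ≠ tA (h - x) j := by
  intro hij
  have a1 : i ∈ tA (h - x) j := by rw [← hij]; simp [tA]
  have a2 : i + x ∈ tA (h - x) j := by rw [← hij]; simp [tA]
  have a3 : i + x + x ∈ tA (h - x) j := by rw [← hij]; simp [tA]
  simp only [tA, Finset.mem_insert, Finset.mem_singleton] at a1 a2 a3
  obtain ⟨hh, x1, x2, x3, x4, h0, p1, p2, p3⟩ := id g
  have m1 := g.m1
  have m2 := g.m2
  have m3 := g.m3
  grind

/-- edges -/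
def eE (d i : R) : Finset R := {i, i + d}

theorem eE_inj {d : R} (d2 : 2 * d ≠ 0) : Function.Injective (eE d) := by
  intro i j hij
  have := pair_eq hij
  grind

theorem eE_disj {d d' : R} (d1 : d - d' ≠ 0) (d2 : d + d' ≠ 0) (i j : R) : eE d i ≠ eE d' j := by
  intro hij
  have := pair_eq hij
  grind

/-- the complex -/
def SS (x h : R) : Set (Finset R) := Set.range (tA x) ∪ Set.range (tA (h - x))

theorem edge_iff (g : Good x h) (e : Finset R) :
    (e.card = 2 ∧ ∃ s ∈ SS x h, e ⊆ s) ↔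
      e ∈ Set.range (eE x) ∪ Set.range (eE (2 * x)) ∪ Set.range (eE (h - x)) := by
  have m1 := g.m1
  obtain ⟨hh, x1, x2, x3, x4, h0, p1, p2, p3⟩ := id g
  constructor
  · rintro ⟨hc, s, hs, hes⟩
    obtain ⟨a, b, hab, rfl⟩ := Finset.card_eq_two.mp hc
    have ha : a ∈ s := hes (by simp)
    have hb : b ∈ s := hes (by simp)
    have key : ∀ d c : R, a = c ∧ b = c + d ∨ b = c ∧ a = c + d → {a, b} = eE d c := by
      rintro d c (⟨rfl, rfl⟩ | ⟨rfl, rfl⟩)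
      · rfl
      · exact Finset.pair_comm _ _
    have fin : (∃ c, a = c ∧ b = c + x ∨ b = c ∧ a = c + x) ∨
        (∃ c, a = c ∧ b = c + 2 * x ∨ b = c ∧ a = c + 2 * x) ∨
        (∃ c, a = c ∧ b = c + (h - x) ∨ b = c ∧ a = c + (h - x)) := by
      have : b = a + x ∨ a = b + x ∨ b = a + 2 * x ∨ a = b + 2 * x ∨ b = a + (h - x) ∨
          a = b + (h - x) := by
        rcases hs with ⟨i, rfl⟩ | ⟨i, rfl⟩ <;>
        · simp only [tA, Finset.mem_insert, Finset.mem_singleton] at ha hb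
          grind
      rcases this with r | r | r | r | r | r
      · exact Or.inl ⟨a, Or.inl ⟨rfl, r⟩⟩
      · exact Or.inl ⟨b, Or.inr ⟨rfl, r⟩⟩
      · exact Or.inr (Or.inl ⟨a, Or.inl ⟨rfl, r⟩⟩)
      · exact Or.inr (Or.inl ⟨b, Or.inr ⟨rfl, r⟩⟩)
      · exact Or.inr (Or.inr ⟨a, Or.inl ⟨rfl, r⟩⟩)
      · exact Or.inr (Or.inr ⟨b, Or.inr ⟨rfl, r⟩⟩)
    rcases fin with ⟨c, hc⟩ | ⟨c, hc⟩ | ⟨c, hc⟩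
    · exact Or.inl (Or.inl ⟨c, (key _ _ hc).symm⟩)
    · exact Or.inl (Or.inr ⟨c, (key _ _ hc).symm⟩)
    · exact Or.inr ⟨c, (key _ _ hc).symm⟩
  · have cc : ∀ d i : R, d ≠ 0 → (eE d i).card = 2 := by
      intro d i hd
      apply Finset.card_pair
      grind
    rintro ((⟨i, rfl⟩ | ⟨i, rfl⟩) | ⟨i, rfl⟩)
    · refine ⟨cc _ _ x1, tA x i, Or.inl ⟨i, rfl⟩, ?_⟩
      intro y; simp only [tA, eE, Finset.mem_insert, Finset.mem_singleton]; grind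
    · refine ⟨cc _ _ x2, tA x i, Or.inl ⟨i, rfl⟩, ?_⟩
      intro y; simp only [tA, eE, Finset.mem_insert, Finset.mem_singleton]; grind
    · refine ⟨cc _ _ m1, tA (h - x) i, Or.inr ⟨i, rfl⟩, ?_⟩
      intro y; simp only [tA, eE, Finset.mem_insert, Finset.mem_singleton]; grind

theorem sub_tA (a b d i : R) : ({a, b} : Finset R) ⊆ tA d i ↔
    (a = i ∨ a = i + d ∨ a = i + d + d) ∧ (b = i ∨ b = i + d ∨ b = i + d + d) := by
  simp [tA, Finset.insert_subset_iff]

theorem two_tri (g : Good x h) (e : Finset R)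
    (he : e ∈ Set.range (eE x) ∪ Set.range (eE (2 * x)) ∪ Set.range (eE (h - x))) :
    {s ∈ SS x h | e ⊆ s}.ncard = 2 := by
  have m1 := g.m1
  have m2 := g.m2
  have m3 := g.m3
  obtain ⟨hh, x1, x2, x3, x4, h0, p1, p2, p3⟩ := id g
  rw [Set.ncard_eq_two]
  rcases he with (⟨i, rfl⟩ | ⟨i, rfl⟩) | ⟨i, rfl⟩
  · refine ⟨tA x i, tA x (i - x), fun hc => ?_, ?_⟩
    · have := g.injA hc; grind
    · ext s
      simp only [Set.mem_setOf_eq, Set.mem_insert_iff, Set.mem_singleton_iff, eE]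
      constructor
      · rintro ⟨⟨j, rfl⟩ | ⟨j, rfl⟩, hs⟩ <;> rw [sub_tA] at hs
        · have : j = i ∨ j = i - x := by grind
          rcases this with rfl | rfl <;> simp
        · exfalso; grind
      · rintro (rfl | rfl)
        · exact ⟨Or.inl ⟨_, rfl⟩, by rw [sub_tA]; grind⟩
        · exact ⟨Or.inl ⟨_, rfl⟩, by rw [sub_tA]; grind⟩
  · refine ⟨tA x i, tA (h - x) (i + 2 * x), g.disj _ _, ?_⟩
    · ext s
      simp only [Set.mem_setOf_eq, Set.mem_insert_iff, Set.mem_singleton_iff, eE]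
      constructor
      · rintro ⟨⟨j, rfl⟩ | ⟨j, rfl⟩, hs⟩ <;> rw [sub_tA] at hs
        · have : j = i := by grind
          rw [this]; simp
        · have : j = i + 2 * x := by grind
          rw [this]; simp
      · rintro (rfl | rfl)
        · exact ⟨Or.inl ⟨_, rfl⟩, by rw [sub_tA]; grind⟩
        · exact ⟨Or.inr ⟨_, rfl⟩, by rw [sub_tA]; grind⟩
  · refine ⟨tA (h - x) i, tA (h - x) (i - (h - x)), fun hc => ?_, ?_⟩
    · have := g.injB hc; grind
    · ext s
      simp only [Set.mem_setOf_eq, Set.mem_insert_iff, Set.mem_singleton_iff, eE]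
      constructor
      · rintro ⟨⟨j, rfl⟩ | ⟨j, rfl⟩, hs⟩ <;> rw [sub_tA] at hs
        · exfalso; grind
        · have : j = i ∨ j = i - (h - x) := by grind
          rcases this with rfl | rfl <;> simp
      · rintro (rfl | rfl)
        · exact ⟨Or.inr ⟨_, rfl⟩, by rw [sub_tA]; grind⟩
        · exact ⟨Or.inr ⟨_, rfl⟩, by rw [sub_tA]; grind⟩

theorem ncard_range' [Finite R] {f : R → Finset R} (hf : Function.Injective f) :
    (Set.range f).ncard = Nat.card R := by
  rw [← Set.image_univ, Set.ncard_image_of_injective _ hf, Set.ncard_univ]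

theorem card_tri [Finite R] (g : Good x h) : (SS x h).ncard = 2 * Nat.card R := by
  unfold SS
  rw [Set.ncard_union_eq, ncard_range' g.injA, ncard_range' g.injB]
  · ring
  · rw [Set.disjoint_left]
    rintro _ ⟨i, rfl⟩ ⟨j, hj⟩
    exact g.disj i j hj.symm

theorem card_edge [Finite R] (g : Good x h) :
    {e : Finset R | e.card = 2 ∧ ∃ s ∈ SS x h, e ⊆ s}.ncard = 3 * Nat.card R := by
  have : {e : Finset R | e.card = 2 ∧ ∃ s ∈ SS x h, e ⊆ s} =
      Set.range (eE x) ∪ Set.range (eE (2 * x)) ∪ Set.range (eE (h - x)) := by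
    ext e; exact edge_iff g e
  have m1 := g.m1
  have m2 := g.m2
  have m3 := g.m3
  obtain ⟨hh, x1, x2, x3, x4, h0, p1, p2, p3⟩ := id g
  have i1 : Function.Injective (eE x) := eE_inj x2
  have i2 : Function.Injective (eE (2 * x)) := eE_inj (by grind)
  have i3 : Function.Injective (eE (h - x)) := eE_inj (by grind)
  rw [this, Set.ncard_union_eq, Set.ncard_union_eq, ncard_range' i1, ncard_range' i2,
    ncard_range' i3]
  · ring
  · rw [Set.disjoint_left]
    rintro _ ⟨i, rfl⟩ ⟨j, hj⟩
    exact eE_disj (by grind) (by grind) _ _ hj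
  · rw [Set.disjoint_left]
    rintro _ (⟨i, rfl⟩ | ⟨i, rfl⟩) ⟨j, hj⟩
    · exact eE_disj (by grind) (by grind) _ _ hj
    · exact eE_disj (by grind) (by grind) _ _ hj

theorem nbr (g : Good x h) (v : R) : (v ≠ 0 ∧ ∃ s ∈ SS x h, 0 ∈ s ∧ v ∈ s) ↔
    v = x ∨ v = 2 * x ∨ v = -x ∨ v = -(2 * x) ∨ v = h - x ∨ v = h + x := by
  have m1 := g.m1
  obtain ⟨hh, x1, x2, x3, x4, h0, p1, p2, p3⟩ := id g
  constructor
  · rintro ⟨hv, s, ⟨i, rfl⟩ | ⟨i, rfl⟩, h1, h2⟩ <;>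
    · simp only [tA, Finset.mem_insert, Finset.mem_singleton] at h1 h2
      grind
  · intro hv
    refine ⟨by grind, ?_⟩
    have A : ∀ i, (0 ∈ tA x i ∧ v ∈ tA x i) → ∃ s ∈ SS x h, 0 ∈ s ∧ v ∈ s :=
      fun i hi => ⟨_, Or.inl ⟨i, rfl⟩, hi⟩
    have B : ∀ i, (0 ∈ tA (h - x) i ∧ v ∈ tA (h - x) i) → ∃ s ∈ SS x h, 0 ∈ s ∧ v ∈ s :=
      fun i hi => ⟨_, Or.inr ⟨i, rfl⟩, hi⟩
    simp only [tA, Finset.mem_insert, Finset.mem_singleton] at A B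
    rcases hv with r | r | r | r | r | r
    · exact A 0 (by grind)
    · exact A 0 (by grind)
    · exact A (-x) (by grind)
    · exact A (-(2 * x)) (by grind)
    · exact B 0 (by grind)
    · exact B (h + x) (by grind)

theorem Vcard (g : Good x h) :
    ({x, 2 * x, -x, -(2 * x), h - x, h + x} : Finset R).card = 6 := by
  have m1 := g.m1
  have m2 := g.m2
  have m3 := g.m3
  obtain ⟨hh, x1, x2, x3, x4, h0, p1, p2, p3⟩ := id g
  rw [Finset.card_insert_of_notMem, Finset.card_insert_of_notMem, Finset.card_insert_of_notMem,
    Finset.card_insert_of_notMem, Finset.card_insert_of_notMem, Finset.card_singleton] <;>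
  · simp only [Finset.mem_insert, Finset.mem_singleton]
    grind
end

theorem cast_ne (n m : ℕ) (h0 : 0 < m) (h1 : m < n) : (m : ZMod n) ≠ 0 := by
  rw [Ne, ZMod.natCast_eq_zero_iff]
  exact fun hd => absurd (Nat.le_of_dvd h0 hd) (by omega)

theorem good_zmod (k l : ℕ) (hk : 3 ≤ k) (hl : 1 ≤ l) (hl2 : 2 * l < k) (h3 : 3 * l ≠ k) :
    Good (l : ZMod (2 * k)) (k : ZMod (2 * k)) := by
  have key := cast_ne (2 * k)
  have hz : (k : ZMod (2 * k)) + k = 0 := by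
    have := ZMod.natCast_self (2 * k)
    push_cast at this
    rw [← this]; ring
  refine ⟨hz, ?_, ?_, ?_, ?_, ?_, ?_, ?_, ?_⟩
  · exact key l (by omega) (by omega)
  · have := key (2 * l) (by omega) (by omega); push_cast at this; exact this
  · have := key (3 * l) (by omega) (by omega); push_cast at this; exact this
  · have := key (4 * l) (by omega) (by omega); push_cast at this; exact this
  · exact key k (by omega) (by omega)
  · have := key (k + l) (by omega) (by omega); push_cast at this; exact this
  · have := key (k + 2 * l) (by omega) (by omega); push_cast at this; exact this
  · rcases Nat.lt_or_ge (3 * l) k with hlt | hge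
    · have := key (k + 3 * l) (by omega) (by omega); push_cast at this; exact this
    · have := key (3 * l - k) (by omega) (by omega)
      rw [Nat.cast_sub hge] at this; push_cast at this
      grind

/-- For `k ≥ 3`, `1 ≤ l ≤ ⌊(k−1)/2⌋` and `3l ≠ k`: the six elements
`l, 2l, 2k−l, 2k−2l, k−l, k+l` of `ℤ/2kℤ` are pairwise distinct, nonzero, and are
exactly the vertices joined to `0` in `S_{l,2k}`; every edge of `S_{l,2k}` lies in
exactly two triangles; `S_{l,2k}` has `4k` triangles and `6k` edges, hence Euler
characteristic `2k − 6k + 4k = 0`. -/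
theorem stmt_10 (k l : ℕ) (hk : 3 ≤ k) (hl : 1 ≤ l) (hl2 : l ≤ (k - 1) / 2)
    (h3 : 3 * l ≠ k) :
    let V : Finset (ZMod (2 * k)) :=
      {(l : ZMod (2 * k)), ((2 * l : ℕ) : ZMod (2 * k)),
       ((2 * k - l : ℕ) : ZMod (2 * k)), ((2 * k - 2 * l : ℕ) : ZMod (2 * k)),
       ((k - l : ℕ) : ZMod (2 * k)), ((k + l : ℕ) : ZMod (2 * k))}
    V.card = 6 ∧ (0 : ZMod (2 * k)) ∉ V ∧
    {v : ZMod (2 * k) | v ≠ 0 ∧ ∃ s ∈ Sln k l, 0 ∈ s ∧ v ∈ s} = ↑V ∧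
    (∀ e : Finset (ZMod (2 * k)), e.card = 2 → (∃ s ∈ Sln k l, e ⊆ s) →
      {s ∈ Sln k l | e ⊆ s}.ncard = 2) ∧
    (Sln k l).ncard = 4 * k ∧
    {e : Finset (ZMod (2 * k)) | e.card = 2 ∧ ∃ s ∈ Sln k l, e ⊆ s}.ncard = 6 * k ∧
    (2 * k : ℤ) - (6 * k : ℤ) + (4 * k : ℤ) = 0 := by
  intro V
  have hlk : 2 * l < k := by omega
  have g := good_zmod k l hk hl hlk h3
  have : NeZero (2 * k) := ⟨by omega⟩
  have hz := g.hh
  have hS : Sln k l = SS (l : ZMod (2 * k)) (k : ZMod (2 * k)) := by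
    unfold Sln dc SS tA
    rw [Nat.cast_sub (by omega : l ≤ k)]
    congr 1 <;> ext s <;> simp only [Set.mem_setOf_eq, Set.mem_range, eq_comm]
  have hV : V = {(l : ZMod (2 * k)), 2 * (l : ZMod (2 * k)), -(l : ZMod (2 * k)),
      -(2 * (l : ZMod (2 * k))), (k : ZMod (2 * k)) - l, (k : ZMod (2 * k)) + l} := by
    have e1 : ((2 * k - l : ℕ) : ZMod (2 * k)) = -l := by
      rw [Nat.cast_sub (by omega)]; push_cast; grind
    have e2 : ((2 * k - 2 * l : ℕ) : ZMod (2 * k)) = -(2 * l) := by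
      rw [Nat.cast_sub (by omega)]; push_cast; grind
    have e3 : ((k - l : ℕ) : ZMod (2 * k)) = k - l := Nat.cast_sub (by omega)
    simp only [V, e1, e2, e3]
    push_cast
    rfl
  have hcard : Nat.card (ZMod (2 * k)) = 2 * k := Nat.card_zmod _
  have hset : {v : ZMod (2 * k) | v ≠ 0 ∧ ∃ s ∈ Sln k l, 0 ∈ s ∧ v ∈ s} = ↑V := by
    ext v
    rw [hS, Set.mem_setOf_eq, nbr g v, hV]
    simp
  refine ⟨?_, ?_, hset, ?_, ?_, ?_, by ring⟩
  · rw [hV]; exact Vcard g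
  · intro h0
    have h1 : (0 : ZMod (2 * k)) ∈ (↑V : Set (ZMod (2 * k))) := h0
    rw [← hset] at h1
    exact h1.1 rfl
  · intro e he hs
    rw [hS] at hs ⊢
    exact two_tri g e ((edge_iff g e).1 ⟨he, hs⟩)
  · rw [hS, card_tri g, hcard]; ring
  · rw [hS, card_edge g, hcard]; ring
end

section
/- Let k ≥ 3 with 3 | k and set l := k/3. Then the difference cycle (2k/3 : 2k/3 : 2k/3) on ℤ/2kℤ contains exactly 2k/3 distinct subsets, S_{k/3,2k} has exactly 8k/3 members and its Euler characteristic (vertices minus edges plus triangles) equals 2k/3; moreover the simple graph on ℤ/2kℤ whose edges are the 2-element subsets contained in some member of S_{k/3,2k} has exactly k/3 connected components, and the injective map ℤ/6ℤ → ℤ/2kℤ, j ↦ (k/3)·j, carries the union of the difference cycles (1 : 1 : 4) and (2 : 2 : 2) on ℤ/6ℤ (the boundary of the octahedron ∂β³) bijectively onto the set of members of S_{k/3,2k} contained in the connected component of 0. -/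
/-- The parametrisation `(r, j) ↦ r + m j` of `ℤ/6mℤ`. -/
def phi (m : ℕ) (r : Fin m) (j : ZMod 6) : ZMod (2 * (3 * m)) :=
  ((r : ℕ) : ZMod (2 * (3 * m))) + (m : ZMod (2 * (3 * m))) * ((j.val : ℕ) : ZMod (2 * (3 * m)))

lemma phi_inj (m : ℕ) {r r' : Fin m} {j j' : ZMod 6} (h : phi m r j = phi m r' j') :
    r = r' ∧ j = j' := by
  have hj := ZMod.val_lt j
  have hj' := ZMod.val_lt j'
  have hr := r.2
  have hr' := r'.2
  have key : ∀ (r j : ℕ), r < m → j < 6 → r + m * j < 2 * (3 * m) := by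
    intro r j hr hj
    have : m * j ≤ m * 5 := Nat.mul_le_mul_left m (by omega)
    omega
  unfold phi at h
  have h2 : (((r : ℕ) + m * j.val : ℕ) : ZMod (2 * (3 * m)))
      = (((r' : ℕ) + m * j'.val : ℕ) : ZMod (2 * (3 * m))) := by
    push_cast; exact h
  rw [ZMod.natCast_eq_natCast_iff'] at h2
  rw [Nat.mod_eq_of_lt (key _ _ hr hj), Nat.mod_eq_of_lt (key _ _ hr' hj')] at h2
  have hrr : (r : ℕ) = r' := by
    have := congrArg (· % m) h2
    simpa [Nat.add_mul_mod_self_left, Nat.mod_eq_of_lt hr, Nat.mod_eq_of_lt hr'] using this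
  refine ⟨Fin.ext hrr, ZMod.val_injective 6 ?_⟩
  have hm : 0 < m := by omega
  have : m * j.val = m * j'.val := by omega
  exact Nat.eq_of_mul_eq_mul_left hm this

lemma phi_surj (m : ℕ) (hm : 0 < m) (v : ZMod (2 * (3 * m))) : ∃ r j, phi m r j = v := by
  have : NeZero (2 * (3 * m)) := ⟨by omega⟩
  have hv := ZMod.val_lt v
  have hq : v.val / m < 6 := by
    rw [Nat.div_lt_iff_lt_mul hm]; omega
  refine ⟨⟨v.val % m, Nat.mod_lt _ hm⟩, ((v.val / m : ℕ) : ZMod 6), ?_⟩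
  unfold phi
  rw [ZMod.val_natCast, Nat.mod_eq_of_lt hq]
  conv_rhs => rw [← ZMod.natCast_zmod_val v, ← Nat.mod_add_div v.val m]
  push_cast
  rfl

lemma phi_add (m : ℕ) (r : Fin m) (j a : ZMod 6) :
    phi m r (j + a) = phi m r j + ((m * a.val : ℕ) : ZMod (2 * (3 * m))) := by
  unfold phi
  rw [ZMod.val_add, add_assoc]
  congr 1
  have : ((m * ((j.val + a.val) % 6) : ℕ) : ZMod (2 * (3 * m)))
      = ((m * j.val + m * a.val : ℕ) : ZMod (2 * (3 * m))) := by
    rw [ZMod.natCast_eq_natCast_iff', ← mul_add]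
    have : 2 * (3 * m) = m * 6 := by ring
    rw [this, Nat.mul_mod_mul_left, Nat.mul_mod_mul_left, Nat.mod_mod]
  push_cast at this ⊢
  exact this

/-- The `m` copies of a family of subsets of `ℤ/6ℤ`. -/
def GG (m : ℕ) (D : Finset (Finset (ZMod 6))) : Set (Finset (ZMod (2 * (3 * m)))) :=
  {s | ∃ r : Fin m, ∃ t ∈ D, s = t.image (phi m r)}

lemma phi_injective (m : ℕ) (r : Fin m) : Function.Injective (phi m r) :=
  fun _ _ h => (phi_inj m h).2

lemma image_phi_inj (m : ℕ) {r r' : Fin m} {t t' : Finset (ZMod 6)} (ht : t.Nonempty)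
    (h : t.image (phi m r) = t'.image (phi m r')) : r = r' ∧ t = t' := by
  obtain ⟨x, hx⟩ := ht
  have h1 : phi m r x ∈ t'.image (phi m r') := h ▸ Finset.mem_image_of_mem _ hx
  obtain ⟨y, _, hy⟩ := Finset.mem_image.1 h1
  have := (phi_inj m hy).1
  subst this
  exact ⟨rfl, Finset.image_injective (phi_injective m _) h⟩

lemma GG_ncard (m : ℕ) (D : Finset (Finset (ZMod 6))) (hD : ∀ t ∈ D, t.Nonempty) :
    (GG m D).ncard = m * D.card := by
  have : GG m D = (((Finset.univ : Finset (Fin m)) ×ˢ D).image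
      (fun p => p.2.image (phi m p.1)) : Finset _) := by
    ext s
    simp only [GG, Set.mem_ofPred_eq, Finset.coe_image, Set.mem_image, Finset.mem_coe,
      Finset.mem_product, Finset.mem_univ, true_and, Prod.exists]
    constructor
    · rintro ⟨r, t, ht, rfl⟩; exact ⟨r, t, ht, rfl⟩
    · rintro ⟨r, t, ht, rfl⟩; exact ⟨r, t, ht, rfl⟩
  rw [this, Set.ncard_coe_finset, Finset.card_image_of_injOn]
  · simp
  · rintro ⟨r, t⟩ h ⟨r', t'⟩ _ e
    simp only [Finset.coe_product, Set.mem_prod, Finset.mem_coe] at h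
    obtain ⟨rfl, rfl⟩ := image_phi_inj m (hD t h.2) e
    rfl

/-- difference cycle in `ℤ/6ℤ` as a finset -/
def D6 (a b : ZMod 6) : Finset (Finset (ZMod 6)) :=
  Finset.univ.image (fun i : ZMod 6 => {i, i + a, i + a + b})

lemma dc_eq_GG (m : ℕ) (hm : 0 < m) (a b : ZMod 6) :
    dc (2 * (3 * m)) (m * a.val) (m * b.val) = GG m (D6 a b) := by
  ext s
  simp only [dc, GG, D6, Set.mem_ofPred_eq, Finset.mem_image, Finset.mem_univ, true_and]
  constructor
  · rintro ⟨i, rfl⟩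
    obtain ⟨r, j, rfl⟩ := phi_surj m hm i
    refine ⟨r, _, ⟨j, rfl⟩, ?_⟩
    simp only [Finset.image_insert, Finset.image_singleton, phi_add]
  · rintro ⟨r, _, ⟨j, rfl⟩, rfl⟩
    refine ⟨phi m r j, ?_⟩
    simp only [Finset.image_insert, Finset.image_singleton, phi_add]

/-- the octahedron -/
def Oct : Finset (Finset (ZMod 6)) := D6 1 1 ∪ D6 2 2

lemma dc6_eq : dc 6 1 1 ∪ dc 6 2 2 = (Oct : Set (Finset (ZMod 6))) := by
  ext s
  simp only [dc, Oct, D6, Set.mem_union, Set.mem_ofPred_eq, Finset.coe_union, Finset.coe_image,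
    Finset.coe_univ, Set.image_univ, Set.mem_range, Nat.cast_one, Nat.cast_ofNat]
  simp only [eq_comm]

lemma Sln_eq (m : ℕ) (hm : 0 < m) : Sln (3 * m) m = GG m Oct := by
  have h1 := dc_eq_GG m hm 1 1
  have h2 := dc_eq_GG m hm 2 2
  have e1 : (1 : ZMod 6).val = 1 := rfl
  have e2 : (2 : ZMod 6).val = 2 := rfl
  rw [e1, mul_one] at h1
  rw [e2] at h2
  have e3 : 3 * m - m = m * 2 := by omega
  unfold Sln
  rw [e3, h1, h2]
  ext s
  simp only [GG, Oct, Set.mem_union, Set.mem_ofPred_eq, Finset.mem_union]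
  constructor
  · rintro (⟨r, t, h, rfl⟩ | ⟨r, t, h, rfl⟩)
    · exact ⟨r, t, Or.inl h, rfl⟩
    · exact ⟨r, t, Or.inr h, rfl⟩
  · rintro ⟨r, t, h | h, rfl⟩
    · exact Or.inl ⟨r, t, h, rfl⟩
    · exact Or.inr ⟨r, t, h, rfl⟩

/-- edges of the octahedron -/
def OctE : Finset (Finset (ZMod 6)) :=
  (Finset.powersetCard 2 (Finset.univ : Finset (ZMod 6))).filter (fun e => ∃ s ∈ Oct, e ⊆ s)

lemma Oct_card : Oct.card = 8 := by decide
lemma OctE_card : OctE.card = 12 := by decide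
lemma D622_card : (D6 2 2).card = 2 := by decide
lemma Oct_nonempty : ∀ t ∈ Oct, t.Nonempty := by decide
lemma D622_nonempty : ∀ t ∈ D6 2 2, t.Nonempty := by decide
lemma OctE_nonempty : ∀ t ∈ OctE, t.Nonempty := by
  intro t ht
  have := (Finset.mem_powersetCard.1 (Finset.mem_filter.1 ht).1).2
  exact Finset.card_pos.1 (by omega)

lemma edges_eq (m : ℕ) :
    {e : Finset (ZMod (2 * (3 * m))) | e.card = 2 ∧ ∃ s ∈ GG m Oct, e ⊆ s} = GG m OctE := by
  ext e
  constructor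
  · rintro ⟨hc, _, ⟨r, t, ht, rfl⟩, hes⟩
    obtain ⟨u, hu, rfl⟩ := Finset.subset_image_iff.1 hes
    rw [Finset.card_image_of_injective _ (phi_injective m r)] at hc
    refine ⟨r, u, ?_, rfl⟩
    exact Finset.mem_filter.2 ⟨Finset.mem_powersetCard.2 ⟨Finset.subset_univ _, hc⟩, t, ht,
      by exact_mod_cast hu⟩
  · rintro ⟨r, u, hu, rfl⟩
    obtain ⟨h1, t, ht, hut⟩ := Finset.mem_filter.1 hu
    refine ⟨?_, _, ⟨r, t, ht, rfl⟩, Finset.image_subset_image hut⟩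
    rw [Finset.card_image_of_injective _ (phi_injective m r)]
    exact (Finset.mem_powersetCard.1 h1).2

lemma adj_same (m : ℕ) {v w : ZMod (2 * (3 * m))} (h : (cGraph _ (GG m Oct)).Adj v w) :
    ∃ r j j', v = phi m r j ∧ w = phi m r j' := by
  simp only [cGraph, SimpleGraph.fromRel_adj] at h
  rcases h.2 with ⟨_, ⟨r, t, _, rfl⟩, hv, hw⟩ | ⟨_, ⟨r, t, _, rfl⟩, hw, hv⟩ <;>
  · obtain ⟨j, _, rfl⟩ := Finset.mem_image.1 hv
    obtain ⟨j', _, rfl⟩ := Finset.mem_image.1 hw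
    exact ⟨r, j, j', rfl, rfl⟩

lemma reach_same (m : ℕ) {v w : ZMod (2 * (3 * m))} (h : (cGraph _ (GG m Oct)).Reachable v w) :
    ∀ r j, v = phi m r j → ∃ j', w = phi m r j' := by
  obtain ⟨p⟩ := h
  induction p with
  | nil => exact fun r j h => ⟨j, h⟩
  | cons ha _ ih =>
    intro r j h
    obtain ⟨r', i, i', e1, e2⟩ := adj_same m ha
    have := (phi_inj m (h.symm.trans e1)).1
    subst this
    exact ih _ _ e2

lemma oct_two : ∀ j j' : ZMod 6, ∃ i, (∃ s ∈ Oct, j ∈ s ∧ i ∈ s) ∧ (∃ s ∈ Oct, i ∈ s ∧ j' ∈ s) := by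
  decide

lemma reach_phi (m : ℕ) (r : Fin m) (j j' : ZMod 6) :
    (cGraph _ (GG m Oct)).Reachable (phi m r j) (phi m r j') := by
  have key : ∀ j j' : ZMod 6, (∃ s ∈ Oct, j ∈ s ∧ j' ∈ s) →
      (cGraph _ (GG m Oct)).Reachable (phi m r j) (phi m r j') := by
    rintro j j' ⟨s, hs, h1, h2⟩
    by_cases e : phi m r j = phi m r j'
    · rw [e]
    · apply SimpleGraph.Adj.reachable
      simp only [cGraph, SimpleGraph.fromRel_adj]
      exact ⟨e, Or.inl ⟨_, ⟨r, s, hs, rfl⟩, Finset.mem_image_of_mem _ h1,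
        Finset.mem_image_of_mem _ h2⟩⟩
  obtain ⟨i, h1, h2⟩ := oct_two j j'
  exact (key _ _ h1).trans (key _ _ h2)

lemma card_comp (m : ℕ) (hm : 0 < m) :
    Nat.card (cGraph _ (GG m Oct)).ConnectedComponent = m := by
  have hb : Function.Bijective
      (fun r : Fin m => (cGraph _ (GG m Oct)).connectedComponentMk (phi m r 0)) := by
    constructor
    · intro r r' h
      have h := SimpleGraph.ConnectedComponent.exact h
      obtain ⟨j', e⟩ := reach_same m h r 0 rfl
      exact ((phi_inj m e).1).symm
    · intro c
      induction c using SimpleGraph.ConnectedComponent.ind with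
      | _ v =>
        obtain ⟨r, j, rfl⟩ := phi_surj m hm v
        exact ⟨r, SimpleGraph.ConnectedComponent.sound (reach_phi m r 0 j)⟩
  rw [← Nat.card_eq_of_bijective _ hb, Nat.card_fin]

theorem stmt_11 (k : ℕ) (hk : 3 ≤ k) (h3 : 3 ∣ k) :
    (dc (2 * k) (2 * k / 3) (2 * k / 3)).ncard = 2 * k / 3 ∧
    (Sln k (k / 3)).ncard = 8 * k / 3 ∧
    (2 * k : ℤ) -
      ({e : Finset (ZMod (2 * k)) | e.card = 2 ∧ ∃ s ∈ Sln k (k / 3), e ⊆ s}.ncard : ℤ)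
      + ((Sln k (k / 3)).ncard : ℤ) = ((2 * k / 3 : ℕ) : ℤ) ∧
    Nat.card (cGraph (2 * k) (Sln k (k / 3))).ConnectedComponent = k / 3 ∧
    Function.Injective
      (fun j : ZMod 6 => ((k / 3 : ℕ) : ZMod (2 * k)) * (j.val : ZMod (2 * k))) ∧
    Set.BijOn
      (fun s : Finset (ZMod 6) =>
        s.image (fun j => ((k / 3 : ℕ) : ZMod (2 * k)) * (j.val : ZMod (2 * k))))
      (dc 6 1 1 ∪ dc 6 2 2)
      {s | s ∈ Sln k (k / 3) ∧
        ∀ v ∈ s, (cGraph (2 * k) (Sln k (k / 3))).Reachable v 0} := by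
  obtain ⟨m, rfl⟩ := h3
  have hm : 0 < m := by omega
  have e1 : 3 * m / 3 = m := by omega
  have e2 : 2 * (3 * m) / 3 = m * 2 := by omega
  have e3 : 8 * (3 * m) / 3 = m * 8 := by omega
  have hphi : (fun j : ZMod 6 => ((m : ℕ) : ZMod (2 * (3 * m))) * (j.val : ZMod (2 * (3 * m))))
      = phi m ⟨0, hm⟩ := by
    funext j
    simp [phi]
  have h0 : (0 : ZMod (2 * (3 * m))) = phi m ⟨0, hm⟩ 0 := by simp [phi]
  have h22 : dc (2 * (3 * m)) (m * 2) (m * 2) = GG m (D6 2 2) := dc_eq_GG m hm 2 2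
  rw [e1, e2, e3, Sln_eq m hm, hphi, edges_eq, h22, dc6_eq, GG_ncard m _ D622_nonempty,
    GG_ncard m _ Oct_nonempty, GG_ncard m _ OctE_nonempty, Oct_card, OctE_card, D622_card]
  refine ⟨rfl, rfl, by push_cast; ring, card_comp m hm, phi_injective m _, ?_, ?_, ?_⟩
  · intro t ht
    refine ⟨⟨_, t, ht, rfl⟩, ?_⟩
    intro v hv
    obtain ⟨j, _, rfl⟩ := Finset.mem_image.1 hv
    rw [h0]
    exact reach_phi m _ _ _
  · intro t _ t' _ h
    exact Finset.image_injective (phi_injective m _) h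
  · rintro _ ⟨⟨r, t, ht, rfl⟩, hv⟩
    obtain ⟨x, hx⟩ := Oct_nonempty t ht
    obtain ⟨j', e⟩ := reach_same m (hv _ (Finset.mem_image_of_mem _ hx)) r x rfl
    rw [h0] at e
    have := (phi_inj m e).1
    subst this
    exact ⟨t, ht, rfl⟩
end

section
/- Let k ≥ 3, let l be an integer with 1 ≤ l ≤ ⌊(k−1)/2⌋ and 3l ≠ k, and set n := gcd(l, k). Then S_{l,2k} has exactly n connected components, each with 2k/n vertices, and there exists λ ∈ {l, k−l} such that the map ℤ/(2k/n)ℤ → ℤ/2kℤ, j ↦ λ·j, is injective and carries the complex A₆(2k/n), defined as the union of the difference cycles (1 : 1 : 2k/n − 2) and (2 : k/n − 1 : k/n − 1) on ℤ/(2k/n)ℤ, bijectively onto the set of members of S_{l,2k} contained in the connected component of 0; in particular S_{l,2k} is isomorphic to n disjoint copies of A₆(2k/n). -/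
/-- Lutz's series: `A₆(n) = (1 : 1 : n−2) ∪ (2 : n/2−1 : n/2−1)` on `ℤ/nℤ`
(for even `n`, i.e. `n = 2k/m`, the second cycle is `(2 : k/m−1 : k/m−1)`). -/
def A6 (n : ℕ) : Set (Finset (ZMod n)) := dc n 1 1 ∪ dc n 2 (n / 2 - 1)

theorem core_aux (k l n m t : ℕ) (hk : 3 ≤ k) (hlk : l < k) (hkm : k = n * m)
    (hln : l = n * (2 * t + 1)) (hco : Nat.Coprime (2 * t + 1) m) :
    Nat.card (cGraph (2 * k) (Sln k l)).ConnectedComponent = n ∧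
    (∀ c : (cGraph (2 * k) (Sln k l)).ConnectedComponent,
      Nat.card {v : ZMod (2 * k) //
        (cGraph (2 * k) (Sln k l)).connectedComponentMk v = c} = 2 * m) ∧
    (Function.Injective
        (fun j : ZMod (2 * m) => (l : ZMod (2 * k)) * (j.val : ZMod (2 * k))) ∧
      Set.BijOn
        (fun s : Finset (ZMod (2 * m)) =>
          s.image (fun j => (l : ZMod (2 * k)) * (j.val : ZMod (2 * k))))
        (A6 (2 * m))
        {s | s ∈ Sln k l ∧ ∀ v ∈ s, (cGraph (2 * k) (Sln k l)).Reachable v 0}) ∧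
    (∀ c : (cGraph (2 * k) (Sln k l)).ConnectedComponent,
      ∃ f : ZMod (2 * m) → ZMod (2 * k), Function.Injective f ∧
        Set.BijOn (fun s : Finset (ZMod (2 * m)) => s.image f)
          (A6 (2 * m))
          {s | s ∈ Sln k l ∧
            ∀ v ∈ s, (cGraph (2 * k) (Sln k l)).connectedComponentMk v = c}) := by
  have hn0 : 0 < n := by
    rcases Nat.eq_zero_or_pos n with h | h
    · subst h; omega
    · exact h
  have hm0 : 0 < m := by
    rcases Nat.eq_zero_or_pos m with h | h
    · subst h; omega
    · exact h
  have : NeZero (2 * k) := ⟨by omega⟩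
  have : NeZero (2 * m) := ⟨by omega⟩
  have hN0 : (2 : ZMod (2 * k)) * (k : ZMod (2 * k)) = 0 := by
    have := ZMod.natCast_self (2 * k)
    push_cast at this
    exact this
  have hlm : (l : ZMod (2 * k)) * (m : ZMod (2 * k)) = k := by
    have h1 : l * m = 2 * k * t + k := by rw [hln, hkm]; ring
    have h2 : ((l * m : ℕ) : ZMod (2 * k)) = ((2 * k * t + k : ℕ) : ZMod (2 * k)) := by rw [h1]
    push_cast at h2
    rw [hN0] at h2
    simpa using h2
  -- the homomorphism
  obtain ⟨g, hg⟩ : ∃ g : ZMod (2 * m) →+ ZMod (2 * k), ∀ x : ℕ, g (x : ZMod (2 * m)) = l * x := by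
    refine ⟨ZMod.lift (2 * m) ⟨AddMonoidHom.mulLeft (l : ZMod (2 * k)) |>.comp
      (Int.castAddHom (ZMod (2 * k))), ?_⟩, ?_⟩
    · simp only [AddMonoidHom.comp_apply, AddMonoidHom.coe_mulLeft, Int.coe_castAddHom]
      push_cast
      linear_combination 2 * hlm + hN0
    · intro x
      have := ZMod.lift_coe (2 * m) ⟨AddMonoidHom.mulLeft (l : ZMod (2 * k)) |>.comp
        (Int.castAddHom (ZMod (2 * k))), by
          simp only [AddMonoidHom.comp_apply, AddMonoidHom.coe_mulLeft, Int.coe_castAddHom]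
          push_cast
          linear_combination 2 * hlm + hN0⟩ (x : ℤ)
      simpa using this
  have hgv : ∀ j : ZMod (2 * m), (l : ZMod (2 * k)) * (j.val : ZMod (2 * k)) = g j := by
    intro j
    rw [← hg, ZMod.natCast_zmod_val]
  have hinj : Function.Injective g := by
    rw [injective_iff_map_eq_zero]
    intro j hj
    rw [← hgv] at hj
    have h1 : ((l * j.val : ℕ) : ZMod (2 * k)) = 0 := by push_cast; exact hj
    rw [ZMod.natCast_eq_zero_iff] at h1
    have h2 : n * (2 * m) ∣ n * ((2 * t + 1) * j.val) := by
      have e1 : n * (2 * m) = 2 * k := by rw [hkm]; ring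
      have e2 : n * ((2 * t + 1) * j.val) = l * j.val := by rw [hln]; ring
      rw [e1, e2]; exact h1
    have h3 := Nat.dvd_of_mul_dvd_mul_left hn0 h2
    have h4 : Nat.Coprime (2 * m) (2 * t + 1) := by
      apply Nat.Coprime.mul_left
      · simp
      · exact hco.symm
    have h5 := h4.dvd_of_dvd_mul_left h3
    rw [← ZMod.natCast_zmod_val j]
    exact (ZMod.natCast_eq_zero_iff _ _).2 h5
  have hg1 : g 1 = l := by have := hg 1; simpa using this
  have hg2 : g 2 = 2 * l := by have := hg 2; push_cast at this; rw [this]; ring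
  have hkl : ((k - l : ℕ) : ZMod (2 * k)) = k - l := by rw [Nat.cast_sub hlk.le]
  have hgm : g ((m - 1 : ℕ) : ZMod (2 * m)) = k - l := by
    rw [hg, Nat.cast_sub hm0]; push_cast; linear_combination hlm
  have hdiv : 2 * m / 2 - 1 = m - 1 := by omega
  have hA : ∀ s : Finset (ZMod (2 * m)), s ∈ A6 (2 * m) ↔
      (∃ i, s = {i, i + 1, i + 1 + 1}) ∨
      (∃ i, s = {i, i + 2, i + 2 + ((m - 1 : ℕ) : ZMod (2 * m))}) := by
    intro s
    simp [A6, dc, hdiv]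
  have hS : ∀ s : Finset (ZMod (2 * k)), s ∈ Sln k l ↔
      (∃ i, s = {i, i + (l : ZMod (2 * k)), i + l + l}) ∨
      (∃ i, s = {i, i + 2 * (l : ZMod (2 * k)), i + 2 * l + (k - l)}) := by
    intro s
    simp only [Sln, dc, Set.mem_union, Set.mem_setOf_eq, hkl]
    refine or_congr Iff.rfl ⟨?_, ?_⟩
    · rintro ⟨i, rfl⟩
      refine ⟨i - 2 * l, ?_⟩
      have e1 : i + ((k : ZMod (2 * k)) - l) + (k - l) = i - 2 * l := by linear_combination hN0
      have e2 : i - 2 * (l : ZMod (2 * k)) + 2 * l = i := by ring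
      rw [e1, e2]
      ext x; simp only [Finset.mem_insert, Finset.mem_singleton]; tauto
    · rintro ⟨i, rfl⟩
      refine ⟨i + 2 * l, ?_⟩
      have e1 : i + 2 * (l : ZMod (2 * k)) + ((k : ZMod (2 * k)) - l) + (k - l) = i := by
        linear_combination hN0
      rw [e1]
      ext x; simp only [Finset.mem_insert, Finset.mem_singleton]; tauto
  -- every triangle is a translate of an image
  have hH1 : (l : ZMod (2 * k)) ∈ g.range := ⟨1, hg1⟩
  have hH2 : (k : ZMod (2 * k)) - l ∈ g.range := ⟨_, hgm⟩
  have hH3 : 2 * (l : ZMod (2 * k)) ∈ g.range := ⟨2, hg2⟩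
  have hbase : ∀ s ∈ Sln k l, ∃ i : ZMod (2 * k), ∀ v ∈ s, v - i ∈ g.range := by
    intro s hs
    rcases (hS s).1 hs with ⟨i, rfl⟩ | ⟨i, rfl⟩
    · refine ⟨i, fun v hv => ?_⟩
      simp only [Finset.mem_insert, Finset.mem_singleton] at hv
      rcases hv with rfl | rfl | rfl
      · simp
      · simpa using hH1
      · have := g.range.add_mem hH1 hH1
        convert this using 1; ring
    · refine ⟨i, fun v hv => ?_⟩
      simp only [Finset.mem_insert, Finset.mem_singleton] at hv
      rcases hv with rfl | rfl | rfl
      · simp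
      · simpa using hH3
      · have := g.range.add_mem hH3 hH2
        convert this using 1; ring
  set G := cGraph (2 * k) (Sln k l) with hG
  have hadj : ∀ v w, G.Adj v w → v - w ∈ g.range := by
    intro v w h
    have key : ∀ v w, (∃ s ∈ Sln k l, v ∈ s ∧ w ∈ s) → v - w ∈ g.range := by
      rintro v w ⟨s, hs, hv, hw⟩
      obtain ⟨i, hi⟩ := hbase s hs
      have := g.range.sub_mem (hi v hv) (hi w hw)
      simpa using this
    rw [hG, cGraph, SimpleGraph.fromRel_adj] at h
    rcases h.2 with h | h
    · exact key _ _ h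
    · have := g.range.neg_mem (key _ _ h)
      simpa using this
  have hstep : ∀ v, G.Reachable v (v + l) := by
    intro v
    by_cases hv : v = v + l
    · rw [← hv]
    · apply SimpleGraph.Adj.reachable
      rw [hG, cGraph, SimpleGraph.fromRel_adj]
      refine ⟨hv, Or.inl ⟨_, (hS _).2 (Or.inl ⟨v, rfl⟩), ?_, ?_⟩⟩ <;> simp
  have hreach : ∀ v w, G.Reachable v w ↔ v - w ∈ g.range := by
    intro v w
    constructor
    · rintro ⟨p⟩
      induction p with
      | nil => simp
      | cons h p ih =>
        have := g.range.add_mem (hadj _ _ h) ih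
        simpa using this
    · rintro ⟨j, hj⟩
      rw [← hgv] at hj
      have : ∀ x : ℕ, G.Reachable w (w + l * x) := by
        intro x
        induction x with
        | zero => simp
        | succ x ih =>
          have h := ih.trans (hstep _)
          convert h using 1
          push_cast; ring
      have h := this j.val
      rw [hj] at h
      simpa using h.symm
  have hcc : ∀ v w, G.connectedComponentMk v = G.connectedComponentMk w ↔ v - w ∈ g.range := by
    intro v w
    rw [SimpleGraph.ConnectedComponent.eq, hreach]
  have hcardR : Nat.card g.range = 2 * m := by
    rw [← Nat.card_congr (AddMonoidHom.ofInjective hinj).toEquiv, Nat.card_zmod]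
  have hbij : ∀ a : ZMod (2 * k), Function.Injective (fun j => a + g j) ∧
      Set.BijOn (fun s : Finset (ZMod (2 * m)) => s.image (fun j => a + g j))
        (A6 (2 * m)) {s | s ∈ Sln k l ∧ ∀ v ∈ s, v - a ∈ g.range} := by
    intro a
    have hi : Function.Injective (fun j => a + g j) := fun x y h => hinj (add_left_cancel h)
    have im1 : ∀ i : ZMod (2 * m), Finset.image (fun j => a + g j) {i, i + 1, i + 1 + 1}
        = {a + g i, a + g i + l, a + g i + l + l} := by
      intro i
      simp only [Finset.image_insert, Finset.image_singleton, map_add, hg1, add_assoc]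
    have im2 : ∀ i : ZMod (2 * m), Finset.image (fun j => a + g j)
          {i, i + 2, i + 2 + ((m - 1 : ℕ) : ZMod (2 * m))}
        = {a + g i, a + g i + 2 * l, a + g i + 2 * l + (k - l)} := by
      intro i
      simp only [Finset.image_insert, Finset.image_singleton, map_add, hg2, hgm, add_assoc]
    refine ⟨hi, ?_, (Finset.image_injective hi).injOn, ?_⟩
    · intro s hs
      refine ⟨?_, ?_⟩
      · rw [hS]
        rcases (hA s).1 hs with ⟨i, rfl⟩ | ⟨i, rfl⟩
        · exact Or.inl ⟨_, im1 i⟩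
        · exact Or.inr ⟨_, im2 i⟩
      · intro v hv
        obtain ⟨j, -, rfl⟩ := Finset.mem_image.1 hv
        exact ⟨j, by simp⟩
    · rintro s ⟨hs, hv⟩
      rcases (hS s).1 hs with ⟨i, rfl⟩ | ⟨i, rfl⟩
      · obtain ⟨j, hj⟩ := hv i (by simp)
        refine ⟨_, (hA _).2 (Or.inl ⟨j, rfl⟩), ?_⟩
        have e : a + g j = i := by rw [hj]; ring
        simp only [im1, e]
      · obtain ⟨j, hj⟩ := hv i (by simp)
        refine ⟨_, (hA _).2 (Or.inr ⟨j, rfl⟩), ?_⟩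
        have e : a + g j = i := by rw [hj]; ring
        simp only [im2, e]
  refine ⟨?_, ?_, ?_, ?_⟩
  · have e : G.ConnectedComponent ≃ (ZMod (2 * k) ⧸ g.range) := by
      refine Quot.congr (Equiv.refl _) ?_
      intro v w
      rw [hreach]
      simp only [Equiv.refl_apply]
      rw [← g.range.neg_mem_iff]
      have e1 : -(v - w) = -v + w := by ring
      rw [e1]
      exact QuotientAddGroup.leftRel_apply.symm
    rw [Nat.card_congr e]
    have h := AddSubgroup.card_eq_card_quotient_mul_card_addSubgroup g.range
    rw [hcardR, Nat.card_zmod] at h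
    have h2 : n * (2 * m) = Nat.card (ZMod (2 * k) ⧸ g.range) * (2 * m) := by
      rw [← h, hkm]; ring
    exact (Nat.eq_of_mul_eq_mul_right (by omega) h2).symm
  · intro c
    induction c using SimpleGraph.ConnectedComponent.ind with
    | h a =>
    rw [← hcardR]
    refine Nat.card_congr ((Equiv.subRight a).subtypeEquiv ?_)
    intro v
    rw [hcc]; rfl
  · simp only [hgv, hreach]
    have := hbij 0
    simpa only [zero_add] using this
  · intro c
    induction c using SimpleGraph.ConnectedComponent.ind with
    | h a =>
    refine ⟨_, (hbij a).1, ?_⟩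
    simp only [hcc]
    exact (hbij a).2

/-- For `k ≥ 3`, `1 ≤ l ≤ ⌊(k−1)/2⌋`, `3l ≠ k` and `n = gcd(l, k)`: `S_{l,2k}` has
exactly `n` connected components with `2k/n` vertices each; for some `λ ∈ {l, k−l}`
the injective map `j ↦ λ·j` carries `A₆(2k/n)` bijectively onto the triangles of the
component of `0`; and every component is an injective image of `A₆(2k/n)`, so
`S_{l,2k}` is isomorphic to `n` disjoint copies of `A₆(2k/n)`. -/
theorem stmt_12 (k l n : ℕ) (hk : 3 ≤ k) (hl : 1 ≤ l) (hl2 : l ≤ (k - 1) / 2)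
    (h3 : 3 * l ≠ k) (hn : n = Nat.gcd l k) :
    Nat.card (cGraph (2 * k) (Sln k l)).ConnectedComponent = n ∧
    (∀ c : (cGraph (2 * k) (Sln k l)).ConnectedComponent,
      Nat.card {v : ZMod (2 * k) //
        (cGraph (2 * k) (Sln k l)).connectedComponentMk v = c} = 2 * k / n) ∧
    (∃ lam ∈ ({l, k - l} : Set ℕ),
      Function.Injective
        (fun j : ZMod (2 * k / n) => (lam : ZMod (2 * k)) * (j.val : ZMod (2 * k))) ∧
      Set.BijOn
        (fun s : Finset (ZMod (2 * k / n)) =>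
          s.image (fun j => (lam : ZMod (2 * k)) * (j.val : ZMod (2 * k))))
        (A6 (2 * k / n))
        {s | s ∈ Sln k l ∧ ∀ v ∈ s, (cGraph (2 * k) (Sln k l)).Reachable v 0}) ∧
    (∀ c : (cGraph (2 * k) (Sln k l)).ConnectedComponent,
      ∃ f : ZMod (2 * k / n) → ZMod (2 * k), Function.Injective f ∧
        Set.BijOn (fun s : Finset (ZMod (2 * k / n)) => s.image f)
          (A6 (2 * k / n))
          {s | s ∈ Sln k l ∧
            ∀ v ∈ s, (cGraph (2 * k) (Sln k l)).connectedComponentMk v = c}) := by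
  have hlk : 2 * l < k := by omega
  have hn0 : 0 < n := by rw [hn]; exact Nat.gcd_pos_of_pos_left _ hl
  obtain ⟨p, hp⟩ : n ∣ l := hn ▸ Nat.gcd_dvd_left l k
  obtain ⟨m, hm⟩ : n ∣ k := hn ▸ Nat.gcd_dvd_right l k
  have hco : Nat.Coprime p m := by
    have h : n * Nat.gcd p m = n * 1 := by
      rw [← Nat.gcd_mul_left, ← hp, ← hm, ← hn, mul_one]
    exact Nat.eq_of_mul_eq_mul_left hn0 h
  have hM : 2 * k / n = 2 * m := by
    rw [hm, show 2 * (n * m) = n * (2 * m) by ring, Nat.mul_div_cancel_left _ hn0]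
  rw [hM]
  rcases Nat.even_or_odd' p with ⟨t, ht | ht⟩
  · have hpm : p < m := by
      have : n * p < n * m := by rw [← hp, ← hm]; omega
      exact Nat.lt_of_mul_lt_mul_left this
    have hmodd : m % 2 = 1 := by
      by_contra hc
      have h2 : 2 ∣ Nat.gcd p m := Nat.dvd_gcd (by omega) (by omega)
      rw [hco] at h2
      omega
    obtain ⟨q, hq⟩ : ∃ q, m - p = 2 * q + 1 := ⟨(m - p) / 2, by omega⟩
    have hSe : Sln k l = Sln k (k - l) := by
      unfold Sln
      rw [show k - (k - l) = l by omega, Set.union_comm]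
    have hco2 : Nat.Coprime (2 * q + 1) m := by
      rw [← hq]
      exact (Nat.coprime_self_sub_left hpm.le).2 hco
    obtain ⟨h1, h2, h3, h4⟩ := core_aux k (k - l) n m q hk (by omega) hm
      (by rw [← hq, Nat.mul_sub, ← hm, ← hp]) hco2
    rw [hSe]
    exact ⟨h1, h2, ⟨k - l, by simp, h3⟩, h4⟩
  · rw [ht] at hp hco
    obtain ⟨h1, h2, h3, h4⟩ := core_aux k l n m t hk (by omega) hm hp hco
    exact ⟨h1, h2, ⟨l, by simp, h3⟩, h4⟩
end

section
/- For every integer k ≥ 3, the 2-skeleton skel₂(β^k) is the disjoint union of the complexes S_{l,j,2k}, taken over all integer pairs (l, j) with 0 < l < j < 2k − l − j and k ∉ {l, j, l + j}, together with the complexes S_{l,2k}, taken over all integers 1 ≤ l ≤ ⌊(k−1)/2⌋; that is, these complexes are pairwise disjoint and their union is skel₂(β^k). -/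
/-- The parameter range for the pairs `(l, j)`: `0 < l < j < 2k − l − j` and
`k ∉ {l, j, l + j}`. -/
def goodPair (k : ℕ) (p : ℕ × ℕ) : Prop :=
  0 < p.1 ∧ p.1 < p.2 ∧ p.1 + 2 * p.2 < 2 * k ∧ k ≠ p.1 ∧ k ≠ p.2 ∧ k ≠ p.1 + p.2

/-- The parameter range for `l`: `1 ≤ l ≤ ⌊(k−1)/2⌋`. -/
def goodL (k l : ℕ) : Prop := 1 ≤ l ∧ l ≤ (k - 1) / 2

theorem cast_cases {n x y : ℕ} (h : (x : ZMod n) = (y : ZMod n))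
    (h1 : x < y + 2 * n) (h2 : y < x + 2 * n) : x = y ∨ x = y + n ∨ y = x + n := by
  have h3 : ((x : ℤ) : ZMod n) = ((y : ℤ) : ZMod n) := by exact_mod_cast h
  rw [ZMod.intCast_eq_intCast_iff_dvd_sub] at h3
  obtain ⟨t, ht⟩ := h3
  have hn : (0 : ℤ) < n := by omega
  have ht1 : t < 2 := by
    by_contra hc
    have : (n : ℤ) * 2 ≤ n * t := by nlinarith
    omega
  have ht2 : -2 < t := by
    by_contra hc
    have : (n : ℤ) * t ≤ n * (-2) := by nlinarith
    omega
  have : t = -1 ∨ t = 0 ∨ t = 1 := by omega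
  rcases this with rfl | rfl | rfl <;> omega

/-- The same triangle, based at its next vertex. -/
theorem tri_rot {n a b : ℕ} (hab : a + b < n) (i : ZMod n) :
    ({i, i + (a : ZMod n), i + (a : ZMod n) + (b : ZMod n)} : Finset (ZMod n)) =
      {i + (a : ZMod n), i + (a : ZMod n) + (b : ZMod n),
        i + (a : ZMod n) + (b : ZMod n) + ((n - a - b : ℕ) : ZMod n)} := by
  have h : i + (a : ZMod n) + (b : ZMod n) + ((n - a - b : ℕ) : ZMod n) = i := by
    have h1 : (a : ZMod n) + (b : ZMod n) + ((n - a - b : ℕ) : ZMod n) = 0 := by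
      have : a + b + (n - a - b) = n := by omega
      have h2 := congrArg (Nat.cast : ℕ → ZMod n) this
      push_cast at h2
      simpa using h2
    rw [add_assoc i, add_assoc i, h1, add_zero]
  rw [h]
  ext x
  simp only [Finset.mem_insert, Finset.mem_singleton]
  tauto

theorem dc_rot {n a b : ℕ} (hab : a + b < n) : dc n a b ⊆ dc n b (n - a - b) := by
  rintro s ⟨i, rfl⟩
  exact ⟨i + a, tri_rot hab i⟩

theorem tri_same {n a b a' b' : ℕ} (ha : 0 < a) (hb : 0 < b) (hab : a + b < n)
    (ha' : 0 < a') (hb' : 0 < b') (hab' : a' + b' < n) (i : ZMod n)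
    (h : ({i, i + (a : ZMod n), i + (a : ZMod n) + (b : ZMod n)} : Finset (ZMod n)) =
      {i, i + (a' : ZMod n), i + (a' : ZMod n) + (b' : ZMod n)}) : a = a' ∧ b = b' := by
  have key : ∀ x y : ℕ, x < n → y < n → (x : ZMod n) = y → x = y := fun x y hx hy hxy => by
    rcases cast_cases hxy (by omega) (by omega) with h | h | h <;> omega
  have key0 : ∀ x : ℕ, 0 < x → x < n → (x : ZMod n) ≠ 0 := fun x hx hx' hxy => by
    have := key x 0 hx' (by omega) (by simpa using hxy)
    omega
  have e1 : i + (a : ZMod n) ∈ ({i, i + (a' : ZMod n), i + (a' : ZMod n) + (b' : ZMod n)} :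
      Finset (ZMod n)) := by rw [← h]; simp
  have e2 : i + (a : ZMod n) + (b : ZMod n) ∈
      ({i, i + (a' : ZMod n), i + (a' : ZMod n) + (b' : ZMod n)} :
      Finset (ZMod n)) := by rw [← h]; simp
  simp only [Finset.mem_insert, Finset.mem_singleton, add_assoc, add_right_inj,
    add_eq_left] at e1 e2
  norm_cast at e1 e2
  have c1 : a = a' ∨ a = a' + b' := by
    rcases e1 with e | e | e
    · exact absurd (by simpa using e) (key0 a ha (by omega))
    · exact Or.inl (key _ _ (by omega) (by omega) e)
    · exact Or.inr (key _ _ (by omega) (by omega) e)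
  have c2 : a + b = a' ∨ a + b = a' + b' := by
    rcases e2 with e | e | e
    · exact absurd (by simpa using e) (key0 (a + b) (by omega) (by omega))
    · exact Or.inl (key _ _ (by omega) (by omega) e)
    · exact Or.inr (key _ _ (by omega) (by omega) e)
  have c3 : a' = a ∨ a' = a + b := by
    have e3 : i + (a' : ZMod n) ∈ ({i, i + (a : ZMod n), i + (a : ZMod n) + (b : ZMod n)} :
      Finset (ZMod n)) := by rw [h]; simp
    simp only [Finset.mem_insert, Finset.mem_singleton, add_assoc, add_right_inj,
      add_eq_left] at e3
    norm_cast at e3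
    rcases e3 with e | e | e
    · exact absurd (by simpa using e) (key0 a' ha' (by omega))
    · exact Or.inl (key _ _ (by omega) (by omega) e)
    · exact Or.inr (key _ _ (by omega) (by omega) e)
  omega

/-- Two difference cycles sharing a triangle agree up to rotation. -/
theorem dc_common {n a b a' b' : ℕ} (ha : 0 < a) (hb : 0 < b) (hab : a + b < n)
    (ha' : 0 < a') (hb' : 0 < b') (hab' : a' + b' < n) {s : Finset (ZMod n)}
    (h : s ∈ dc n a b) (h' : s ∈ dc n a' b') :
    (a = a' ∧ b = b') ∨ (b = a' ∧ a + b + b' = n) ∨ (a + b + a' = n ∧ a = b') := by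
  obtain ⟨i, hi⟩ := h
  obtain ⟨j, hj⟩ := h'
  have hm : j ∈ s := by rw [hj]; simp
  have r1 := tri_rot hab i
  have r2 := tri_rot (n := n) (a := b) (b := n - a - b) (by omega) (i + a)
  rw [hi] at hm
  simp only [Finset.mem_insert, Finset.mem_singleton] at hm
  rcases hm with rfl | rfl | rfl
  · exact Or.inl (tri_same ha hb hab ha' hb' hab' _ (hi.symm.trans hj))
  · have := tri_same hb (by omega) (by omega) ha' hb' hab' _ (r1.symm.trans (hi.symm.trans hj))
    omega
  · have := tri_same (by omega) (by omega) (by omega) ha' hb' hab' _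
      (r2.symm.trans (r1.symm.trans (hi.symm.trans hj)))
    omega

theorem exists_dc {n : ℕ} (hn : 0 < n) {s : Finset (ZMod n)} (hs : s.card = 3) :
    ∃ a b : ℕ, 0 < a ∧ 0 < b ∧ a + b < n ∧ s ∈ dc n a b := by
  have : NeZero n := ⟨by omega⟩
  obtain ⟨x, y, z, hxy, hxz, hyz, rfl⟩ := Finset.card_eq_three.mp hs
  have main : ∀ y z : ZMod n, x ≠ y → x ≠ z → (y - x).val < (z - x).val →
      ∃ a b : ℕ, 0 < a ∧ 0 < b ∧ a + b < n ∧ ({x, y, z} : Finset (ZMod n)) ∈ dc n a b := by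
    intro y z hxy hxz hlt
    have h1 : 0 < (y - x).val := by
      rw [Nat.pos_iff_ne_zero, Ne, ZMod.val_eq_zero, sub_eq_zero]
      exact fun h => hxy h.symm
    have h2 := ZMod.val_lt (z - x)
    refine ⟨(y - x).val, (z - x).val - (y - x).val, h1, by omega, by omega, x, ?_⟩
    rw [Nat.cast_sub hlt.le]
    simp
  rcases lt_trichotomy (y - x).val (z - x).val with h | h | h
  · exact main y z hxy hxz h
  · exact absurd (sub_left_injective (ZMod.val_injective n h)) hyz
  · obtain ⟨a, b, h1, h2, h3, h4⟩ := main z y hxz hxy h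
    refine ⟨a, b, h1, h2, h3, ?_⟩
    rwa [Finset.pair_comm y z]

theorem dc_skel {k a b : ℕ} (ha : 0 < a) (hb : 0 < b) (hab : a + b < 2 * k)
    (h1 : a ≠ k) (h2 : b ≠ k) (h3 : a + b ≠ k) : dc (2 * k) a b ⊆ skel2 k := by
  rintro s ⟨i, rfl⟩
  have key : ∀ x y : ℕ, x < 4 * k → y < 4 * k → (x : ZMod (2 * k)) = y →
      x = y ∨ x = y + 2 * k ∨ y = x + 2 * k := fun x y hx hy hxy =>
    cast_cases hxy (by omega) (by omega)
  constructor
  · rw [Finset.card_eq_three]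
    refine ⟨_, _, _, ?_, ?_, ?_, rfl⟩
    · intro h
      have := key a 0 (by omega) (by omega) (by simpa using h)
      omega
    · intro h
      have := key (a + b) 0 (by omega) (by omega) (by simpa [add_assoc] using h)
      omega
    · intro h
      have := key b 0 (by omega) (by omega) (by simpa [add_assoc] using h)
      omega
  · rintro x ⟨hx, hy⟩
    have : ∃ u : ℕ, (u = 0 ∨ u = a ∨ u = a + b) ∧ x = i + (u : ZMod (2 * k)) := by
      simp only [Finset.mem_insert, Finset.mem_singleton] at hx
      rcases hx with h | h | h
      · exact ⟨0, by simp, by simpa using h⟩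
      · exact ⟨a, by simp, h⟩
      · exact ⟨a + b, by simp, by simpa [add_assoc] using h⟩
    obtain ⟨u, hu, hxu⟩ := this
    have : ∃ v : ℕ, (v = 0 ∨ v = a ∨ v = a + b) ∧ x + (k : ZMod (2 * k)) = i + (v : ZMod (2 * k)) := by
      simp only [Finset.mem_insert, Finset.mem_singleton] at hy
      rcases hy with h | h | h
      · exact ⟨0, by simp, by simpa using h⟩
      · exact ⟨a, by simp, h⟩
      · exact ⟨a + b, by simp, by simpa [add_assoc] using h⟩
    obtain ⟨v, hv, hyv⟩ := this
    rw [hxu, add_assoc, add_right_inj] at hyv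
    have := key (u + k) v (by omega) (by omega) (by exact_mod_cast hyv)
    omega

theorem skel_dc {k a b : ℕ} {s : Finset (ZMod (2 * k))} (hs : s ∈ skel2 k)
    (h : s ∈ dc (2 * k) a b) : a ≠ k ∧ b ≠ k ∧ a + b ≠ k := by
  obtain ⟨i, rfl⟩ := h
  refine ⟨?_, ?_, ?_⟩
  · rintro rfl
    exact hs.2 i (by simp)
  · rintro rfl
    exact hs.2 (i + a) (by simp)
  · rintro rfl
    exact hs.2 i (by simp [add_assoc])

theorem cover {k a b : ℕ} (ha : 0 < a) (hb : 0 < b) (hab : a + b < 2 * k)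
    (h1 : a ≠ k) (h2 : b ≠ k) (h3 : a + b ≠ k) {s : Finset (ZMod (2 * k))}
    (hs : s ∈ dc (2 * k) a b) :
    (∃ p, goodPair k p ∧ s ∈ Sljn k p.1 p.2) ∨ ∃ l, goodL k l ∧ s ∈ Sln k l := by
  obtain ⟨c, hc⟩ : ∃ c, c = 2 * k - a - b := ⟨_, rfl⟩
  have s2 : s ∈ dc (2 * k) b c := hc ▸ dc_rot hab hs
  have s3 : s ∈ dc (2 * k) c a := by
    have := dc_rot (by omega) s2
    rwa [show 2 * k - b - c = a by omega] at this
  -- isosceles triangles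
  have iso : ∀ l m, l = m → 0 < l → l < k → 2 * l ≠ k → s ∈ dc (2 * k) l m →
      ∃ l, goodL k l ∧ s ∈ Sln k l := by
    rintro l _ rfl hl hlk hne h
    by_cases hlt : 2 * l < k
    · exact ⟨l, ⟨hl, by omega⟩, Or.inl h⟩
    · refine ⟨k - l, ⟨by omega, by omega⟩, Or.inr ?_⟩
      rwa [show k - (k - l) = l by omega]
  -- scalene triangles, smallest gap first
  have sca : ∀ x y z, x + y + z = 2 * k → 0 < x → x < y → x < z → y ≠ z → x ≠ k → y ≠ k →
      z ≠ k → s ∈ dc (2 * k) x y → ∃ p, goodPair k p ∧ s ∈ Sljn k p.1 p.2 := by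
    intro x y z hsum hx hxy hxz hyz _ _ _ h
    by_cases hlt : y < z
    · exact ⟨(x, y), ⟨hx, hxy, by dsimp only; omega, by dsimp only; omega, by dsimp only; omega,
        by dsimp only; omega⟩, Or.inl h⟩
    · refine ⟨(x, z), ⟨hx, hxz, by dsimp only; omega, by dsimp only; omega, by dsimp only; omega,
        by dsimp only; omega⟩, Or.inr ?_⟩
      dsimp only
      rwa [show 2 * k - x - z = y by omega]
  by_cases e1 : a = b
  · exact Or.inr (iso a b e1 (by omega) (by omega) (by omega) hs)
  by_cases e2 : b = c
  · exact Or.inr (iso b c e2 (by omega) (by omega) (by omega) s2)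
  by_cases e3 : c = a
  · exact Or.inr (iso c a e3 (by omega) (by omega) (by omega) s3)
  left
  by_cases m1 : a < b ∧ a < c
  · exact sca a b c (by omega) (by omega) m1.1 m1.2 e2 h1 h2 (by omega) hs
  by_cases m2 : b < c ∧ b < a
  · exact sca b c a (by omega) (by omega) m2.1 m2.2 e3 h2 (by omega) h1 s2
  · exact sca c a b (by omega) (by omega) (by omega) (by omega) e1 (by omega) h1 h2 s3

/-- For `k ≥ 3`, the 2-skeleton of `β^k` is the disjoint union of the complexes
`S_{l,j,2k}` (over pairs `0 < l < j < 2k−l−j` with `k ∉ {l, j, l+j}`) and `S_{l,2k}`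
(over `1 ≤ l ≤ ⌊(k−1)/2⌋`). -/
theorem stmt_13 (k : ℕ) (hk : 3 ≤ k) :
    (∀ p q : ℕ × ℕ, goodPair k p → goodPair k q → p ≠ q →
      Disjoint (Sljn k p.1 p.2) (Sljn k q.1 q.2)) ∧
    (∀ l l' : ℕ, goodL k l → goodL k l' → l ≠ l' → Disjoint (Sln k l) (Sln k l')) ∧
    (∀ (p : ℕ × ℕ) (l : ℕ), goodPair k p → goodL k l →
      Disjoint (Sljn k p.1 p.2) (Sln k l)) ∧
    skel2 k = (⋃ p ∈ {p : ℕ × ℕ | goodPair k p}, Sljn k p.1 p.2) ∪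
      (⋃ l ∈ {l : ℕ | goodL k l}, Sln k l) := by
  refine ⟨?_, ?_, ?_, ?_⟩
  · rintro ⟨l, j⟩ ⟨l', j'⟩ ⟨p1, p2, p3, p4, p5, p6⟩ ⟨q1, q2, q3, q4, q5, q6⟩ hne
    dsimp only at *
    rw [Ne, Prod.mk.injEq] at hne
    rw [Set.disjoint_left]
    rintro s (h | h) (h' | h') <;>
    · have := dc_common (by omega) (by omega) (by omega) (by omega) (by omega) (by omega) h h'
      omega
  · rintro l l' ⟨p1, p2⟩ ⟨q1, q2⟩ hne
    rw [Set.disjoint_left]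
    rintro s (h | h) (h' | h') <;>
    · have := dc_common (by omega) (by omega) (by omega) (by omega) (by omega) (by omega) h h'
      omega
  · rintro ⟨l, j⟩ l' ⟨p1, p2, p3, p4, p5, p6⟩ ⟨q1, q2⟩
    dsimp only at *
    rw [Set.disjoint_left]
    rintro s (h | h) (h' | h') <;>
    · have := dc_common (by omega) (by omega) (by omega) (by omega) (by omega) (by omega) h h'
      omega
  · apply Set.Subset.antisymm
    · intro s hs
      obtain ⟨a, b, ha, hb, hab, h⟩ := exists_dc (by omega) hs.1
      obtain ⟨h1, h2, h3⟩ := skel_dc hs h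
      rcases cover ha hb hab h1 h2 h3 h with ⟨p, hp, hsp⟩ | ⟨l, hl, hsl⟩
      · exact Or.inl (Set.mem_biUnion (x := p) hp hsp)
      · exact Or.inr (Set.mem_biUnion (x := l) hl hsl)
    · apply Set.union_subset
      · refine Set.iUnion₂_subset ?_
        rintro ⟨l, j⟩ ⟨p1, p2, p3, p4, p5, p6⟩
        dsimp only at *
        exact Set.union_subset
          (dc_skel (by omega) (by omega) (by omega) (by omega) (by omega) (by omega))
          (dc_skel (by omega) (by omega) (by omega) (by omega) (by omega) (by omega))
      · refine Set.iUnion₂_subset ?_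
        rintro l ⟨p1, p2⟩
        exact Set.union_subset
          (dc_skel (by omega) (by omega) (by omega) (by omega) (by omega) (by omega))
          (dc_skel (by omega) (by omega) (by omega) (by omega) (by omega) (by omega))
end

section
/- Let k ≥ 3 with k ≡ 0 (mod 3). Then in the partition of skel₂(β^k) into the complexes S_{l,j,2k} (over pairs 0 < l < j < 2k − l − j with k ∉ {l, j, l + j}) and S_{l,2k} (over 1 ≤ l ≤ ⌊(k−1)/2⌋), the part S_{k/3,2k} has exactly 8k/3 members and has k/3 connected components, each with 6 vertices and 8 triangles, while all other parts number k(k−3)/3 in total and each has exactly 4k members. -/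
/-- The triangle `{i, i+a, i+a+b}`. -/
def triT (n a b : ℕ) (i : ZMod n) : Finset (ZMod n) :=
  {i, i + (a : ZMod n), i + (a : ZMod n) + (b : ZMod n)}

lemma dc_eq_range (n a b : ℕ) : dc n a b = Set.range (triT n a b) := by
  ext s
  simp only [dc, triT, Set.mem_setOf_eq, Set.mem_range]
  exact exists_congr fun i => eq_comm

lemma cast_inj_lt {n x y : ℕ} (hx : x < n) (hy : y < n) :
    ((x : ZMod n) = (y : ZMod n)) ↔ x = y := by
  rw [ZMod.natCast_eq_natCast_iff', Nat.mod_eq_of_lt hx, Nat.mod_eq_of_lt hy]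

lemma triT_rot (n a b c : ℕ) (h : a + b + c = n) (i : ZMod n) :
    triT n a b i = triT n b c (i + a) := by
  have h0 : (a : ZMod n) + b + c = 0 := by
    have : ((a + b + c : ℕ) : ZMod n) = 0 := by rw [h]; simp
    simpa using this
  have h1 : i + (a : ZMod n) + b + c = i := by
    linear_combination h0
  unfold triT
  rw [h1]
  ext x; simp only [Finset.mem_insert, Finset.mem_singleton]; tauto

lemma triT_same {n a b a' b' : ℕ} (i : ZMod n) (ha : 0 < a) (hb : 0 < b) (hab : a + b < n)
    (ha' : 0 < a') (hb' : 0 < b') (hab' : a' + b' < n)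
    (h : triT n a b i = triT n a' b' i) : a' = a ∧ b' = b := by
  have key : ∀ x : ℕ, x < n → ((x = 0 ∨ x = a ∨ x = a + b) ↔ (x = 0 ∨ x = a' ∨ x = a' + b')) := by
    intro x hx
    have := Finset.ext_iff.1 h (i + x)
    simp only [triT, Finset.mem_insert, Finset.mem_singleton, add_assoc, add_eq_left,
      add_right_inj] at this
    rw [← Nat.cast_add, ← Nat.cast_add, cast_inj_lt hx hab, cast_inj_lt hx hab',
      cast_inj_lt hx (by omega), cast_inj_lt hx (by omega), ← Nat.cast_zero,
      cast_inj_lt hx (by omega)] at this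
    exact this
  have k1 := key a (by omega)
  have k2 := key (a + b) (by omega)
  have k3 := key a' (by omega)
  have k4 := key (a' + b') (by omega)
  omega

lemma triT_eq {n a b c a' b' : ℕ} (i i' : ZMod n) (ha : 0 < a) (hb : 0 < b) (hc : 0 < c)
    (hn : a + b + c = n)
    (ha' : 0 < a') (hb' : 0 < b') (hab' : a' + b' < n)
    (h : triT n a b i = triT n a' b' i') :
    (i' = i ∧ a' = a ∧ b' = b) ∨ (i' = i + a ∧ a' = b ∧ b' = c) ∨
      (i' = i + a + b ∧ a' = c ∧ b' = a) := by
  have hm : i' ∈ triT n a b i := by rw [h]; simp [triT]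
  simp only [triT, Finset.mem_insert, Finset.mem_singleton] at hm
  rcases hm with rfl | rfl | rfl
  · exact Or.inl ⟨rfl, triT_same _ ha hb (by omega) ha' hb' hab' h⟩
  · rw [triT_rot n a b c hn] at h
    exact Or.inr (Or.inl ⟨rfl, triT_same _ hb hc (by omega) ha' hb' hab' h⟩)
  · rw [triT_rot n a b c hn, triT_rot n b c a (by omega)] at h
    exact Or.inr (Or.inr ⟨rfl, triT_same _ hc ha (by omega) ha' hb' hab' h⟩)

lemma triT_inj {n a b c : ℕ} (ha : 0 < a) (hb : 0 < b) (hc : 0 < c)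
    (hn : a + b + c = n) (hne : ¬ (a = b ∧ b = c)) : Function.Injective (triT n a b) := by
  intro i i' h
  rcases triT_eq i i' ha hb hc hn ha hb (by omega) h with h | h | h
  · exact h.1.symm
  · omega
  · omega

lemma dc_ncard {n a b c : ℕ} (ha : 0 < a) (hb : 0 < b) (hc : 0 < c)
    (hn : a + b + c = n) (hne : ¬ (a = b ∧ b = c)) : (dc n a b).ncard = n := by
  rw [dc_eq_range, ← Set.image_univ, Set.ncard_image_of_injective _ (triT_inj ha hb hc hn hne),
    Set.ncard_univ, Nat.card_zmod]

lemma dc_disj {n a b c a' b' : ℕ} (ha : 0 < a) (hb : 0 < b) (hc : 0 < c)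
    (hn : a + b + c = n) (ha' : 0 < a') (hb' : 0 < b') (hab' : a' + b' < n)
    (h1 : ¬ (a' = a ∧ b' = b)) (h2 : ¬ (a' = b ∧ b' = c)) (h3 : ¬ (a' = c ∧ b' = a)) :
    Disjoint (dc n a b) (dc n a' b') := by
  rw [dc_eq_range, dc_eq_range, Set.disjoint_left]
  rintro _ ⟨i, rfl⟩ ⟨i', h⟩
  have := triT_eq i i' ha hb hc hn ha' hb' hab' h.symm
  tauto

lemma finite_all {n : ℕ} (hn : 0 < n) (S : Set (Finset (ZMod n))) : S.Finite := by
  haveI : NeZero n := ⟨hn.ne'⟩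
  exact Set.toFinite S

lemma Sljn_ncard {k : ℕ} {p : ℕ × ℕ} (h : goodPair k p) : (Sljn k p.1 p.2).ncard = 4 * k := by
  obtain ⟨h1, h2, h3, h4, h5, h6⟩ := h
  unfold Sljn
  rw [Set.ncard_union_eq _ (finite_all (by omega) _) (finite_all (by omega) _),
    dc_ncard (c := 2 * k - p.1 - p.2) (by omega) (by omega) (by omega) (by omega) (by omega),
    dc_ncard (c := p.2) (by omega) (by omega) (by omega) (by omega) (by omega)]
  · omega
  · apply dc_disj (c := 2 * k - p.1 - p.2) <;> omega

lemma Sln_disj {k l : ℕ} (h : goodL k l) :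
    Disjoint (dc (2 * k) l l) (dc (2 * k) (k - l) (k - l)) := by
  obtain ⟨h1, h2⟩ := h
  apply dc_disj (c := 2 * k - l - l) <;> omega

lemma Sln_ncard {k l : ℕ} (h : goodL k l) (h3 : 3 ∣ k) (hl : l ≠ k / 3) :
    (Sln k l).ncard = 4 * k := by
  have hd := Sln_disj h
  obtain ⟨h1, h2⟩ := h
  unfold Sln
  rw [Set.ncard_union_eq hd (finite_all (by omega) _) (finite_all (by omega) _),
    dc_ncard (c := 2 * k - l - l) (by omega) (by omega) (by omega) (by omega) (by omega),
    dc_ncard (c := 2 * l) (by omega) (by omega) (by omega) (by omega) (by omega)]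
  omega

/-- If `t` runs over multiples of `m`, the triangle `(2m:2m:2m)` depends only on parity. -/
lemma triT_three {n m : ℕ} (hn : n = 6 * m) (i : ZMod n) (t : ℕ) :
    triT n (2 * m) (2 * m) (i + (t * m : ℕ)) = triT n (2 * m) (2 * m) (i + ((t % 2) * m : ℕ)) := by
  induction t using Nat.strong_induction_on with
  | _ t ih =>
    by_cases ht : t < 2
    · rw [Nat.mod_eq_of_lt ht]
    · obtain ⟨s, rfl⟩ : ∃ s, t = s + 2 := ⟨t - 2, by omega⟩
      rw [Nat.add_mod_right, ← ih s (by omega),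
        triT_rot n (2 * m) (2 * m) (2 * m) (by omega) (i + (s * m : ℕ))]
      congr 1
      push_cast
      ring

lemma map_eq_iff {n m : ℕ} (hm : 0 < m) (hn : n = 6 * m) (hd : m ∣ n) (u v : ZMod n) :
    ZMod.castHom hd (ZMod m) v = ZMod.castHom hd (ZMod m) u ↔
      ∃ t : ℕ, t < 6 ∧ v = u + (t * m : ℕ) := by
  haveI : NeZero n := ⟨by omega⟩
  constructor
  · intro h
    have h0 : ZMod.castHom hd (ZMod m) (v - u) = 0 := by rw [map_sub, h, sub_self]
    have h1 : (((v - u).val : ℕ) : ZMod n) = v - u := ZMod.natCast_zmod_val _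
    rw [← h1, map_natCast, ZMod.natCast_eq_zero_iff] at h0
    obtain ⟨t, ht⟩ := h0
    refine ⟨t, ?_, ?_⟩
    · have := ZMod.val_lt (v - u)
      rw [ht, hn, mul_comm m t] at this
      exact lt_of_mul_lt_mul_right this (Nat.zero_le m)
    · rw [mul_comm, ← ht, h1]; ring
  · rintro ⟨t, -, rfl⟩
    rw [map_add, map_natCast]
    simp

lemma cast_mul_inj {n m : ℕ} (hm : 0 < m) (hn : n = 6 * m) {s t : ℕ} (hs : s < 6) (ht : t < 6)
    {u : ZMod n}
    (h : u + ((s * m : ℕ) : ZMod n) = u + (t * m : ℕ)) : s = t := by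
  have h := add_left_cancel h
  rw [cast_inj_lt (by rw [hn]; exact Nat.mul_lt_mul_of_pos_right hs hm)
    (by rw [hn]; exact Nat.mul_lt_mul_of_pos_right ht hm)] at h
  exact Nat.eq_of_mul_eq_mul_right hm h

lemma fiber_ncard {n m : ℕ} (hm : 0 < m) (hn : n = 6 * m) (hd : m ∣ n) (u : ZMod n) :
    {v | ZMod.castHom hd (ZMod m) v = ZMod.castHom hd (ZMod m) u}.ncard = 6 := by
  have : {v | ZMod.castHom hd (ZMod m) v = ZMod.castHom hd (ZMod m) u} =
      (fun t : ℕ => u + ((t * m : ℕ) : ZMod n)) '' (Finset.range 6 : Set ℕ) := by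
    ext v
    rw [Set.mem_setOf_eq, map_eq_iff hm hn]
    simp only [Set.mem_image, Finset.coe_range, Set.mem_Iio]
    exact exists_congr fun t => and_congr_right fun _ => eq_comm
  rw [this, Set.ncard_image_of_injOn, Set.ncard_coe_finset, Finset.card_range]
  intro s hs t ht h
  simp only [Finset.coe_range, Set.mem_Iio] at hs ht
  exact cast_mul_inj hm hn hs ht h

lemma triT_map {n m a b : ℕ} (hd : m ∣ n) (ha : m ∣ a) (hb : m ∣ b) {i v : ZMod n}
    (hv : v ∈ triT n a b i) : ZMod.castHom hd (ZMod m) v = ZMod.castHom hd (ZMod m) i := by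
  have ha' : (a : ZMod m) = 0 := (ZMod.natCast_eq_zero_iff _ _).2 ha
  have hb' : (b : ZMod m) = 0 := (ZMod.natCast_eq_zero_iff _ _).2 hb
  simp only [triT, Finset.mem_insert, Finset.mem_singleton] at hv
  rcases hv with rfl | rfl | rfl
  · rfl
  · rw [map_add, map_natCast, ha', add_zero]
  · rw [map_add, map_add, map_natCast, map_natCast, ha', hb', add_zero, add_zero]

lemma reach_add {n m : ℕ} (S : Set (Finset (ZMod n))) (hS : ∀ i, triT n m m i ∈ S)
    (u : ZMod n) (t : ℕ) : (cGraph n S).Reachable u (u + (t * m : ℕ)) := by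
  induction t with
  | zero => simp
  | succ t ih =>
    refine ih.trans ?_
    by_cases h : u + ((t * m : ℕ) : ZMod n) = u + ((t + 1) * m : ℕ)
    · rw [h]
    · apply SimpleGraph.Adj.reachable
      rw [cGraph, SimpleGraph.fromRel_adj]
      refine ⟨h, Or.inl ⟨_, hS (u + ((t * m : ℕ) : ZMod n)), ?_, ?_⟩⟩
      · simp [triT]
      · simp only [triT, Finset.mem_insert, Finset.mem_singleton]
        right; left; push_cast; ring

lemma comp_iff {n m : ℕ} (hm : 0 < m) (hn : n = 6 * m) (hd : m ∣ n) (u v : ZMod n) :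
    (cGraph n (dc n m m ∪ dc n (2 * m) (2 * m))).connectedComponentMk v =
      (cGraph n (dc n m m ∪ dc n (2 * m) (2 * m))).connectedComponentMk u ↔
    ZMod.castHom hd (ZMod m) v = ZMod.castHom hd (ZMod m) u := by
  rw [SimpleGraph.ConnectedComponent.eq]
  constructor
  · rintro ⟨w⟩
    induction w with
    | nil => rfl
    | cons h _ ih =>
      rw [← ih]
      have key : ∀ x y : ZMod n, (∃ s ∈ dc n m m ∪ dc n (2 * m) (2 * m), x ∈ s ∧ y ∈ s) →
          ZMod.castHom hd (ZMod m) x = ZMod.castHom hd (ZMod m) y := by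
        rintro x y ⟨s, hs, hx, hy⟩
        rw [dc_eq_range, dc_eq_range] at hs
        rcases hs with ⟨i, rfl⟩ | ⟨i, rfl⟩
        · rw [triT_map hd dvd_rfl dvd_rfl hx, triT_map hd dvd_rfl dvd_rfl hy]
        · rw [triT_map hd (Dvd.intro_left _ rfl) (Dvd.intro_left _ rfl) hx,
            triT_map hd (Dvd.intro_left _ rfl) (Dvd.intro_left _ rfl) hy]
      rw [cGraph, SimpleGraph.fromRel_adj] at h
      rcases h with ⟨-, h | h⟩
      · exact key _ _ h
      · exact (key _ _ h).symm
  · intro h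
    rw [map_eq_iff hm hn] at h
    obtain ⟨t, -, rfl⟩ := h
    refine (reach_add _ (fun i => Or.inl ?_) u t).symm
    rw [dc_eq_range]; exact ⟨i, rfl⟩

lemma comp_card {n m : ℕ} (hm : 0 < m) (hn : n = 6 * m) :
    Nat.card (cGraph n (dc n m m ∪ dc n (2 * m) (2 * m))).ConnectedComponent = m := by
  have hd : m ∣ n := ⟨6, by omega⟩
  refine Eq.trans ?_ (Nat.card_zmod m)
  refine Nat.card_congr (Equiv.ofBijective (Quot.lift (ZMod.castHom hd (ZMod m)) ?_) ⟨?_, ?_⟩)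
  · intro a b h
    exact (comp_iff hm hn hd b a).1 (SimpleGraph.ConnectedComponent.eq.2 h)
  · rintro ⟨a⟩ ⟨b⟩ h
    exact (comp_iff hm hn hd b a).2 h
  · intro y
    obtain ⟨x, hx⟩ := ZMod.castHom_surjective hd y
    exact ⟨Quot.mk _ x, hx⟩

lemma three_image_ncard {n m : ℕ} (hm : 0 < m) (hn : n = 6 * m) (hd : m ∣ n) (u : ZMod n) :
    (triT n (2 * m) (2 * m) ''
      {v | ZMod.castHom hd (ZMod m) v = ZMod.castHom hd (ZMod m) u}).ncard = 2 := by
  rw [Set.ncard_eq_two]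
  refine ⟨triT n (2 * m) (2 * m) (u + ((0 * m : ℕ) : ZMod n)),
    triT n (2 * m) (2 * m) (u + ((1 * m : ℕ) : ZMod n)), ?_, ?_⟩
  · intro h
    have := triT_eq (c := 2 * m) _ _ (by omega) (by omega) (by omega) (by omega) (by omega)
      (by omega) (by omega) h
    rcases this with h | h | h
    · have := cast_mul_inj hm hn (by omega) (by omega) h.1
      omega
    · have := cast_mul_inj (s := 1) (t := 2) (u := u) hm hn (by omega) (by omega)
        (by rw [h.1]; push_cast; ring)
      omega
    · have := cast_mul_inj (s := 1) (t := 4) (u := u) hm hn (by omega) (by omega)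
        (by rw [h.1]; push_cast; ring)
      omega
  · ext s
    simp only [Set.mem_image, Set.mem_setOf_eq, map_eq_iff hm hn, Set.mem_insert_iff,
      Set.mem_singleton_iff]
    constructor
    · rintro ⟨_, ⟨t, -, rfl⟩, rfl⟩
      rw [triT_three hn]
      rcases Nat.mod_two_eq_zero_or_one t with h | h <;> rw [h] <;> simp
    · rintro (rfl | rfl)
      · exact ⟨_, ⟨0, by omega, rfl⟩, rfl⟩
      · exact ⟨_, ⟨1, by omega, rfl⟩, rfl⟩

lemma dc_disj_m {n m : ℕ} (hm : 0 < m) (hn : n = 6 * m) :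
    Disjoint (dc n m m) (dc n (2 * m) (2 * m)) := by
  apply dc_disj (c := 4 * m) <;> omega

lemma comp_tri {n m : ℕ} (hm : 0 < m) (hn : n = 6 * m) (hd : m ∣ n) (u : ZMod n) :
    {s | s ∈ dc n m m ∪ dc n (2 * m) (2 * m) ∧
      ∀ v ∈ s, ZMod.castHom hd (ZMod m) v = ZMod.castHom hd (ZMod m) u}.ncard = 8 := by
  have h : {s | s ∈ dc n m m ∪ dc n (2 * m) (2 * m) ∧
      ∀ v ∈ s, ZMod.castHom hd (ZMod m) v = ZMod.castHom hd (ZMod m) u} =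
      triT n m m '' {v | ZMod.castHom hd (ZMod m) v = ZMod.castHom hd (ZMod m) u} ∪
      triT n (2 * m) (2 * m) ''
        {v | ZMod.castHom hd (ZMod m) v = ZMod.castHom hd (ZMod m) u} := by
    ext s
    rw [dc_eq_range, dc_eq_range]
    constructor
    · rintro ⟨⟨i, rfl⟩ | ⟨i, rfl⟩, h⟩
      · exact Or.inl ⟨i, h i (by simp [triT]), rfl⟩
      · exact Or.inr ⟨i, h i (by simp [triT]), rfl⟩
    · rintro (⟨i, h, rfl⟩ | ⟨i, h, rfl⟩)
      · exact ⟨Or.inl ⟨i, rfl⟩, fun v hv => (triT_map hd dvd_rfl dvd_rfl hv).trans h⟩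
      · exact ⟨Or.inr ⟨i, rfl⟩, fun v hv =>
          (triT_map hd (Dvd.intro_left _ rfl) (Dvd.intro_left _ rfl) hv).trans h⟩
  rw [h, Set.ncard_union_eq _ (finite_all (by omega) _) (finite_all (by omega) _),
    three_image_ncard hm hn, Set.ncard_image_of_injective, fiber_ncard hm hn]
  · apply triT_inj (c := 4 * m) <;> omega
  · have := dc_disj_m hm hn
    rw [dc_eq_range, dc_eq_range] at this
    exact this.mono (Set.image_subset_range _ _) (Set.image_subset_range _ _)

lemma dc_three_ncard {n m : ℕ} (hm : 0 < m) (hn : n = 6 * m) :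
    (dc n (2 * m) (2 * m)).ncard = 2 * m := by
  haveI : NeZero n := ⟨by omega⟩
  have h : dc n (2 * m) (2 * m) =
      (fun t : ℕ => triT n (2 * m) (2 * m) (t : ZMod n)) '' (Finset.range (2 * m) : Set ℕ) := by
    rw [dc_eq_range]
    ext s
    simp only [Set.mem_range, Set.mem_image, Finset.coe_range, Set.mem_Iio]
    constructor
    · rintro ⟨i, rfl⟩
      refine ⟨i.val % (2 * m), Nat.mod_lt _ (by omega), ?_⟩
      have h1 := triT_three hn ((i.val % (2 * m) : ℕ) : ZMod n) (2 * (i.val / (2 * m)))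
      rw [Nat.mul_mod_right, zero_mul, Nat.cast_zero, add_zero, ← Nat.cast_add] at h1
      rw [← h1]
      congr 1
      have : i.val % (2 * m) + 2 * (i.val / (2 * m)) * m = i.val := by
        have := Nat.mod_add_div i.val (2 * m)
        linarith
      rw [this, ZMod.natCast_zmod_val]
    · rintro ⟨t, -, rfl⟩
      exact ⟨_, rfl⟩
  rw [h, Set.ncard_image_of_injOn, Set.ncard_coe_finset, Finset.card_range]
  intro s hs t ht h
  simp only [Finset.coe_range, Set.mem_Iio] at hs ht
  have := triT_eq (c := 2 * m) _ _ (by omega) (by omega) (by omega) (by omega) (by omega)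
      (by omega) (by omega) h
  rcases this with h | h | h
  · have := h.1
    rw [cast_inj_lt (by omega) (by omega)] at this
    exact this.symm
  · have := h.1
    rw [← Nat.cast_add, cast_inj_lt (by omega) (by omega)] at this
    omega
  · have := h.1
    rw [← Nat.cast_add, ← Nat.cast_add, cast_inj_lt (by omega) (by omega)] at this
    omega

lemma pairs_count {m : ℕ} (hm : 0 < m) :
    {p : ℕ × ℕ | goodPair (3 * m) p}.ncard + ((3 * m - 1) / 2 - 1) =
      3 * m * (3 * m - 3) / 3 := by
  have hdiag : (((Finset.Icc 1 ((3 * m - 1) / 2)).image (fun l => (l, 3 * m - l)) :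
      Finset (ℕ × ℕ))).card = (3 * m - 1) / 2 := by
    rw [Finset.card_image_of_injective, Nat.card_Icc, Nat.add_sub_cancel]
    intro a b h
    exact (Prod.mk.inj h).1
  have hall : ((Finset.Icc 1 (3 * m - 1)).sigma
      (fun j => Finset.Ico 1 (min j (6 * m - 2 * j)))).card = 3 * m * (m - 1) + 1 := by
    rw [Finset.card_sigma]
    simp only [Nat.card_Ico]
    obtain ⟨q, rfl⟩ : ∃ q, m = q + 1 := ⟨m - 1, by omega⟩
    have e : Finset.Icc 1 (3 * (q + 1) - 1) = Finset.Ico 1 (2 * q + 3 + q) := by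
      ext x; simp only [Finset.mem_Icc, Finset.mem_Ico]; omega
    rw [e, ← Finset.sum_Ico_consecutive _ (show 1 ≤ 2 * q + 3 by omega) (by omega)]
    have s1 : ∑ i ∈ Finset.Ico 1 (2 * q + 3), (min i (6 * (q + 1) - 2 * i) - 1) =
        (2 * q + 1) * (q + 1) := by
      have : ∑ i ∈ Finset.Ico 1 (2 * q + 3), (min i (6 * (q + 1) - 2 * i) - 1) =
          ∑ i ∈ Finset.Ico 1 (2 * q + 3), (i - 1) := by
        apply Finset.sum_congr rfl
        intro i hi
        rw [Finset.mem_Ico] at hi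
        omega
      rw [this, Finset.sum_Ico_eq_sum_range]
      have : ∑ k ∈ Finset.range (2 * q + 3 - 1), (1 + k - 1) =
          ∑ k ∈ Finset.range (2 * q + 2), k := by
        apply Finset.sum_congr rfl
        intro i _
        omega
      rw [this, Finset.sum_range_id]
      have : (2 * q + 2) * (2 * q + 2 - 1) = 2 * ((2 * q + 1) * (q + 1)) := by
        rw [show 2 * q + 2 - 1 = 2 * q + 1 by omega]; ring
      rw [this]; simp
    have s2 : ∑ i ∈ Finset.Ico (2 * q + 3) (2 * q + 3 + q), (min i (6 * (q + 1) - 2 * i) - 1) =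
        q * q := by
      have : ∀ r, ∑ k ∈ Finset.range r, (2 * k + 1) = r * r := by
        intro r
        induction r with
        | zero => simp
        | succ r ih => rw [Finset.sum_range_succ, ih]; ring
      rw [Finset.sum_Ico_eq_sum_range, ← this q, Nat.add_sub_cancel_left,
        ← Finset.sum_range_reflect]
      apply Finset.sum_congr rfl
      intro i hi
      rw [Finset.mem_range] at hi
      omega
    rw [s1, s2, Nat.add_sub_cancel]
    ring
  set A : Finset (ℕ × ℕ) := ((Finset.Icc 1 (3 * m - 1)).sigma
      (fun j => Finset.Ico 1 (min j (6 * m - 2 * j)))).image (fun x => (x.2, x.1)) with hA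
  set D : Finset (ℕ × ℕ) := (Finset.Icc 1 ((3 * m - 1) / 2)).image (fun l => (l, 3 * m - l))
    with hD
  have hAc : A.card = 3 * m * (m - 1) + 1 := by
    rw [hA, Finset.card_image_of_injective, hall]
    rintro ⟨a, b⟩ ⟨c, d⟩ h
    have := Prod.mk.inj h
    simp only at this
    obtain ⟨rfl, rfl⟩ := this
    rfl
  have memA : ∀ a b : ℕ, (a, b) ∈ A ↔ 0 < a ∧ a < b ∧ a + 2 * b < 6 * m := by
    intro a b
    simp only [hA, Finset.mem_image, Finset.mem_sigma, Finset.mem_Icc, Finset.mem_Ico,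
      Sigma.exists, Prod.mk.injEq]
    constructor
    · rintro ⟨x, y, h, rfl, rfl⟩
      omega
    · intro h
      exact ⟨b, a, by omega, rfl, rfl⟩
  have memD : ∀ a b : ℕ, (a, b) ∈ D ↔ 0 < a ∧ a < b ∧ a + b = 3 * m := by
    intro a b
    simp only [hD, Finset.mem_image, Finset.mem_Icc, Prod.mk.injEq]
    constructor
    · rintro ⟨x, h, rfl, rfl⟩
      omega
    · intro h
      exact ⟨a, by omega, rfl, by omega⟩
  have hsub : D ⊆ A := by
    rintro ⟨a, b⟩ h
    rw [memD] at h
    rw [memA]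
    omega
  have hset : {p : ℕ × ℕ | goodPair (3 * m) p} = ((A \ D : Finset (ℕ × ℕ)) : Set (ℕ × ℕ)) := by
    ext ⟨a, b⟩
    rw [Finset.mem_coe, Finset.mem_sdiff, memA, memD]
    simp only [Set.mem_setOf_eq, goodPair]
    omega
  have hle := Finset.card_le_card hsub
  rw [hset, Set.ncard_coe_finset, Finset.card_sdiff_of_subset hsub]
  have : 3 * m * (3 * m - 3) / 3 = 3 * m * (m - 1) := by
    rw [show 3 * m - 3 = 3 * (m - 1) by omega,
      show 3 * m * (3 * (m - 1)) = 3 * (3 * m * (m - 1)) by ring]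
    simp
  rw [this]
  omega

/-- For `k ≥ 3` with `3 ∣ k`: in the partition of `skel₂(β^k)`, the part `S_{k/3,2k}`
has `8k/3` triangles and `k/3` connected components, each with `6` vertices and `8`
triangles, while the remaining parts number `k(k−3)/3` in total and each has exactly
`4k` triangles. -/
theorem stmt_15 (k : ℕ) (hk : 3 ≤ k) (h3 : 3 ∣ k) :
    (Sln k (k / 3)).ncard = 8 * k / 3 ∧
    Nat.card (cGraph (2 * k) (Sln k (k / 3))).ConnectedComponent = k / 3 ∧
    (∀ c : (cGraph (2 * k) (Sln k (k / 3))).ConnectedComponent,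
      Nat.card {v : ZMod (2 * k) //
        (cGraph (2 * k) (Sln k (k / 3))).connectedComponentMk v = c} = 6 ∧
      {s | s ∈ Sln k (k / 3) ∧
        ∀ v ∈ s, (cGraph (2 * k) (Sln k (k / 3))).connectedComponentMk v = c}.ncard = 8) ∧
    {p : ℕ × ℕ | goodPair k p}.ncard + ((k - 1) / 2 - 1) = k * (k - 3) / 3 ∧
    (∀ p : ℕ × ℕ, goodPair k p → (Sljn k p.1 p.2).ncard = 4 * k) ∧
    (∀ l : ℕ, goodL k l → l ≠ k / 3 → (Sln k l).ncard = 4 * k) := by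
  obtain ⟨m, rfl⟩ := h3
  have hm : 0 < m := by omega
  have hn : 2 * (3 * m) = 6 * m := by ring
  have hd : m ∣ 2 * (3 * m) := ⟨6, by omega⟩
  have hgen : ∀ l, goodL (3 * m) l → l ≠ 3 * m / 3 → (Sln (3 * m) l).ncard = 4 * (3 * m) :=
    fun l h hl => Sln_ncard h ⟨m, rfl⟩ hl
  refine ⟨?_, ?_, ?_, pairs_count hm, fun p hp => Sljn_ncard hp, hgen⟩
  all_goals
    rw [Nat.mul_div_cancel_left m (by omega : 0 < 3)]
    have hS : Sln (3 * m) m = dc (2 * (3 * m)) m m ∪ dc (2 * (3 * m)) (2 * m) (2 * m) := by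
      unfold Sln
      rw [show 3 * m - m = 2 * m by omega]
    rw [hS]
  · rw [Set.ncard_union_eq (dc_disj_m hm hn) (finite_all (by omega) _) (finite_all (by omega) _),
      dc_three_ncard hm hn,
      dc_ncard (c := 4 * m) (by omega) (by omega) (by omega) (by omega) (by omega)]
    omega
  · exact comp_card hm hn
  · intro c
    induction c using SimpleGraph.ConnectedComponent.ind with
    | _ u =>
      simp only [comp_iff hm hn hd]
      exact ⟨fiber_ncard hm hn hd u, comp_tri hm hn hd u⟩
end

section
/- Let k ≥ 5 with k ≢ 0 (mod 3) and k ≢ 0 (mod 4), let l be an integer with 1 ≤ l ≤ (k−1)/2, and set n := gcd(l, k). Then M_{l,k} has exactly n connected components, each with k/n vertices, and every 2-element subset of the form {i, i+l} contained in some member of M_{l,k} is contained in exactly two members of M_{l,k}, while every 2-element subset of the form {i, i+2l} is contained in exactly one member of M_{l,k} (so M_{l,k} is a bounded surface); its connected components are pairwise combinatorially isomorphic. -/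
/-- `M_{l,k}`: the difference cycle `(l : l : k−2l)` on `ℤ/kℤ`. -/
def Mlk (k l : ℕ) : Set (Finset (ZMod k)) := dc k l l

theorem aux_graph (k l : ℕ) (v w : ZMod k) :
    (cGraph k (Mlk k l)).connectedComponentMk v = (cGraph k (Mlk k l)).connectedComponentMk w ↔
      -v + w ∈ AddSubgroup.zmultiples (l : ZMod k) := by
  rw [SimpleGraph.ConnectedComponent.eq]
  constructor
  · rintro ⟨p⟩
    induction p with
    | nil => simp
    | @cons a b c hab p ih =>
      have hs : ∀ x y : ZMod k, (∃ s ∈ Mlk k l, x ∈ s ∧ y ∈ s) →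
          -x + y ∈ AddSubgroup.zmultiples (l : ZMod k) := by
        rintro x y ⟨s, ⟨i, rfl⟩, hx, hy⟩
        simp only [Finset.mem_insert, Finset.mem_singleton] at hx hy
        rw [AddSubgroup.mem_zmultiples_iff]
        rcases hx with rfl | rfl | rfl <;> rcases hy with rfl | rfl | rfl
        · exact ⟨0, by rw [zsmul_eq_mul]; push_cast; ring⟩
        · exact ⟨1, by rw [zsmul_eq_mul]; push_cast; ring⟩
        · exact ⟨2, by rw [zsmul_eq_mul]; push_cast; ring⟩
        · exact ⟨-1, by rw [zsmul_eq_mul]; push_cast; ring⟩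
        · exact ⟨0, by rw [zsmul_eq_mul]; push_cast; ring⟩
        · exact ⟨1, by rw [zsmul_eq_mul]; push_cast; ring⟩
        · exact ⟨-2, by rw [zsmul_eq_mul]; push_cast; ring⟩
        · exact ⟨-1, by rw [zsmul_eq_mul]; push_cast; ring⟩
        · exact ⟨0, by rw [zsmul_eq_mul]; push_cast; ring⟩
      have hab' : -a + b ∈ AddSubgroup.zmultiples (l : ZMod k) := by
        rw [cGraph, SimpleGraph.fromRel_adj] at hab
        rcases hab.2 with h | h
        · exact hs _ _ h
        · have := neg_mem (hs _ _ h)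
          simpa [add_comm] using this
      have := add_mem hab' ih
      simpa [add_assoc] using this
  · intro h
    rw [AddSubgroup.mem_zmultiples_iff] at h
    obtain ⟨m, hm⟩ := h
    have hw : w = v + m • (l : ZMod k) := by rw [hm]; abel
    have step : ∀ x : ZMod k, (cGraph k (Mlk k l)).Reachable x (x + l) := by
      intro x
      by_cases hx : x = x + (l : ZMod k)
      · rw [← hx]
      · apply SimpleGraph.Adj.reachable
        rw [cGraph, SimpleGraph.fromRel_adj]
        exact ⟨hx, Or.inl ⟨_, ⟨x, rfl⟩, by simp, by simp⟩⟩
    subst hw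
    clear hm
    induction m using Int.induction_on with
    | zero => simp
    | succ m ih =>
      refine ih.trans ?_
      have := step (v + (m : ℤ) • (l : ZMod k))
      rwa [add_assoc, ← add_one_zsmul] at this
    | pred m ih =>
      refine ih.trans (SimpleGraph.Reachable.symm ?_)
      have := step (v + (-(m : ℤ) - 1) • (l : ZMod k))
      rwa [add_assoc, ← add_one_zsmul, sub_add_cancel] at this

theorem aux_ne (k l j : ℕ) (h0 : 0 < j * l) (h1 : j * l < 2 * k) (h2 : j * l ≠ k) :
    (j : ZMod k) * (l : ZMod k) ≠ 0 := by
  rw [← Nat.cast_mul, Ne, ZMod.natCast_eq_zero_iff]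
  rintro ⟨c, hc⟩
  have : c < 2 := by
    by_contra hh
    have : k * 2 ≤ k * c := Nat.mul_le_mul_left k (by omega)
    omega
  interval_cases c <;> omega

/-- For `k ≥ 5` with `3 ∤ k`, `4 ∤ k` and `1 ≤ l ≤ (k−1)/2`, `n = gcd(l, k)`:
`M_{l,k}` has `n` connected components with `k/n` vertices each; each edge `{i, i+l}`
contained in some member lies in exactly two members and each edge `{i, i+2l}`
contained in some member lies in exactly one member (so `M_{l,k}` is a bounded
surface); and the connected components are pairwise combinatorially isomorphic. -/
theorem stmt_16 (k l n : ℕ) (hk : 5 ≤ k) (h3 : ¬ 3 ∣ k) (h4 : ¬ 4 ∣ k)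
    (hl : 1 ≤ l) (hl2 : 2 * l ≤ k - 1) (hn : n = Nat.gcd l k) :
    Nat.card (cGraph k (Mlk k l)).ConnectedComponent = n ∧
    (∀ c : (cGraph k (Mlk k l)).ConnectedComponent,
      Nat.card {v : ZMod k // (cGraph k (Mlk k l)).connectedComponentMk v = c} = k / n) ∧
    (∀ i : ZMod k, (∃ s ∈ Mlk k l, ({i, i + (l : ZMod k)} : Finset (ZMod k)) ⊆ s) →
      {s ∈ Mlk k l | ({i, i + (l : ZMod k)} : Finset (ZMod k)) ⊆ s}.ncard = 2) ∧
    (∀ i : ZMod k, (∃ s ∈ Mlk k l, ({i, i + ((2 * l : ℕ) : ZMod k)} : Finset (ZMod k)) ⊆ s) →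
      {s ∈ Mlk k l | ({i, i + ((2 * l : ℕ) : ZMod k)} : Finset (ZMod k)) ⊆ s}.ncard = 1) ∧
    (∀ c c' : (cGraph k (Mlk k l)).ConnectedComponent,
      ∃ φ : ZMod k ≃ ZMod k,
        (∀ s : Finset (ZMod k), s ∈ Mlk k l ↔ s.image φ ∈ Mlk k l) ∧
        (∀ v : ZMod k, (cGraph k (Mlk k l)).connectedComponentMk v = c →
          (cGraph k (Mlk k l)).connectedComponentMk (φ v) = c')) := by
  have hk0 : NeZero k := ⟨by omega⟩
  have L1 : (l : ZMod k) ≠ 0 := by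
    simpa using aux_ne k l 1 (by omega) (by omega) (by omega)
  have L2 : 2 * (l : ZMod k) ≠ 0 := by
    simpa using aux_ne k l 2 (by omega) (by omega) (by omega)
  have L3 : 3 * (l : ZMod k) ≠ 0 := by
    simpa using aux_ne k l 3 (by omega) (by omega) (by omega)
  have L4 : 4 * (l : ZMod k) ≠ 0 := by
    simpa using aux_ne k l 4 (by omega) (by omega) (by omega)
  have hord : Nat.card (AddSubgroup.zmultiples (l : ZMod k)) = k / n := by
    rw [Nat.card_zmultiples, ZMod.addOrderOf_coe _ (by omega), hn, Nat.gcd_comm]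
  have hnk : n ∣ k := hn ▸ Nat.gcd_dvd_right l k
  have hn0 : 0 < n := Nat.pos_of_dvd_of_pos hnk (by omega)
  refine ⟨?_, ?_, ?_, ?_, ?_⟩
  · have e : (cGraph k (Mlk k l)).ConnectedComponent ≃
        ZMod k ⧸ AddSubgroup.zmultiples (l : ZMod k) := by
      refine Quot.congrRight
        (r' := (QuotientAddGroup.leftRel (AddSubgroup.zmultiples (l : ZMod k))).r) ?_
      intro v w
      rw [← SimpleGraph.ConnectedComponent.eq, aux_graph]
      exact QuotientAddGroup.leftRel_apply.symm
    rw [Nat.card_congr e]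
    have h := AddSubgroup.card_eq_card_quotient_mul_card_addSubgroup
      (AddSubgroup.zmultiples (l : ZMod k))
    rw [hord, Nat.card_zmod] at h
    have hpos : 0 < k / n := Nat.div_pos (Nat.le_of_dvd (by omega) hnk) hn0
    have h' : n * (k / n) = k := Nat.mul_div_cancel' hnk
    exact Nat.eq_of_mul_eq_mul_right hpos (by rw [← h, h'])
  · intro c
    induction c using SimpleGraph.ConnectedComponent.ind with
    | _ u =>
      rw [← hord]
      refine Nat.card_congr ((Equiv.addLeft (-u)).subtypeEquiv ?_)
      intro v
      rw [eq_comm, aux_graph]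
      rfl
  · rintro i -
    have : {s ∈ Mlk k l | ({i, i + (l : ZMod k)} : Finset (ZMod k)) ⊆ s} =
        {({i, i + (l : ZMod k), i + l + l} : Finset (ZMod k)), {i - l, i - l + l, i - l + l + l}} := by
      ext s
      simp only [Set.mem_ofPred_eq, Set.mem_insert_iff, Set.mem_singleton_iff]
      constructor
      · rintro ⟨⟨j, rfl⟩, hs⟩
        simp only [Finset.insert_subset_iff, Finset.singleton_subset_iff, Finset.mem_insert,
          Finset.mem_singleton] at hs
        obtain ⟨rfl | rfl | rfl, h⟩ := hs
        · left; rfl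
        · right; simp
        · exfalso
          grind
      · rintro (rfl | rfl)
        · exact ⟨⟨i, rfl⟩, by simp [Finset.insert_subset_iff]⟩
        · exact ⟨⟨i - l, rfl⟩, by simp [Finset.insert_subset_iff]⟩
    rw [this, Set.ncard_pair]
    intro h
    have h1 : i - (l : ZMod k) ∈ ({i, i + (l : ZMod k), i + l + l} : Finset (ZMod k)) := by
      rw [h]; simp
    simp only [Finset.mem_insert, Finset.mem_singleton] at h1
    grind
  · rintro i -
    rw [Set.ncard_eq_one]
    refine ⟨{i, i + (l : ZMod k), i + l + l}, ?_⟩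
    ext s
    simp only [Set.mem_ofPred_eq, Set.mem_singleton_iff, Nat.cast_mul, Nat.cast_ofNat]
    constructor
    · rintro ⟨⟨j, rfl⟩, hs⟩
      simp only [Finset.insert_subset_iff, Finset.singleton_subset_iff, Finset.mem_insert,
        Finset.mem_singleton] at hs
      obtain ⟨rfl | rfl | rfl, h⟩ := hs
      · rfl
      · exfalso
        grind
      · exfalso
        grind
    · rintro rfl
      exact ⟨⟨i, rfl⟩, by simp [Finset.insert_subset_iff, two_mul, add_assoc]⟩
  · intro c c'
    induction c using SimpleGraph.ConnectedComponent.ind with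
    | _ u =>
    induction c' using SimpleGraph.ConnectedComponent.ind with
    | _ w =>
      have key : ∀ (t : ZMod k) (s : Finset (ZMod k)), s ∈ Mlk k l →
          s.image (fun x => x + t) ∈ Mlk k l := by
        rintro t s ⟨i, rfl⟩
        refine ⟨i + t, ?_⟩
        simp only [Finset.image_insert, Finset.image_singleton]
        rw [add_right_comm i t, add_right_comm (i + (l : ZMod k)) t]
      refine ⟨Equiv.addRight (w - u), ?_, ?_⟩
      · intro s
        refine ⟨fun h => key _ s h, fun h => ?_⟩
        have := key (-(w - u)) _ h
        rw [Finset.image_image] at this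
        convert this
        ext x
        simp
      · intro v hv
        rw [aux_graph] at hv ⊢
        convert hv using 1
        simp only [Equiv.coe_addRight]
        ring
end
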